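/- Soundness and completeness of CKAO: for all CKAO terms e and f, e ≡^obs f if and only if cl_obs(⟦e⟧) = cl_obs(⟦f⟧). -/

import Mathlib

namespace CKAH

open Classical

/-! ### Labelled posets and pomsets -/

/-- A labelled poset over alphabet `A`: a finite carrier with a partial order and labelling. -/
structure LPoset (A : Type) : Type 1 where
  carrier : Type
  [fin : Fintype carrier]
  [ord : PartialOrder carrier]
  lab : carrier → A

attribute [instance] LPoset.fin LPoset.ord

/-- Isomorphism of labelled posets: an order isomorphism preserving labels. -/
def LPoset.Iso {A : Type} (u v : LPoset A) : Prop :=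
  ∃ e : u.carrier ≃o v.carrier, ∀ x, v.lab (e x) = u.lab x

theorem LPoset.iso_equivalence (A : Type) : Equivalence (LPoset.Iso (A := A)) where
  refl u := ⟨OrderIso.refl _, fun _ => rfl⟩
  symm := by
    rintro u v ⟨e, he⟩
    exact ⟨e.symm, fun x => by rw [← he (e.symm x), OrderIso.apply_symm_apply]⟩
  trans := by
    rintro u v w ⟨e, he⟩ ⟨f, hf⟩
    exact ⟨e.trans f, fun x => by rw [OrderIso.trans_apply, hf, he]⟩

instance pomSetoid (A : Type) : Setoid (LPoset A) := ⟨LPoset.Iso, LPoset.iso_equivalence A⟩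

/-- A pomset is an isomorphism class of labelled posets. -/
def Pomset (A : Type) : Type 1 := Quotient (pomSetoid A)

/-- Sequential composition of labelled posets: disjoint union, everything on the left
below everything on the right (lexicographic sum order). -/
def LPoset.seqL {A : Type} (u v : LPoset A) : LPoset A where
  carrier := u.carrier ⊕ₗ v.carrier
  fin := inferInstanceAs (Fintype (u.carrier ⊕ v.carrier))
  lab := fun x => Sum.elim u.lab v.lab (ofLex x)

/-- Parallel composition of labelled posets: disjoint union with no cross ordering. -/
def LPoset.parL {A : Type} (u v : LPoset A) : LPoset A where
  carrier := u.carrier ⊕ v.carrier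
  lab := Sum.elim u.lab v.lab

def Pomset.seq {A : Type} : Pomset A → Pomset A → Pomset A :=
  Quotient.map₂ LPoset.seqL (by
    rintro u₁ u₂ ⟨e, he⟩ v₁ v₂ ⟨f, hf⟩
    refine ⟨(RelIso.sumLexCongr e f :
      (u₁.carrier ⊕ₗ v₁.carrier) ≃o (u₂.carrier ⊕ₗ v₂.carrier)), ?_⟩
    rintro (x | x)
    · exact he x
    · exact hf x)

/-- Order isomorphism between disjoint-union orders, from component isomorphisms. -/
def sumOrderIso {α β γ δ : Type} [PartialOrder α] [PartialOrder β] [PartialOrder γ]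
    [PartialOrder δ] (e : α ≃o γ) (f : β ≃o δ) : (α ⊕ β) ≃o (γ ⊕ δ) where
  toEquiv := Equiv.sumCongr e.toEquiv f.toEquiv
  map_rel_iff' := by
    rintro (x | x) (y | y) <;> simp [Sum.le_def, e.le_iff_le, f.le_iff_le]

def Pomset.par {A : Type} : Pomset A → Pomset A → Pomset A :=
  Quotient.map₂ LPoset.parL (by
    rintro u₁ u₂ ⟨e, he⟩ v₁ v₂ ⟨f, hf⟩
    refine ⟨sumOrderIso e f, ?_⟩
    rintro (x | x)
    · exact he x
    · exact hf x)

def LPoset.emptyL (A : Type) : LPoset A := { carrier := Fin 0, lab := fun x => x.elim0 }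

def LPoset.singleL {A : Type} (a : A) : LPoset A := { carrier := PUnit, lab := fun _ => a }

/-- The empty pomset `1`. -/
def Pomset.empty (A : Type) : Pomset A := ⟦LPoset.emptyL A⟧

/-- The single-letter pomset. -/
def Pomset.single {A : Type} (a : A) : Pomset A := ⟦LPoset.singleL a⟧

/-- Subsumption on labelled posets: `u ⊑ v` iff there is a label-preserving
order-preserving bijection from the carrier of `v` to that of `u`. -/
def LPoset.subL {A : Type} (u v : LPoset A) : Prop :=
  ∃ h : v.carrier ≃ u.carrier,
    (∀ x, u.lab (h x) = v.lab x) ∧ ∀ x y : v.carrier, x ≤ y → h x ≤ h y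

/-- Subsumption of pomsets: `Pomset.sub U V` means `U ⊑ V`. -/
def Pomset.sub {A : Type} : Pomset A → Pomset A → Prop :=
  Quotient.lift₂ LPoset.subL (by
    rintro u₁ v₁ u₂ v₂ ⟨e, he⟩ ⟨f, hf⟩
    refine propext ⟨?_, ?_⟩
    · rintro ⟨h, hl, hm⟩
      refine ⟨(f.toEquiv.symm.trans h).trans e.toEquiv, fun x => ?_, fun x y hxy => ?_⟩
      · show u₂.lab (e (h (f.symm x))) = v₂.lab x
        rw [he, hl, ← hf (f.symm x), OrderIso.apply_symm_apply]
      · simp only [Equiv.trans_apply]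
        exact e.le_iff_le.mpr (hm _ _ (f.symm.le_iff_le.mpr hxy))
    · rintro ⟨h, hl, hm⟩
      refine ⟨(f.toEquiv.trans h).trans e.toEquiv.symm, fun x => ?_, fun x y hxy => ?_⟩
      · show u₁.lab (e.symm (h (f x))) = v₁.lab x
        rw [← he (e.symm (h (f x))), OrderIso.apply_symm_apply, hl, hf]
      · simp only [Equiv.trans_apply]
        exact e.symm.le_iff_le.mpr (hm _ _ (f.le_iff_le.mpr hxy)))

def LPoset.isWordL {A : Type} (u : LPoset A) : Prop := ∀ x y : u.carrier, x ≤ y ∨ y ≤ x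

/-- A pomset is a word when it is totally ordered. -/
def Pomset.IsWord {A : Type} : Pomset A → Prop :=
  Quotient.lift LPoset.isWordL (by
    rintro u v ⟨e, -⟩
    refine propext ⟨fun h x y => ?_, fun h x y => ?_⟩
    · rcases h (e.symm x) (e.symm y) with h' | h'
      · exact Or.inl (e.symm.le_iff_le.mp h')
      · exact Or.inr (e.symm.le_iff_le.mp h')
    · rcases h (e x) (e y) with h' | h'
      · exact Or.inl (e.le_iff_le.mp h')
      · exact Or.inr (e.le_iff_le.mp h'))

def LPoset.mapL {A B : Type} (f : A → B) (u : LPoset A) : LPoset B :=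
  { carrier := u.carrier, lab := f ∘ u.lab }

/-- Relabelling of pomsets along a function on letters. -/
def Pomset.map {A B : Type} (f : A → B) : Pomset A → Pomset B :=
  Quotient.map (LPoset.mapL f)
    (by rintro u v ⟨e, he⟩; exact ⟨e, fun x => congrArg f (he x)⟩)

def LPoset.overL {A : Type} (Γ : Set A) (u : LPoset A) : Prop := ∀ x, u.lab x ∈ Γ

/-- All labels of the pomset belong to `Γ`. -/
def Pomset.Over {A : Type} (Γ : Set A) : Pomset A → Prop :=
  Quotient.lift (LPoset.overL Γ) (by
    rintro u v ⟨e, he⟩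
    refine propext ⟨fun h x => ?_, fun h x => ?_⟩
    · have h2 := he (e.symm x)
      rw [OrderIso.apply_symm_apply] at h2
      rw [h2]; exact h _
    · rw [← he x]; exact h _)

/-- Series-parallel pomsets. -/
inductive Pomset.IsSP {A : Type} : Pomset A → Prop
  | empty : Pomset.IsSP (Pomset.empty A)
  | single (a : A) : Pomset.IsSP (Pomset.single a)
  | seq {U V : Pomset A} : Pomset.IsSP U → Pomset.IsSP V → Pomset.IsSP (Pomset.seq U V)
  | par {U V : Pomset A} : Pomset.IsSP U → Pomset.IsSP V → Pomset.IsSP (Pomset.par U V)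

def SPset (A : Type) : Set (Pomset A) := {U | U.IsSP}

/-! ### Pomset contexts -/

/-- Contexts are pomsets over `Option A`, where `none` plays the role of `*`.
`uniqueStarL` says there is exactly one `*`-labelled node. -/
def LPoset.uniqueStarL {A : Type} (c : LPoset (Option A)) : Prop := ∃! x, c.lab x = none

theorem LPoset.uniqueStarL_congr {A : Type} {u v : LPoset (Option A)}
    (e : u.carrier ≃o v.carrier) (he : ∀ x, v.lab (e x) = u.lab x) :
    u.uniqueStarL ↔ v.uniqueStarL := by
  constructor
  · rintro ⟨x, hx, hux⟩
    refine ⟨e x, show v.lab (e x) = none by rw [he]; exact hx, fun y hy => ?_⟩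
    have h2 := he (e.symm y)
    rw [OrderIso.apply_symm_apply] at h2
    have h3 : e.symm y = x := hux _ (h2.symm.trans hy)
    rw [← h3, OrderIso.apply_symm_apply]
  · rintro ⟨x, hx, hvx⟩
    refine ⟨e.symm x, ?_, fun y hy => ?_⟩
    · show u.lab (e.symm x) = none
      have h2 := he (e.symm x)
      rw [OrderIso.apply_symm_apply] at h2
      rw [← h2]; exact hx
    · have h3 : e y = x := hvx _ (show v.lab (e y) = none by rw [he]; exact hy)
      rw [← h3, OrderIso.symm_apply_apply]

/-- A pomset context: exactly one node labelled `*`. -/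
def Pomset.IsCtx {A : Type} : Pomset (Option A) → Prop :=
  Quotient.lift LPoset.uniqueStarL
    (fun _ _ h => propext (LPoset.uniqueStarL_congr h.choose h.choose_spec))

/-- Series-parallel pomset contexts. -/
def Pomset.IsSPCtx {A : Type} (C : Pomset (Option A)) : Prop := C.IsCtx ∧ C.IsSP

/-- Sequential (totally ordered) pomset contexts. -/
def Pomset.IsSeqCtx {A : Type} (C : Pomset (Option A)) : Prop := C.IsCtx ∧ C.IsWord

/-- The trivial context `*`. -/
def starCtx (A : Type) : Pomset (Option A) := Pomset.single (none : Option A)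

theorem option_get_eq_get {α : Type} {o₁ o₂ : Option α} (h : o₁ = o₂) (h₁ : o₁.isSome)
    (h₂ : o₂.isSome) : o₁.get h₁ = o₂.get h₂ := by subst h; rfl

/-- The order of `C[U]`: the orders of `C` (restricted away from `*`) and of `U`, with a
point of `C` below (resp. above) all of `U` when it is below (resp. above) the unique
`*`-node of `C`.  (For well-definedness of the order, the cross-relations are guarded by
the requirement that the star node is unique, which holds for every genuine context.) -/
def LPoset.insLe {A : Type} (c : LPoset (Option A)) (u : LPoset A) :
    ({x : c.carrier // c.lab x ≠ none} ⊕ u.carrier) →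
    ({x : c.carrier // c.lab x ≠ none} ⊕ u.carrier) → Prop
  | Sum.inl x, Sum.inl y => x.val ≤ y.val
  | Sum.inr x, Sum.inr y => x ≤ y
  | Sum.inl x, Sum.inr _ => c.uniqueStarL ∧ ∃ s, c.lab s = none ∧ x.val ≤ s
  | Sum.inr _, Sum.inl y => c.uniqueStarL ∧ ∃ s, c.lab s = none ∧ s ≤ y.val

/-- Insertion of a labelled poset `u` into the gap of a context `c`: the `*`-labelled
node is removed and `u` is put in its place, inheriting the order relations of `*`. -/
noncomputable def LPoset.insL {A : Type} (c : LPoset (Option A)) (u : LPoset A) :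
    LPoset A where
  carrier := {x : c.carrier // c.lab x ≠ none} ⊕ u.carrier
  fin := by classical exact inferInstance
  ord :=
    { le := LPoset.insLe c u
      lt := fun p q => LPoset.insLe c u p q ∧ ¬ LPoset.insLe c u q p
      lt_iff_le_not_ge := fun _ _ => Iff.rfl
      le_refl := by rintro (x | x) <;> exact le_refl _
      le_trans := by
        rintro (x | x) (y | y) (z | z) h1 h2
        · exact le_trans h1 h2
        · obtain ⟨hu, s, hs, hys⟩ := h2
          exact ⟨hu, s, hs, le_trans h1 hys⟩
        · obtain ⟨hu, s, hs, hxs⟩ := h1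
          obtain ⟨-, t, ht, htz⟩ := h2
          obtain ⟨w, hw, huniq⟩ := hu
          have hst : s = t := (huniq s hs).trans (huniq t ht).symm
          exact le_trans (hst ▸ hxs) htz
        · exact h1
        · obtain ⟨hu, s, hs, hsy⟩ := h1
          exact ⟨hu, s, hs, le_trans hsy h2⟩
        · obtain ⟨hu, s, hs, hsy⟩ := h1
          obtain ⟨-, t, ht, hyt⟩ := h2
          obtain ⟨w, hw, huniq⟩ := hu
          have hst : s = t := (huniq s hs).trans (huniq t ht).symm
          have hy : y.val = s := le_antisymm (hst.symm ▸ hyt) hsy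
          exact absurd (hy.symm ▸ hs) y.prop
        · exact h2
        · exact le_trans h1 h2
      le_antisymm := by
        rintro (x | x) (y | y) h1 h2
        · exact congrArg Sum.inl (Subtype.ext (le_antisymm h1 h2))
        · obtain ⟨hu, s, hs, hxs⟩ := h1
          obtain ⟨-, t, ht, htx⟩ := h2
          obtain ⟨w, hw, huniq⟩ := hu
          have hst : s = t := (huniq s hs).trans (huniq t ht).symm
          have hx : x.val = s := le_antisymm hxs (hst.symm ▸ htx)
          exact absurd (hx.symm ▸ hs) x.prop
        · obtain ⟨hu, s, hs, hsy⟩ := h1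
          obtain ⟨-, t, ht, hyt⟩ := h2
          obtain ⟨w, hw, huniq⟩ := hu
          have hst : s = t := (huniq s hs).trans (huniq t ht).symm
          have hy : y.val = s := le_antisymm (hst.symm ▸ hyt) hsy
          exact absurd (hy.symm ▸ hs) y.prop
        · exact congrArg Sum.inr (le_antisymm h1 h2) }
  lab := Sum.elim (fun x => (c.lab x.val).get (Option.isSome_iff_ne_none.mpr x.prop)) u.lab

/-- `Pomset.ins C U` is `C[U]`: plugging the pomset `U` into the gap of the context `C`. -/
noncomputable def Pomset.ins {A : Type} : Pomset (Option A) → Pomset A → Pomset A :=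
  Quotient.map₂ LPoset.insL (by
    rintro c₁ c₂ ⟨e, he⟩ u₁ u₂ ⟨f, hf⟩
    have hstar : c₁.uniqueStarL ↔ c₂.uniqueStarL := LPoset.uniqueStarL_congr e he
    refine ⟨{ toEquiv := Equiv.sumCongr
                (e.toEquiv.subtypeEquiv fun x => by
                  rw [show c₂.lab (e.toEquiv x) = c₁.lab x from he x]) f.toEquiv
              map_rel_iff' := ?_ }, ?_⟩
    · rintro (x | x) (y | y)
      · exact e.le_iff_le
      · show (c₂.uniqueStarL ∧ ∃ s, c₂.lab s = none ∧ (e x.val : c₂.carrier) ≤ s) ↔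
             (c₁.uniqueStarL ∧ ∃ s, c₁.lab s = none ∧ x.val ≤ s)
        constructor
        · rintro ⟨hu, s, hs, hxs⟩
          refine ⟨hstar.mpr hu, e.symm s, ?_, ?_⟩
          · have h2 := he (e.symm s)
            rw [OrderIso.apply_symm_apply] at h2
            rw [← h2]; exact hs
          · exact e.le_iff_le.mp (by rw [OrderIso.apply_symm_apply]; exact hxs)
        · rintro ⟨hu, s, hs, hxs⟩
          exact ⟨hstar.mp hu, e s, by rw [he]; exact hs, e.le_iff_le.mpr hxs⟩
      · show (c₂.uniqueStarL ∧ ∃ s, c₂.lab s = none ∧ s ≤ (e y.val : c₂.carrier)) ↔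
             (c₁.uniqueStarL ∧ ∃ s, c₁.lab s = none ∧ s ≤ y.val)
        constructor
        · rintro ⟨hu, s, hs, hsy⟩
          refine ⟨hstar.mpr hu, e.symm s, ?_, ?_⟩
          · have h2 := he (e.symm s)
            rw [OrderIso.apply_symm_apply] at h2
            rw [← h2]; exact hs
          · exact e.le_iff_le.mp (by rw [OrderIso.apply_symm_apply]; exact hsy)
        · rintro ⟨hu, s, hs, hsy⟩
          exact ⟨hstar.mp hu, e s, by rw [he]; exact hs, e.le_iff_le.mpr hsy⟩
      · exact f.le_iff_le
    · rintro (x | x)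
      · exact option_get_eq_get (he x.val) _ _
      · exact hf x)

/-! ### Pomset languages -/

abbrev Lang (A : Type) := Set (Pomset A)

def Lang.seq {A : Type} (L K : Lang A) : Lang A :=
  {W | ∃ U ∈ L, ∃ V ∈ K, W = Pomset.seq U V}

def Lang.par {A : Type} (L K : Lang A) : Lang A :=
  {W | ∃ U ∈ L, ∃ V ∈ K, W = Pomset.par U V}

def Lang.pow {A : Type} (L : Lang A) : ℕ → Lang A
  | 0 => {Pomset.empty A}
  | n + 1 => Lang.seq (Lang.pow L n) L

def Lang.star {A : Type} (L : Lang A) : Lang A := ⋃ n, L.pow n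

/-- Application of a context to a language: `C[L] = {C[U] : U ∈ L}`. -/
def Ctx.img {A : Type} (C : Pomset (Option A)) (L : Lang A) : Lang A :=
  {W | ∃ U ∈ L, W = C.ins U}

/-! ### CKA terms and semantics -/

inductive Term (A : Type) : Type
  | zero : Term A
  | one : Term A
  | var : A → Term A
  | add : Term A → Term A → Term A
  | seq : Term A → Term A → Term A
  | par : Term A → Term A → Term A
  | star : Term A → Term A

/-- Pomset language semantics of CKA terms. -/
def Term.lang {A : Type} : Term A → Lang A
  | .zero => ∅
  | .one => {Pomset.empty A}
  | .var a => {Pomset.single a}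
  | .add e f => e.lang ∪ f.lang
  | .seq e f => Lang.seq e.lang f.lang
  | .par e f => Lang.par e.lang f.lang
  | .star e => Lang.star e.lang

/-- Sets of hypotheses: a hypothesis `e ≤ f` is the pair `(e, f)`. -/
abbrev HypSet (A : Type) := Set (Term A × Term A)

/-- The congruence `≡^H` on CKA terms generated by the CKA axioms and the hypotheses `H`
(the constructor `hyp` encodes `e ≦^H f`, i.e. `e + f ≡^H f`, for `e ≤ f ∈ H`). -/
inductive CongH {A : Type} (H : HypSet A) : Term A → Term A → Prop
  | refl (e) : CongH H e e
  | symm {e f} : CongH H e f → CongH H f e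
  | trans {e f g} : CongH H e f → CongH H f g → CongH H e g
  | addCong {e e' f f'} : CongH H e e' → CongH H f f' → CongH H (.add e f) (.add e' f')
  | seqCong {e e' f f'} : CongH H e e' → CongH H f f' → CongH H (.seq e f) (.seq e' f')
  | parCong {e e' f f'} : CongH H e e' → CongH H f f' → CongH H (.par e f) (.par e' f')
  | starCong {e e'} : CongH H e e' → CongH H (.star e) (.star e')
  | addZero (e) : CongH H (.add e .zero) e
  | addIdem (e) : CongH H (.add e e) e
  | addComm (e f) : CongH H (.add e f) (.add f e)
  | addAssoc (e f g) : CongH H (.add e (.add f g)) (.add (.add e f) g)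
  | seqAssoc (e f g) : CongH H (.seq e (.seq f g)) (.seq (.seq e f) g)
  | seqDistL (e f g) : CongH H (.seq e (.add f g)) (.add (.seq e f) (.seq e g))
  | seqDistR (e f g) : CongH H (.seq (.add e f) g) (.add (.seq e g) (.seq f g))
  | seqOneR (e) : CongH H (.seq e .one) e
  | seqOneL (e) : CongH H (.seq .one e) e
  | seqZeroR (e) : CongH H (.seq e .zero) .zero
  | seqZeroL (e) : CongH H (.seq .zero e) .zero
  | parComm (e f) : CongH H (.par e f) (.par f e)
  | parOne (e) : CongH H (.par e .one) e
  | parZero (e) : CongH H (.par e .zero) .zero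
  | parAssoc (e f g) : CongH H (.par e (.par f g)) (.par (.par e f) g)
  | parDist (e f g) : CongH H (.par e (.add f g)) (.add (.par e f) (.par e g))
  | starUnfoldL (e) : CongH H (.add .one (.seq e (.star e))) (.star e)
  | starUnfoldR (e) : CongH H (.add .one (.seq (.star e) e)) (.star e)
  | lfpL {e f g} : CongH H (.add (.add e (.seq f g)) g) g →
      CongH H (.add (.seq (.star f) e) g) g
  | lfpR {e f g} : CongH H (.add (.add e (.seq f g)) f) f →
      CongH H (.add (.seq e (.star g)) f) f
  | hyp {e f} : (e, f) ∈ H → CongH H (.add e f) f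

/-- `e ≦^H f`, the natural order `e + f ≡^H f`. -/
def LeH {A : Type} (H : HypSet A) (e f : Term A) : Prop := CongH H (.add e f) f

/-- The `H`-closure of a pomset language, as an inductive predicate: the smallest language
containing `L` such that for all `e ≤ f ∈ H` and series-parallel contexts `C`,
if `C[⟦f⟧] ⊆ cl` then `C[⟦e⟧] ⊆ cl`. -/
inductive closure {A : Type} (H : HypSet A) (L : Lang A) : Pomset A → Prop
  | base {U} : U ∈ L → closure H L U
  | step {e f : Term A} (hef : (e, f) ∈ H) {C : Pomset (Option A)} (hC : C.IsSPCtx)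
      (hf : ∀ V ∈ f.lang, closure H L (C.ins V)) {U} (hU : U ∈ e.lang) :
      closure H L (C.ins U)

/-- `cl H L` is the `H`-closure of `L`. -/
def cl {A : Type} (H : HypSet A) (L : Lang A) : Lang A := {U | closure H L U}

/-- The sequential closure: like `cl` but only sequential contexts are used. -/
inductive seqClosure {A : Type} (H : HypSet A) (L : Lang A) : Pomset A → Prop
  | base {U} : U ∈ L → seqClosure H L U
  | step {e f : Term A} (hef : (e, f) ∈ H) {C : Pomset (Option A)} (hC : C.IsSeqCtx)
      (hf : ∀ V ∈ f.lang, seqClosure H L (C.ins V)) {U} (hU : U ∈ e.lang) :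
      seqClosure H L (C.ins U)

def seqCl {A : Type} (H : HypSet A) (L : Lang A) : Lang A := {U | seqClosure H L U}

/-! ### Implication, completeness, reductions -/

/-- `H` implies `H'`: every hypothesis of `H'` is derivable from `H`. -/
def Implies {A : Type} (H H' : HypSet A) : Prop := ∀ p ∈ H', LeH H p.1 p.2

/-- `H` is complete: semantic equivalence implies axiomatic equivalence. -/
def Complete {A : Type} (H : HypSet A) : Prop :=
  ∀ e f : Term A, cl H e.lang = cl H f.lang → CongH H e f

/-- A reduction from `H` to `H'` (presupposing that `H` implies `H'`). -/
structure IsReduction {A : Type} (H H' : HypSet A) (r : Term A → Term A) : Prop where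
  implies : Implies H H'
  equiv : ∀ e, CongH H e (r e)
  reflect : ∀ e f : Term A, cl H e.lang = cl H f.lang → cl H' (r e).lang = cl H' (r f).lang

def Reduces {A : Type} (H H' : HypSet A) : Prop := ∃ r, IsReduction H H' r

/-- A strong reduction from `H` to `H'`. -/
structure IsStrongReduction {A : Type} (H H' : HypSet A) (r : Term A → Term A)
    extends IsReduction H H' r : Prop where
  strong : ∀ e : Term A, cl H e.lang = cl H' (r e).lang

def StronglyReduces {A : Type} (H H' : HypSet A) : Prop := ∃ r, IsStrongReduction H H' r

/-- `H` factorises into `H₀` and `H₁`. -/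
def Factorises {A : Type} (H H₀ H₁ : HypSet A) : Prop :=
  Implies H H₀ ∧ Implies H H₁ ∧ ∀ L : Lang A, L ⊆ SPset A → cl H L = cl H₁ (cl H₀ L)

/-! ### The exchange hypotheses and sp-subsumption -/

/-- The exchange hypotheses `(e∥f)·(g∥h) ≤ (e·g)∥(f·h)`. -/
def exch (A : Type) : HypSet A :=
  {p | ∃ e f g h : Term A,
    p = (Term.seq (.par e f) (.par g h), Term.par (.seq e g) (.seq f h))}

/-- `⊑^sp`: the smallest precongruence on series-parallel pomsets satisfying the
exchange inequality. -/
inductive spSub {A : Type} : Pomset A → Pomset A → Prop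
  | refl {U : Pomset A} : U.IsSP → spSub U U
  | trans {U V W} : spSub U V → spSub V W → spSub U W
  | seqCong {U V U' V'} : spSub U V → spSub U' V' → spSub (Pomset.seq U U') (Pomset.seq V V')
  | parCong {U V U' V'} : spSub U V → spSub U' V' → spSub (Pomset.par U U') (Pomset.par V V')
  | exch {U V W X : Pomset A} : U.IsSP → V.IsSP → W.IsSP → X.IsSP →
      spSub (Pomset.seq (Pomset.par U V) (Pomset.par W X))
            (Pomset.par (Pomset.seq U W) (Pomset.seq V X))

/-! ### KA terms, grounded hypotheses, sequential reductions -/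

/-- A term is a KA term when it contains no `∥`. -/
def Term.noPar {A : Type} : Term A → Prop
  | .zero => True
  | .one => True
  | .var _ => True
  | .add e f => e.noPar ∧ f.noPar
  | .seq e f => e.noPar ∧ f.noPar
  | .par _ _ => False
  | .star e => e.noPar

/-- A non-empty word. -/
def IsNonemptyWord {A : Type} (W : Pomset A) : Prop := W.IsWord ∧ W ≠ Pomset.empty A

/-- A set of hypotheses is grounded when in each hypothesis `e ≤ f`, `e` is a KA term and
`⟦f⟧ = {W}` for a non-empty word `W`. -/
def Grounded {A : Type} (H : HypSet A) : Prop :=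
  ∀ p ∈ H, p.1.noPar ∧ ∃ W : Pomset A, IsNonemptyWord W ∧ p.2.lang = {W}

/-- `≡_KA^H`: the congruence on terms generated by the axioms of `≡` not involving `∥`
together with the hypotheses of `H`. -/
inductive KACong {A : Type} (H : HypSet A) : Term A → Term A → Prop
  | refl (e) : KACong H e e
  | symm {e f} : KACong H e f → KACong H f e
  | trans {e f g} : KACong H e f → KACong H f g → KACong H e g
  | addCong {e e' f f'} : KACong H e e' → KACong H f f' → KACong H (.add e f) (.add e' f')
  | seqCong {e e' f f'} : KACong H e e' → KACong H f f' → KACong H (.seq e f) (.seq e' f')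
  | starCong {e e'} : KACong H e e' → KACong H (.star e) (.star e')
  | addZero (e) : KACong H (.add e .zero) e
  | addIdem (e) : KACong H (.add e e) e
  | addComm (e f) : KACong H (.add e f) (.add f e)
  | addAssoc (e f g) : KACong H (.add e (.add f g)) (.add (.add e f) g)
  | seqAssoc (e f g) : KACong H (.seq e (.seq f g)) (.seq (.seq e f) g)
  | seqDistL (e f g) : KACong H (.seq e (.add f g)) (.add (.seq e f) (.seq e g))
  | seqDistR (e f g) : KACong H (.seq (.add e f) g) (.add (.seq e g) (.seq f g))
  | seqOneR (e) : KACong H (.seq e .one) e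
  | seqOneL (e) : KACong H (.seq .one e) e
  | seqZeroR (e) : KACong H (.seq e .zero) .zero
  | seqZeroL (e) : KACong H (.seq .zero e) .zero
  | starUnfoldL (e) : KACong H (.add .one (.seq e (.star e))) (.star e)
  | starUnfoldR (e) : KACong H (.add .one (.seq (.star e) e)) (.star e)
  | lfpL {e f g} : KACong H (.add (.add e (.seq f g)) g) g →
      KACong H (.add (.seq (.star f) e) g) g
  | lfpR {e f g} : KACong H (.add (.add e (.seq f g)) f) f →
      KACong H (.add (.seq e (.star g)) f) f
  | hyp {e f} : (e, f) ∈ H → KACong H (.add e f) f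

/-- A sequential reduction from `H` to `H'`. -/
structure IsSeqReduction {A : Type} (H H' : HypSet A) (r : Term A → Term A) : Prop where
  implies : Implies H H'
  equiv : ∀ e : Term A, e.noPar → KACong H e (r e)
  closure_eq : ∀ e : Term A, e.noPar → seqCl H e.lang = seqCl H' (r e).lang

/-- Extension of a map on (KA) terms to all CKA terms, homomorphically on `∥`. -/
def parExt {A : Type} (r : Term A → Term A) : Term A → Term A
  | .par e f => .par (parExt r e) (parExt r f)
  | e => r e

/-! ### Inductive characterisation of sp contexts -/

/-- The generators of series-parallel contexts (Lemma: `PC^sp` is the smallest such set). -/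
inductive GenCtx {A : Type} : Pomset (Option A) → Prop
  | star : GenCtx (Pomset.single (none : Option A))
  | seqL {U : Pomset A} {C} : U.IsSP → GenCtx C → GenCtx (Pomset.seq (Pomset.map some U) C)
  | seqR {C} {V : Pomset A} : GenCtx C → V.IsSP → GenCtx (Pomset.seq C (Pomset.map some V))
  | par {U : Pomset A} {C} : U.IsSP → GenCtx C → GenCtx (Pomset.par (Pomset.map some U) C)

/-! ### Reification -/

/-- Homomorphic extension of a letter map to terms. -/
def rTerm {A : Type} (r : A → Term A) : Term A → Term A
  | .zero => .zero
  | .one => .one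
  | .var a => r a
  | .add e f => .add (rTerm r e) (rTerm r f)
  | .seq e f => .seq (rTerm r e) (rTerm r f)
  | .par e f => .par (rTerm r e) (rTerm r f)
  | .star e => .star (rTerm r e)

/-- All letters of a term lie in `Γ`. -/
def TermOver {A : Type} (Γ : Set A) : Term A → Prop
  | .zero => True
  | .one => True
  | .var a => a ∈ Γ
  | .add e f => TermOver Γ e ∧ TermOver Γ f
  | .seq e f => TermOver Γ e ∧ TermOver Γ f
  | .par e f => TermOver Γ e ∧ TermOver Γ f
  | .star e => TermOver Γ e

/-- Extension of a letter map `r` to (series-parallel) pomsets, as a relation: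
`rMap r U V` means `V ∈ r(U)`. -/
inductive rMap {A : Type} (r : A → Term A) : Pomset A → Pomset A → Prop
  | one : rMap r (Pomset.empty A) (Pomset.empty A)
  | var (a : A) {V} : V ∈ (r a).lang → rMap r (Pomset.single a) V
  | seq {U U' V V'} : rMap r U V → rMap r U' V' →
      rMap r (Pomset.seq U U') (Pomset.seq V V')
  | par {U U' V V'} : rMap r U V → rMap r U' V' →
      rMap r (Pomset.par U U') (Pomset.par V V')

/-- Image of a language under (the pomset extension of) `r`. -/
def rImg {A : Type} (r : A → Term A) (L : Lang A) : Lang A := {V | ∃ U ∈ L, rMap r U V}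

/-- Series-parallel pomsets over the subalphabet `Γ`. -/
def SPover {A : Type} (Γ : Set A) : Lang A := {U | U.IsSP ∧ U.Over Γ}

/-- `r : Σ → Term Γ` is a reification from `H` to `H'`. -/
structure IsReification {A : Type} (Γ : Set A) (H H' : HypSet A) (r : A → Term A) : Prop where
  toGamma : ∀ a : A, TermOver Γ (r a)
  equiv : ∀ a : A, CongH H (r a) (.var a)
  expansive : ∀ a ∈ Γ, LeH (∅ : HypSet A) (.var a) (r a)
  preserves : ∀ L : Lang A, L ⊆ SPover Γ → cl H' L ⊆ SPover Γ
  hyps : ∀ p ∈ H, LeH H' (rTerm r p.1) (rTerm r p.2)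

end CKAH

namespace CKAH

/-! ### Boolean observations and CKAO -/

open scoped Classical

/-- Propositional (Boolean) terms over primitive observations `Ω`. -/
inductive BATerm (Ω : Type) : Type
  | bot : BATerm Ω
  | top : BATerm Ω
  | var : Ω → BATerm Ω
  | or : BATerm Ω → BATerm Ω → BATerm Ω
  | and : BATerm Ω → BATerm Ω → BATerm Ω
  | not : BATerm Ω → BATerm Ω

/-- The congruence `≡_BA` generated by the Boolean algebra axioms. -/
inductive BACong {Ω : Type} : BATerm Ω → BATerm Ω → Prop
  | refl (p) : BACong p p
  | symm {p q} : BACong p q → BACong q p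
  | trans {p q r} : BACong p q → BACong q r → BACong p r
  | orCong {p p' q q'} : BACong p p' → BACong q q' → BACong (.or p q) (.or p' q')
  | andCong {p p' q q'} : BACong p p' → BACong q q' → BACong (.and p q) (.and p' q')
  | notCong {p p'} : BACong p p' → BACong (.not p) (.not p')
  | orBot (p) : BACong (.or p .bot) p
  | orComm (p q) : BACong (.or p q) (.or q p)
  | orNot (p) : BACong (.or p (.not p)) .top
  | orAssoc (p q r) : BACong (.or p (.or q r)) (.or (.or p q) r)
  | andTop (p) : BACong (.and p .top) p
  | andComm (p q) : BACong (.and p q) (.and q p)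
  | andNot (p) : BACong (.and p (.not p)) .bot
  | andAssoc (p q r) : BACong (.and p (.and q r)) (.and (.and p q) r)
  | orAndDist (p q r) : BACong (.or p (.and q r)) (.and (.or p q) (.or p r))
  | andOrDist (p q r) : BACong (.and p (.or q r)) (.or (.and p q) (.and p r))

/-- `p ≦_BA q` iff `p ∨ q ≡_BA q`. -/
def leBA {Ω : Type} (p q : BATerm Ω) : Prop := BACong (BATerm.or p q) q

/-- The canonical propositional term of an atom `α ∈ 2^Ω`. -/
noncomputable def atomTerm {Ω : Type} [Fintype Ω] (α : Ω → Bool) : BATerm Ω :=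
  (Finset.univ : Finset Ω).toList.foldr
    (fun o t => BATerm.and (if α o then BATerm.var o else BATerm.not (BATerm.var o)) t)
    BATerm.top

/-- CKAO letters: program actions from `S` or propositional terms over `Ω`. -/
abbrev OLet (S Ω : Type) : Type := S ⊕ BATerm Ω

/-- The hypotheses `bool`: `p = q` whenever `p ≡_BA q`. -/
def boolHyp (S Ω : Type) : HypSet (OLet S Ω) :=
  {x | ∃ p q : BATerm Ω, BACong p q ∧ x = (Term.var (Sum.inr p), Term.var (Sum.inr q))}

/-- The hypotheses `contr`: `p ∧ q ≤ p · q`. -/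
def contrHyp (S Ω : Type) : HypSet (OLet S Ω) :=
  {x | ∃ p q : BATerm Ω,
    x = (Term.var (Sum.inr (BATerm.and p q)),
         Term.seq (Term.var (Sum.inr p)) (Term.var (Sum.inr q)))}

/-- The hypotheses `glue`: `0 = ⊥` and `p + q = p ∨ q`. -/
def glueHyp (S Ω : Type) : HypSet (OLet S Ω) :=
  {(Term.zero, Term.var (Sum.inr BATerm.bot)), (Term.var (Sum.inr BATerm.bot), Term.zero)} ∪
  {x | ∃ p q : BATerm Ω,
    x = (Term.add (Term.var (Sum.inr p)) (Term.var (Sum.inr q)),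
         Term.var (Sum.inr (BATerm.or p q))) ∨
    x = (Term.var (Sum.inr (BATerm.or p q)),
         Term.add (Term.var (Sum.inr p)) (Term.var (Sum.inr q)))}

/-- The hypotheses of CKAO: `obs = bool ∪ contr ∪ exch ∪ glue`. -/
def obsHyp (S Ω : Type) : HypSet (OLet S Ω) :=
  boolHyp S Ω ∪ contrHyp S Ω ∪ exch (OLet S Ω) ∪ glueHyp S Ω

/-- The hypotheses `contr' = {α ≤ α·α : α ∈ At}`. -/
noncomputable def contr'Hyp (S Ω : Type) [Fintype Ω] : HypSet (OLet S Ω) :=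
  {x | ∃ α : Ω → Bool,
    x = (Term.var (Sum.inr (atomTerm α)),
         Term.seq (Term.var (Sum.inr (atomTerm α))) (Term.var (Sum.inr (atomTerm α))))}

/-- The letter map of the reification: each action is mapped to itself, each
propositional term `p` to the sum of all atoms `α` with `α ≦_BA p`. -/
noncomputable def obsR (S Ω : Type) [Fintype Ω] [DecidableEq Ω] :
    OLet S Ω → Term (OLet S Ω)
  | Sum.inl a => Term.var (Sum.inl a)
  | Sum.inr p =>
    ((Finset.univ : Finset (Ω → Bool)).filter (fun α => leBA (atomTerm α) p)).toList.foldr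
      (fun α t => Term.add (Term.var (Sum.inr (atomTerm α))) t) Term.zero

end CKAH


namespace CKAH

open Classical

/-! ### Elementary isomorphisms of pomsets -/

section Isos
variable {A : Type}

def inS (u v : LPoset A) (x : u.carrier) : (u.seqL v).carrier := toLex (Sum.inl x)
def inS' (u v : LPoset A) (x : v.carrier) : (u.seqL v).carrier := toLex (Sum.inr x)
def inP (u v : LPoset A) (x : u.carrier) : (u.parL v).carrier := Sum.inl x
def inP' (u v : LPoset A) (x : v.carrier) : (u.parL v).carrier := Sum.inr x

theorem seqL_cases {u v : LPoset A} (z : (u.seqL v).carrier) :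
    (∃ x, z = inS u v x) ∨ (∃ x, z = inS' u v x) := by
  rcases z with (x | x)
  · exact Or.inl ⟨x, rfl⟩
  · exact Or.inr ⟨x, rfl⟩

theorem parL_cases {u v : LPoset A} (z : (u.parL v).carrier) :
    (∃ x, z = inP u v x) ∨ (∃ x, z = inP' u v x) := by
  rcases z with (x | x)
  · exact Or.inl ⟨x, rfl⟩
  · exact Or.inr ⟨x, rfl⟩

@[simp] theorem inS_le_inS {u v : LPoset A} {x y} : inS u v x ≤ inS u v y ↔ x ≤ y :=
  Sum.Lex.inl_le_inl_iff
@[simp] theorem inS'_le_inS' {u v : LPoset A} {x y} : inS' u v x ≤ inS' u v y ↔ x ≤ y :=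
  Sum.Lex.inr_le_inr_iff
@[simp] theorem inS_le_inS' {u v : LPoset A} {x y} : inS u v x ≤ inS' u v y :=
  Sum.Lex.inl_le_inr _ _
@[simp] theorem inS'_le_inS {u v : LPoset A} {x y} : ¬ inS' u v x ≤ inS u v y :=
  Sum.Lex.not_inr_le_inl
@[simp] theorem inP_le_inP {u v : LPoset A} {x y} : inP u v x ≤ inP u v y ↔ x ≤ y :=
  Sum.inl_le_inl_iff
@[simp] theorem inP'_le_inP' {u v : LPoset A} {x y} : inP' u v x ≤ inP' u v y ↔ x ≤ y :=
  Sum.inr_le_inr_iff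
@[simp] theorem inP_le_inP' {u v : LPoset A} {x y} : ¬ inP u v x ≤ inP' u v y :=
  Sum.not_inl_le_inr
@[simp] theorem inP'_le_inP {u v : LPoset A} {x y} : ¬ inP' u v x ≤ inP u v y :=
  Sum.not_inr_le_inl
@[simp] theorem lab_inS {u v : LPoset A} {x} : (u.seqL v).lab (inS u v x) = u.lab x := rfl
@[simp] theorem lab_inS' {u v : LPoset A} {x} : (u.seqL v).lab (inS' u v x) = v.lab x := rfl
@[simp] theorem lab_inP {u v : LPoset A} {x} : (u.parL v).lab (inP u v x) = u.lab x := rfl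
@[simp] theorem lab_inP' {u v : LPoset A} {x} : (u.parL v).lab (inP' u v x) = v.lab x := rfl
@[simp] theorem inS_inj {u v : LPoset A} {x y} : inS u v x = inS u v y ↔ x = y :=
  ⟨fun h => Sum.inl.inj h, fun h => by rw [h]⟩
@[simp] theorem inS'_inj {u v : LPoset A} {x y} : inS' u v x = inS' u v y ↔ x = y :=
  ⟨fun h => Sum.inr.inj h, fun h => by rw [h]⟩
@[simp] theorem inP_inj {u v : LPoset A} {x y} : inP u v x = inP u v y ↔ x = y :=
  ⟨fun h => Sum.inl.inj h, fun h => by rw [h]⟩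
@[simp] theorem inP'_inj {u v : LPoset A} {x y} : inP' u v x = inP' u v y ↔ x = y :=
  ⟨fun h => Sum.inr.inj h, fun h => by rw [h]⟩
@[simp] theorem inS_ne {u v : LPoset A} {x y} : inS u v x ≠ inS' u v y := Sum.inl_ne_inr
@[simp] theorem inS'_ne {u v : LPoset A} {x y} : inS' u v x ≠ inS u v y := Sum.inr_ne_inl
@[simp] theorem inP_ne {u v : LPoset A} {x y} : inP u v x ≠ inP' u v y := Sum.inl_ne_inr
@[simp] theorem inP'_ne {u v : LPoset A} {x y} : inP' u v x ≠ inP u v y := Sum.inr_ne_inl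

/-- Build an isomorphism from an order- and label-reflecting surjection. -/
theorem iso_of_surj {u v : LPoset A} (f : u.carrier → v.carrier)
    (hle : ∀ x y, f x ≤ f y ↔ x ≤ y) (hlab : ∀ x, v.lab (f x) = u.lab x)
    (hs : ∀ y, ∃ x, f x = y) : u.Iso v := by
  have hi : Function.Injective f := fun x y h =>
    le_antisymm ((hle x y).1 h.le) ((hle y x).1 h.ge)
  refine ⟨{ toEquiv := Equiv.ofBijective f ⟨hi, hs⟩, map_rel_iff' := ?_ }, ?_⟩
  · intro x y; exact hle x y
  · intro x; exact hlab x

theorem Pomset.seq_assoc (U V W : Pomset A) : (U.seq V).seq W = U.seq (V.seq W) := by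
  induction U using Quotient.ind with | _ u
  induction V using Quotient.ind with | _ v
  induction W using Quotient.ind with | _ w
  refine Quotient.sound (iso_of_surj
    (fun z => Sum.elim (fun z => Sum.elim (fun x => inS u (v.seqL w) x)
      (fun y => inS' u (v.seqL w) (inS v w y)) (ofLex z))
      (fun z => inS' u (v.seqL w) (inS' v w z)) (ofLex z)) ?_ ?_ ?_)
  · rintro ((x | x) | x) ((y | y) | y)
    all_goals
      first
      | change inS _ _ x ≤ inS _ _ y ↔ inS _ _ (inS _ _ x) ≤ inS _ _ (inS _ _ y)
      | change inS _ _ x ≤ inS' _ _ (inS _ _ y) ↔ inS _ _ (inS _ _ x) ≤ inS _ _ (inS' _ _ y)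
      | change inS _ _ x ≤ inS' _ _ (inS' _ _ y) ↔ inS _ _ (inS _ _ x) ≤ inS' _ _ y
      | change inS' _ _ (inS _ _ x) ≤ inS _ _ y ↔ inS _ _ (inS' _ _ x) ≤ inS _ _ (inS _ _ y)
      | change inS' _ _ (inS _ _ x) ≤ inS' _ _ (inS _ _ y) ↔
          inS _ _ (inS' _ _ x) ≤ inS _ _ (inS' _ _ y)
      | change inS' _ _ (inS _ _ x) ≤ inS' _ _ (inS' _ _ y) ↔ inS _ _ (inS' _ _ x) ≤ inS' _ _ y
      | change inS' _ _ (inS' _ _ x) ≤ inS _ _ y ↔ inS' _ _ x ≤ inS _ _ (inS _ _ y)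
      | change inS' _ _ (inS' _ _ x) ≤ inS' _ _ (inS _ _ y) ↔ inS' _ _ x ≤ inS _ _ (inS' _ _ y)
      | change inS' _ _ (inS' _ _ x) ≤ inS' _ _ (inS' _ _ y) ↔ inS' _ _ x ≤ inS' _ _ y
      simp
  · rintro ((x | x) | x) <;> rfl
  · rintro (x | (x | x))
    · exact ⟨inS _ _ (inS _ _ x), rfl⟩
    · exact ⟨inS _ _ (inS' _ _ x), rfl⟩
    · exact ⟨inS' _ _ x, rfl⟩

theorem Pomset.par_assoc (U V W : Pomset A) : (U.par V).par W = U.par (V.par W) := by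
  induction U using Quotient.ind with | _ u
  induction V using Quotient.ind with | _ v
  induction W using Quotient.ind with | _ w
  refine Quotient.sound (iso_of_surj
    (fun z => Sum.elim (fun z => Sum.elim (fun x => inP u (v.parL w) x)
      (fun y => inP' u (v.parL w) (inP v w y)) z)
      (fun z => inP' u (v.parL w) (inP' v w z)) z) ?_ ?_ ?_)
  · rintro ((x | x) | x) ((y | y) | y)
    all_goals
      first
      | change inP _ _ x ≤ inP _ _ y ↔ inP _ _ (inP _ _ x) ≤ inP _ _ (inP _ _ y)
      | change inP _ _ x ≤ inP' _ _ (inP _ _ y) ↔ inP _ _ (inP _ _ x) ≤ inP _ _ (inP' _ _ y)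
      | change inP _ _ x ≤ inP' _ _ (inP' _ _ y) ↔ inP _ _ (inP _ _ x) ≤ inP' _ _ y
      | change inP' _ _ (inP _ _ x) ≤ inP _ _ y ↔ inP _ _ (inP' _ _ x) ≤ inP _ _ (inP _ _ y)
      | change inP' _ _ (inP _ _ x) ≤ inP' _ _ (inP _ _ y) ↔
          inP _ _ (inP' _ _ x) ≤ inP _ _ (inP' _ _ y)
      | change inP' _ _ (inP _ _ x) ≤ inP' _ _ (inP' _ _ y) ↔ inP _ _ (inP' _ _ x) ≤ inP' _ _ y
      | change inP' _ _ (inP' _ _ x) ≤ inP _ _ y ↔ inP' _ _ x ≤ inP _ _ (inP _ _ y)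
      | change inP' _ _ (inP' _ _ x) ≤ inP' _ _ (inP _ _ y) ↔ inP' _ _ x ≤ inP _ _ (inP' _ _ y)
      | change inP' _ _ (inP' _ _ x) ≤ inP' _ _ (inP' _ _ y) ↔ inP' _ _ x ≤ inP' _ _ y
      simp
  · rintro ((x | x) | x) <;> rfl
  · rintro (x | (x | x))
    · exact ⟨inP _ _ (inP _ _ x), rfl⟩
    · exact ⟨inP _ _ (inP' _ _ x), rfl⟩
    · exact ⟨inP' _ _ x, rfl⟩

theorem Pomset.par_comm (U V : Pomset A) : U.par V = V.par U := by
  induction U using Quotient.ind with | _ u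
  induction V using Quotient.ind with | _ v
  refine Quotient.sound (iso_of_surj
    (fun z => Sum.elim (fun x => inP' v u x) (fun x => inP v u x) z) ?_ ?_ ?_)
  · rintro (x | x) (y | y)
    all_goals
      first
      | change inP' _ _ x ≤ inP' _ _ y ↔ inP _ _ x ≤ inP _ _ y
      | change inP' _ _ x ≤ inP _ _ y ↔ inP _ _ x ≤ inP' _ _ y
      | change inP _ _ x ≤ inP' _ _ y ↔ inP' _ _ x ≤ inP _ _ y
      | change inP _ _ x ≤ inP _ _ y ↔ inP' _ _ x ≤ inP' _ _ y
      simp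
  · rintro (x | x) <;> rfl
  · rintro (x | x)
    · exact ⟨inP' _ _ x, rfl⟩
    · exact ⟨inP _ _ x, rfl⟩

theorem Pomset.seq_one (U : Pomset A) : U.seq (Pomset.empty A) = U := by
  induction U using Quotient.ind with | _ u
  refine Eq.symm (Quotient.sound (iso_of_surj (fun x => inS u _ x) ?_ ?_ ?_))
  · intro x y; simp
  · intro x; rfl
  · rintro (x | x)
    · exact ⟨x, rfl⟩
    · exact x.elim0

theorem Pomset.one_seq (U : Pomset A) : (Pomset.empty A).seq U = U := by
  induction U using Quotient.ind with | _ u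
  refine Eq.symm (Quotient.sound (iso_of_surj (fun x => inS' _ u x) ?_ ?_ ?_))
  · intro x y; simp
  · intro x; rfl
  · rintro (x | x)
    · exact x.elim0
    · exact ⟨x, rfl⟩

theorem Pomset.par_one (U : Pomset A) : U.par (Pomset.empty A) = U := by
  induction U using Quotient.ind with | _ u
  refine Eq.symm (Quotient.sound (iso_of_surj (fun x => inP u _ x) ?_ ?_ ?_))
  · intro x y; simp
  · intro x; rfl
  · rintro (x | x)
    · exact ⟨x, rfl⟩
    · exact x.elim0

/-! ### Insertion into contexts -/

def inC (c : LPoset (Option A)) (u : LPoset A) (x : c.carrier) (hx : c.lab x ≠ none) :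
    (c.insL u).carrier := Sum.inl ⟨x, hx⟩
def inC' (c : LPoset (Option A)) (u : LPoset A) (x : u.carrier) :
    (c.insL u).carrier := Sum.inr x

theorem inC_le_inC {c : LPoset (Option A)} {u : LPoset A} {x y hx hy} :
    inC c u x hx ≤ inC c u y hy ↔ x ≤ y := Iff.rfl
theorem inC'_le_inC' {c : LPoset (Option A)} {u : LPoset A} {x y} :
    inC' c u x ≤ inC' c u y ↔ x ≤ y := Iff.rfl
theorem inC_le_inC' {c : LPoset (Option A)} {u : LPoset A} {x y hx} :
    inC c u x hx ≤ inC' c u y ↔ c.uniqueStarL ∧ ∃ s, c.lab s = none ∧ x ≤ s := Iff.rfl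
theorem inC'_le_inC {c : LPoset (Option A)} {u : LPoset A} {x y hy} :
    inC' c u x ≤ inC c u y hy ↔ c.uniqueStarL ∧ ∃ s, c.lab s = none ∧ s ≤ y := Iff.rfl

theorem Pomset.ins_star (U : Pomset A) : (Pomset.single (none : Option A)).ins U = U := by
  induction U using Quotient.ind with | _ u
  refine Eq.symm (Quotient.sound (iso_of_surj (fun x => inC' _ u x) ?_ ?_ ?_))
  · intro x y; exact inC'_le_inC'
  · intro x; rfl
  · rintro (⟨x, hx⟩ | x)
    · exact absurd rfl hx
    · exact ⟨x, rfl⟩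

/-- no star in the poset -/
def LPoset.noStarL (c : LPoset (Option A)) : Prop := ∀ x, c.lab x ≠ none

theorem uniqueStar_seqL {c d : LPoset (Option A)} :
    (c.seqL d).uniqueStarL ↔
      (c.uniqueStarL ∧ d.noStarL) ∨ (c.noStarL ∧ d.uniqueStarL) := by
  constructor
  · rintro ⟨z, hz, hu⟩
    rcases seqL_cases z with ⟨x, rfl⟩ | ⟨x, rfl⟩
    · refine Or.inl ⟨⟨x, hz, fun y hy => ?_⟩, fun y hy => ?_⟩
      · exact inS_inj.1 (hu (inS _ _ y) hy)
      · exact inS'_ne (hu (inS' _ _ y) hy)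
    · refine Or.inr ⟨fun y hy => ?_, ⟨x, hz, fun y hy => ?_⟩⟩
      · exact inS_ne (hu (inS _ _ y) hy)
      · exact inS'_inj.1 (hu (inS' _ _ y) hy)
  · rintro (⟨⟨x, hx, hu⟩, hn⟩ | ⟨hn, ⟨x, hx, hu⟩⟩)
    · refine ⟨inS _ _ x, hx, fun z hz => ?_⟩
      rcases seqL_cases z with ⟨y, rfl⟩ | ⟨y, rfl⟩
      · exact inS_inj.2 (hu y hz)
      · exact absurd hz (hn y)
    · refine ⟨inS' _ _ x, hx, fun z hz => ?_⟩
      rcases seqL_cases z with ⟨y, rfl⟩ | ⟨y, rfl⟩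
      · exact absurd hz (hn y)
      · exact inS'_inj.2 (hu y hz)

theorem uniqueStar_parL {c d : LPoset (Option A)} :
    (c.parL d).uniqueStarL ↔
      (c.uniqueStarL ∧ d.noStarL) ∨ (c.noStarL ∧ d.uniqueStarL) := by
  constructor
  · rintro ⟨z, hz, hu⟩
    rcases parL_cases z with ⟨x, rfl⟩ | ⟨x, rfl⟩
    · refine Or.inl ⟨⟨x, hz, fun y hy => ?_⟩, fun y hy => ?_⟩
      · exact inP_inj.1 (hu (inP _ _ y) hy)
      · exact inP'_ne (hu (inP' _ _ y) hy)
    · refine Or.inr ⟨fun y hy => ?_, ⟨x, hz, fun y hy => ?_⟩⟩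
      · exact inP_ne (hu (inP _ _ y) hy)
      · exact inP'_inj.1 (hu (inP' _ _ y) hy)
  · rintro (⟨⟨x, hx, hu⟩, hn⟩ | ⟨hn, ⟨x, hx, hu⟩⟩)
    · refine ⟨inP _ _ x, hx, fun z hz => ?_⟩
      rcases parL_cases z with ⟨y, rfl⟩ | ⟨y, rfl⟩
      · exact inP_inj.2 (hu y hz)
      · exact absurd hz (hn y)
    · refine ⟨inP' _ _ x, hx, fun z hz => ?_⟩
      rcases parL_cases z with ⟨y, rfl⟩ | ⟨y, rfl⟩
      · exact absurd hz (hn y)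
      · exact inP'_inj.2 (hu y hz)

theorem noStar_map (v : LPoset A) : (v.mapL some).noStarL := fun _ h => Option.some_ne_none _ h

/-- the inclusion of `c[u]` into `(c·d)[u]` etc. is described pointwise below -/
theorem ins_seq_right {C : Pomset (Option A)} (hC : C.IsCtx) (V U : Pomset A) :
    (C.seq (V.map some)).ins U = (C.ins U).seq V := by
  induction C using Quotient.ind with | _ c
  induction U using Quotient.ind with | _ u
  induction V using Quotient.ind with | _ v
  have hc : c.uniqueStarL := hC
  have hcv : (c.seqL (v.mapL some)).uniqueStarL :=
    uniqueStar_seqL.2 (Or.inl ⟨hc, noStar_map v⟩)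
  obtain ⟨s, hs, hsu⟩ := hc
  refine Eq.symm (Quotient.sound (iso_of_surj
    (fun z => Sum.elim (fun z => Sum.elim
      (fun x => inC (c.seqL (v.mapL some)) u (inS _ _ x.1) x.2)
      (fun y => inC' (c.seqL (v.mapL some)) u y) z)
      (fun z => inC (c.seqL (v.mapL some)) u (inS' c (v.mapL some) z) (noStar_map v z))
        (ofLex z)) ?_ ?_ ?_))
  · have key : ∀ x : c.carrier,
        (∃ t, (c.seqL (v.mapL some)).lab t = none ∧ inS c (v.mapL some) x ≤ t) ↔
        (∃ t, c.lab t = none ∧ x ≤ t) := by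
      intro x
      constructor
      · rintro ⟨t, ht, hxt⟩
        rcases seqL_cases t with ⟨t, rfl⟩ | ⟨t, rfl⟩
        · exact ⟨t, ht, inS_le_inS.1 hxt⟩
        · exact absurd ht (noStar_map v t)
      · rintro ⟨t, ht, hxt⟩
        exact ⟨inS _ _ t, ht, inS_le_inS.2 hxt⟩
    have key' : ∀ x : c.carrier,
        (∃ t, (c.seqL (v.mapL some)).lab t = none ∧ t ≤ inS c (v.mapL some) x) ↔
        (∃ t, c.lab t = none ∧ t ≤ x) := by
      intro x
      constructor
      · rintro ⟨t, ht, hxt⟩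
        rcases seqL_cases t with ⟨t, rfl⟩ | ⟨t, rfl⟩
        · exact ⟨t, ht, inS_le_inS.1 hxt⟩
        · exact absurd ht (noStar_map v t)
      · rintro ⟨t, ht, hxt⟩
        exact ⟨inS _ _ t, ht, inS_le_inS.2 hxt⟩
    have hc : c.uniqueStarL := hC
    rintro ((x | x) | x) ((y | y) | y)
    · exact (inC_le_inC.trans inS_le_inS).trans (Iff.symm inS_le_inS)
    · refine Iff.trans ?_ (Iff.symm (inS_le_inS (u := c.insL u) (v := v)
        (x := inC c u x.1 x.2) (y := inC' c u y)))
      refine inC_le_inC'.trans (Iff.trans ?_ (Iff.symm inC_le_inC'))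
      rw [key]; simp only [hcv, hc, true_and]
    · refine iff_of_true (inC_le_inC.2 inS_le_inS')
        (inS_le_inS' (u := c.insL u) (v := v) (x := inC c u x.1 x.2) (y := y))
    · refine Iff.trans ?_ (Iff.symm (inS_le_inS (u := c.insL u) (v := v)
        (x := inC' c u x) (y := inC c u y.1 y.2)))
      refine inC'_le_inC.trans (Iff.trans ?_ (Iff.symm inC'_le_inC))
      rw [key']; simp only [hcv, hc, true_and]
    · exact inC'_le_inC'.trans (Iff.symm (inS_le_inS (u := c.insL u) (v := v)
        (x := inC' c u x) (y := inC' c u y)))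
    · refine iff_of_true (inC'_le_inC.2 ⟨hcv, inS _ _ s, hs, inS_le_inS'⟩)
        (inS_le_inS' (u := c.insL u) (v := v) (x := inC' c u x) (y := y))
    · refine iff_of_false (fun h => inS'_le_inS (inC_le_inC.1 h))
        (inS'_le_inS (u := c.insL u) (v := v) (x := x) (y := inC c u y.1 y.2))
    · refine iff_of_false (fun h => ?_)
        (inS'_le_inS (u := c.insL u) (v := v) (x := x) (y := inC' c u y))
      obtain ⟨-, t, ht, hxt⟩ := inC_le_inC'.1 h
      rcases seqL_cases t with ⟨t, rfl⟩ | ⟨t, rfl⟩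
      · exact inS'_le_inS hxt
      · exact absurd ht (noStar_map v t)
    · exact (inC_le_inC.trans inS'_le_inS').trans (Iff.symm
        (inS'_le_inS' (u := c.insL u) (v := v)))
  · rintro ((x | x) | x) <;> rfl
  · rintro (⟨(x | x), hx⟩ | x)
    · exact ⟨inS _ _ (inC c u x hx), rfl⟩
    · exact ⟨inS' (c.insL u) v x, rfl⟩
    · exact ⟨inS _ _ (inC' c u x), rfl⟩

theorem ins_seq_left {C : Pomset (Option A)} (hC : C.IsCtx) (V U : Pomset A) :
    ((V.map some).seq C).ins U = V.seq (C.ins U) := by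
  induction C using Quotient.ind with | _ c
  induction U using Quotient.ind with | _ u
  induction V using Quotient.ind with | _ v
  have hc : c.uniqueStarL := hC
  have hcv : ((v.mapL some).seqL c).uniqueStarL :=
    uniqueStar_seqL.2 (Or.inr ⟨noStar_map v, hc⟩)
  obtain ⟨s, hs, hsu⟩ := hc
  refine Eq.symm (Quotient.sound (iso_of_surj
    (fun z => Sum.elim 
      (fun z => inC ((v.mapL some).seqL c) u (inS (v.mapL some) c z) (noStar_map v z))
      (fun z => Sum.elim
      (fun x => inC ((v.mapL some).seqL c) u (inS' _ _ x.1) x.2)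
      (fun y => inC' ((v.mapL some).seqL c) u y) z)
        (ofLex z)) ?_ ?_ ?_))
  · have key : ∀ x : c.carrier,
        (∃ t, ((v.mapL some).seqL c).lab t = none ∧ inS' (v.mapL some) c x ≤ t) ↔
        (∃ t, c.lab t = none ∧ x ≤ t) := by
      intro x
      constructor
      · rintro ⟨t, ht, hxt⟩
        rcases seqL_cases t with ⟨t, rfl⟩ | ⟨t, rfl⟩
        · exact absurd ht (noStar_map v t)
        · exact ⟨t, ht, inS'_le_inS'.1 hxt⟩
      · rintro ⟨t, ht, hxt⟩
        exact ⟨inS' _ _ t, ht, inS'_le_inS'.2 hxt⟩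
    have key' : ∀ x : c.carrier,
        (∃ t, ((v.mapL some).seqL c).lab t = none ∧ t ≤ inS' (v.mapL some) c x) ↔
        (∃ t, c.lab t = none ∧ t ≤ x) := by
      intro x
      constructor
      · rintro ⟨t, ht, hxt⟩
        rcases seqL_cases t with ⟨t, rfl⟩ | ⟨t, rfl⟩
        · exact absurd ht (noStar_map v t)
        · exact ⟨t, ht, inS'_le_inS'.1 hxt⟩
      · rintro ⟨t, ht, hxt⟩
        exact ⟨inS' _ _ t, ht, inS'_le_inS'.2 hxt⟩
    have hc : c.uniqueStarL := hC
    rintro (x | (x | x)) (y | (y | y))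
    · exact (inC_le_inC.trans inS_le_inS).trans (Iff.symm
        (inS_le_inS (u := v) (v := c.insL u)))
    · exact iff_of_true (inC_le_inC.2 inS_le_inS')
        (inS_le_inS' (u := v) (v := c.insL u) (x := x) (y := inC c u y.1 y.2))
    · exact iff_of_true (inC_le_inC'.2 ⟨hcv, inS' _ _ s, hs, inS_le_inS'⟩)
        (inS_le_inS' (u := v) (v := c.insL u) (x := x) (y := inC' c u y))
    · exact iff_of_false (fun h => inS'_le_inS (inC_le_inC.1 h))
        (inS'_le_inS (u := v) (v := c.insL u) (x := inC c u x.1 x.2) (y := y))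
    · exact (inC_le_inC.trans inS'_le_inS').trans (Iff.symm inS'_le_inS')
    · refine Iff.trans ?_ (Iff.symm (inS'_le_inS' (u := v) (v := c.insL u)
        (x := inC c u x.1 x.2) (y := inC' c u y)))
      refine inC_le_inC'.trans (Iff.trans ?_ (Iff.symm inC_le_inC'))
      rw [key]; simp only [hcv, hc, true_and]
    · refine iff_of_false (fun h => ?_)
        (inS'_le_inS (u := v) (v := c.insL u) (x := inC' c u x) (y := y))
      obtain ⟨-, t, ht, hxt⟩ := inC'_le_inC.1 h
      rcases seqL_cases t with ⟨t, rfl⟩ | ⟨t, rfl⟩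
      · exact absurd ht (noStar_map v t)
      · exact inS'_le_inS hxt
    · refine Iff.trans ?_ (Iff.symm (inS'_le_inS' (u := v) (v := c.insL u)
        (x := inC' c u x) (y := inC c u y.1 y.2)))
      refine inC'_le_inC.trans (Iff.trans ?_ (Iff.symm inC'_le_inC))
      rw [key']; simp only [hcv, hc, true_and]
    · exact inC'_le_inC'.trans (Iff.symm (inS'_le_inS' (u := v) (v := c.insL u)
        (x := inC' c u x) (y := inC' c u y)))
  · rintro (x | (x | x)) <;> rfl
  · rintro (⟨(x | x), hx⟩ | x)
    · exact ⟨inS v (c.insL u) x, rfl⟩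
    · exact ⟨inS' v (c.insL u) (inC c u x hx), rfl⟩
    · exact ⟨inS' v (c.insL u) (inC' c u x), rfl⟩

theorem ins_par_left {C : Pomset (Option A)} (hC : C.IsCtx) (V U : Pomset A) :
    ((V.map some).par C).ins U = V.par (C.ins U) := by
  induction C using Quotient.ind with | _ c
  induction U using Quotient.ind with | _ u
  induction V using Quotient.ind with | _ v
  have hc : c.uniqueStarL := hC
  have hcv : ((v.mapL some).parL c).uniqueStarL :=
    uniqueStar_parL.2 (Or.inr ⟨noStar_map v, hc⟩)
  refine Eq.symm (Quotient.sound (iso_of_surj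
    (fun z => Sum.elim 
      (fun z => inC ((v.mapL some).parL c) u (inP (v.mapL some) c z) (noStar_map v z))
      (fun z => Sum.elim
      (fun x => inC ((v.mapL some).parL c) u (inP' _ _ x.1) x.2)
      (fun y => inC' ((v.mapL some).parL c) u y) z)
        z) ?_ ?_ ?_))
  · have key : ∀ x : c.carrier,
        (∃ t, ((v.mapL some).parL c).lab t = none ∧ inP' (v.mapL some) c x ≤ t) ↔
        (∃ t, c.lab t = none ∧ x ≤ t) := by
      intro x
      constructor
      · rintro ⟨t, ht, hxt⟩
        rcases parL_cases t with ⟨t, rfl⟩ | ⟨t, rfl⟩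
        · exact absurd ht (noStar_map v t)
        · exact ⟨t, ht, inP'_le_inP'.1 hxt⟩
      · rintro ⟨t, ht, hxt⟩
        exact ⟨inP' _ _ t, ht, inP'_le_inP'.2 hxt⟩
    have key' : ∀ x : c.carrier,
        (∃ t, ((v.mapL some).parL c).lab t = none ∧ t ≤ inP' (v.mapL some) c x) ↔
        (∃ t, c.lab t = none ∧ t ≤ x) := by
      intro x
      constructor
      · rintro ⟨t, ht, hxt⟩
        rcases parL_cases t with ⟨t, rfl⟩ | ⟨t, rfl⟩
        · exact absurd ht (noStar_map v t)
        · exact ⟨t, ht, inP'_le_inP'.1 hxt⟩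
      · rintro ⟨t, ht, hxt⟩
        exact ⟨inP' _ _ t, ht, inP'_le_inP'.2 hxt⟩
    rintro (x | (x | x)) (y | (y | y))
    · exact (inC_le_inC.trans inP_le_inP).trans (Iff.symm
        (inP_le_inP (u := v) (v := c.insL u)))
    · exact iff_of_false (fun h => inP_le_inP' (inC_le_inC.1 h))
        (inP_le_inP' (u := v) (v := c.insL u) (x := x) (y := inC c u y.1 y.2))
    · refine iff_of_false (fun h => ?_)
        (inP_le_inP' (u := v) (v := c.insL u) (x := x) (y := inC' c u y))
      obtain ⟨-, t, ht, hxt⟩ := inC_le_inC'.1 h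
      rcases parL_cases t with ⟨t, rfl⟩ | ⟨t, rfl⟩
      · exact absurd ht (noStar_map v t)
      · exact inP_le_inP' hxt
    · exact iff_of_false (fun h => inP'_le_inP (inC_le_inC.1 h))
        (inP'_le_inP (u := v) (v := c.insL u) (x := inC c u x.1 x.2) (y := y))
    · exact (inC_le_inC.trans inP'_le_inP').trans (Iff.symm inP'_le_inP')
    · refine Iff.trans ?_ (Iff.symm (inP'_le_inP' (u := v) (v := c.insL u)
        (x := inC c u x.1 x.2) (y := inC' c u y)))
      refine inC_le_inC'.trans (Iff.trans ?_ (Iff.symm inC_le_inC'))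
      rw [key]; simp only [hcv, hc, true_and]
    · refine iff_of_false (fun h => ?_)
        (inP'_le_inP (u := v) (v := c.insL u) (x := inC' c u x) (y := y))
      obtain ⟨-, t, ht, hxt⟩ := inC'_le_inC.1 h
      rcases parL_cases t with ⟨t, rfl⟩ | ⟨t, rfl⟩
      · exact absurd ht (noStar_map v t)
      · exact inP'_le_inP hxt
    · refine Iff.trans ?_ (Iff.symm (inP'_le_inP' (u := v) (v := c.insL u)
        (x := inC' c u x) (y := inC c u y.1 y.2)))
      refine inC'_le_inC.trans (Iff.trans ?_ (Iff.symm inC'_le_inC))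
      rw [key']; simp only [hcv, hc, true_and]
    · exact inC'_le_inC'.trans (Iff.symm (inP'_le_inP' (u := v) (v := c.insL u)
        (x := inC' c u x) (y := inC' c u y)))
  · rintro (x | (x | x)) <;> rfl
  · rintro (⟨(x | x), hx⟩ | x)
    · exact ⟨inP v (c.insL u) x, rfl⟩
    · exact ⟨inP' v (c.insL u) (inC c u x hx), rfl⟩
    · exact ⟨inP' v (c.insL u) (inC' c u x), rfl⟩

end Isos

end CKAH


namespace CKAH

open Classical

section PartB

variable {A : Type}

inductive SPT (A : Type) : Type
  | one : SPT A
  | var : A → SPT A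
  | seq : SPT A → SPT A → SPT A
  | par : SPT A → SPT A → SPT A

def SPT.den : SPT A → LPoset A
  | .one => LPoset.emptyL A
  | .var a => LPoset.singleL a
  | .seq u v => u.den.seqL v.den
  | .par u v => u.den.parL v.den

def SPT.pom (u : SPT A) : Pomset A := Quotient.mk _ u.den

@[simp] theorem SPT.pom_one : (SPT.one : SPT A).pom = Pomset.empty A := rfl
@[simp] theorem SPT.pom_var (a : A) : (SPT.var a).pom = Pomset.single a := rfl
@[simp] theorem SPT.pom_seq (u v : SPT A) : (SPT.seq u v).pom = u.pom.seq v.pom := rfl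
@[simp] theorem SPT.pom_par (u v : SPT A) : (SPT.par u v).pom = u.pom.par v.pom := rfl

theorem SPT.isSP (u : SPT A) : u.pom.IsSP := by
  induction u with
  | one => exact .empty
  | var a => exact .single a
  | seq u v hu hv => exact .seq hu hv
  | par u v hu hv => exact .par hu hv

theorem isSP_iff {U : Pomset A} : U.IsSP ↔ ∃ u : SPT A, u.pom = U := by
  constructor
  · intro h
    induction h with
    | empty => exact ⟨.one, rfl⟩
    | single a => exact ⟨.var a, rfl⟩
    | seq _ _ h1 h2 =>
      obtain ⟨u, rfl⟩ := h1; obtain ⟨v, rfl⟩ := h2; exact ⟨.seq u v, rfl⟩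
    | par _ _ h1 h2 =>
      obtain ⟨u, rfl⟩ := h1; obtain ⟨v, rfl⟩ := h2; exact ⟨.par u v, rfl⟩
  · rintro ⟨u, rfl⟩; exact u.isSP

def SPT.map {B : Type} (f : A → B) : SPT A → SPT B
  | .one => .one
  | .var a => .var (f a)
  | .seq u v => .seq (u.map f) (v.map f)
  | .par u v => .par (u.map f) (v.map f)

/-- Bimonoids: a monoid and a commutative monoid sharing the unit. -/
class BiMon (M : Type) where
  e : M
  sq : M → M → M
  pr : M → M → M
  sq_assoc : ∀ a b c, sq (sq a b) c = sq a (sq b c)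
  e_sq : ∀ a, sq e a = a
  sq_e : ∀ a, sq a e = a
  pr_assoc : ∀ a b c, pr (pr a b) c = pr a (pr b c)
  pr_comm : ∀ a b, pr a b = pr b a
  pr_e : ∀ a, pr a e = a

attribute [simp] BiMon.e_sq BiMon.sq_e BiMon.pr_e

@[simp] theorem BiMon.e_pr {M : Type} [BiMon M] (a : M) : BiMon.pr BiMon.e a = a := by
  rw [BiMon.pr_comm]; exact BiMon.pr_e a

def SPT.ev {M : Type} [BiMon M] (g : A → M) : SPT A → M
  | .one => BiMon.e
  | .var a => g a
  | .seq u v => BiMon.sq (u.ev g) (v.ev g)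
  | .par u v => BiMon.pr (u.ev g) (v.ev g)

def Emb (w u : LPoset A) (P : u.carrier → Prop) : Prop :=
  ∃ i : w.carrier → u.carrier, (∀ x y, i x ≤ i y ↔ x ≤ y) ∧ (∀ x, u.lab (i x) = w.lab x) ∧
    ∀ y, P y ↔ ∃ x, i x = y

theorem Emb.iso {w w' u : LPoset A} {P : u.carrier → Prop} (h : Emb w u P) (h' : Emb w' u P) :
    w.Iso w' := by
  obtain ⟨i, h1, h2, h3⟩ := h
  obtain ⟨j, k1, k2, k3⟩ := h'
  have hx : ∀ x, ∃ y, j y = i x := fun x => (k3 _).1 ((h3 _).2 ⟨x, rfl⟩)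
  choose f hf using hx
  refine iso_of_surj f ?_ ?_ ?_
  · intro x y; rw [← k1, hf, hf, h1]
  · intro x; rw [← k2, hf, h2]
  · intro y
    obtain ⟨x, hx⟩ := (h3 (j y)).1 ((k3 _).2 ⟨y, rfl⟩)
    refine ⟨x, ?_⟩
    have : j (f x) = j y := by rw [hf, hx]
    exact le_antisymm ((k1 _ _).1 this.le) ((k1 _ _).1 this.ge)

theorem Emb.seq {w1 w2 u v : LPoset A} {P : (u.seqL v).carrier → Prop}
    (h : Emb w1 u (fun x => P (inS u v x))) (h' : Emb w2 v (fun x => P (inS' u v x))) :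
    Emb (w1.seqL w2) (u.seqL v) P := by
  obtain ⟨i, h1, h2, h3⟩ := h
  obtain ⟨j, k1, k2, k3⟩ := h'
  let F : (w1.seqL w2).carrier → (u.seqL v).carrier :=
    fun z => Sum.elim (fun x => inS u v (i x)) (fun x => inS' u v (j x)) (ofLex z)
  have F1 : ∀ x, F (inS w1 w2 x) = inS u v (i x) := fun _ => rfl
  have F2 : ∀ x, F (inS' w1 w2 x) = inS' u v (j x) := fun _ => rfl
  refine ⟨F, ?_, ?_, ?_⟩
  · intro x y
    rcases seqL_cases x with ⟨x, rfl⟩ | ⟨x, rfl⟩ <;> rcases seqL_cases y with ⟨y, rfl⟩ | ⟨y, rfl⟩ <;>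
      simp [F1, F2, h1, k1]
  · intro x
    rcases seqL_cases x with ⟨x, rfl⟩ | ⟨x, rfl⟩ <;> simp [F1, F2, h2, k2]
  · intro y
    rcases seqL_cases y with ⟨y, rfl⟩ | ⟨y, rfl⟩
    · refine (h3 y).trans ?_
      constructor
      · rintro ⟨x, rfl⟩; exact ⟨inS _ _ x, rfl⟩
      · rintro ⟨x, hx⟩
        rcases seqL_cases x with ⟨x, rfl⟩ | ⟨x, rfl⟩
        · rw [F1] at hx; exact ⟨x, by simpa using hx⟩
        · rw [F2] at hx; simp at hx
    · refine (k3 y).trans ?_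
      constructor
      · rintro ⟨x, rfl⟩; exact ⟨inS' _ _ x, rfl⟩
      · rintro ⟨x, hx⟩
        rcases seqL_cases x with ⟨x, rfl⟩ | ⟨x, rfl⟩
        · rw [F1] at hx; simp at hx
        · rw [F2] at hx; exact ⟨x, by simpa using hx⟩

theorem Emb.par {w1 w2 u v : LPoset A} {P : (u.parL v).carrier → Prop}
    (h : Emb w1 u (fun x => P (inP u v x))) (h' : Emb w2 v (fun x => P (inP' u v x))) :
    Emb (w1.parL w2) (u.parL v) P := by
  obtain ⟨i, h1, h2, h3⟩ := h
  obtain ⟨j, k1, k2, k3⟩ := h'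
  let F : (w1.parL w2).carrier → (u.parL v).carrier :=
    fun z => Sum.elim (fun x => inP u v (i x)) (fun x => inP' u v (j x)) z
  have F1 : ∀ x, F (inP w1 w2 x) = inP u v (i x) := fun _ => rfl
  have F2 : ∀ x, F (inP' w1 w2 x) = inP' u v (j x) := fun _ => rfl
  refine ⟨F, ?_, ?_, ?_⟩
  · intro x y
    rcases parL_cases x with ⟨x, rfl⟩ | ⟨x, rfl⟩ <;> rcases parL_cases y with ⟨y, rfl⟩ | ⟨y, rfl⟩ <;>
      simp [F1, F2, h1, k1]
  · intro x
    rcases parL_cases x with ⟨x, rfl⟩ | ⟨x, rfl⟩ <;> simp [F1, F2, h2, k2]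
  · intro y
    rcases parL_cases y with ⟨y, rfl⟩ | ⟨y, rfl⟩
    · refine (h3 y).trans ?_
      constructor
      · rintro ⟨x, rfl⟩; exact ⟨inP _ _ x, rfl⟩
      · rintro ⟨x, hx⟩
        rcases parL_cases x with ⟨x, rfl⟩ | ⟨x, rfl⟩
        · rw [F1] at hx; exact ⟨x, by simpa using hx⟩
        · rw [F2] at hx; simp at hx
    · refine (k3 y).trans ?_
      constructor
      · rintro ⟨x, rfl⟩; exact ⟨inP' _ _ x, rfl⟩
      · rintro ⟨x, hx⟩
        rcases parL_cases x with ⟨x, rfl⟩ | ⟨x, rfl⟩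
        · rw [F1] at hx; simp at hx
        · rw [F2] at hx; exact ⟨x, by simpa using hx⟩

theorem Emb.none (u : LPoset A) {P : u.carrier → Prop} (h : ∀ x, ¬ P x) :
    Emb (LPoset.emptyL A) u P :=
  ⟨fun x => x.elim0, fun x => x.elim0, fun x => x.elim0,
    fun y => ⟨fun hy => (h y hy).elim, fun ⟨x, _⟩ => x.elim0⟩⟩

theorem Emb.all (u : LPoset A) {P : u.carrier → Prop} (h : ∀ x, P x) : Emb u u P :=
  ⟨id, fun _ _ => Iff.rfl, fun _ => rfl, fun y => ⟨fun _ => ⟨y, rfl⟩, fun _ => h y⟩⟩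

theorem Emb.isEmpty {w u : LPoset A} {P : u.carrier → Prop} (h : Emb w u P)
    (hP : ∀ x, ¬ P x) : IsEmpty w.carrier := by
  obtain ⟨i, -, -, h3⟩ := h
  exact ⟨fun x => hP _ ((h3 (i x)).2 ⟨x, rfl⟩)⟩

variable {M : Type} [BiMon M] (g : A → M)

theorem ev_of_isEmpty (u : SPT A) (h : IsEmpty u.den.carrier) : u.ev g = BiMon.e := by
  induction u with
  | one => rfl
  | var a => exact (h.false PUnit.unit).elim
  | seq u v hu hv =>
    simp [SPT.ev, hu ⟨fun x => h.false (inS u.den v.den x)⟩,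
      hv ⟨fun x => h.false (inS' u.den v.den x)⟩]
  | par u v hu hv =>
    simp [SPT.ev, hu ⟨fun x => h.false (inP u.den v.den x)⟩,
      hv ⟨fun x => h.false (inP' u.den v.den x)⟩]

theorem Emb.ev_one {w : SPT A} {u : LPoset A} {P : u.carrier → Prop} (h : Emb w.den u P)
    (hP : ∀ x, ¬ P x) : w.ev g = BiMon.e := ev_of_isEmpty g w (h.isEmpty hP)

theorem cut_seq (u : SPT A) (P : u.den.carrier → Prop)
    (hP : ∀ x y, P x → ¬ P y → x < y) :
    ∃ u1 u2 : SPT A, Emb u1.den u.den P ∧ Emb u2.den u.den (fun x => ¬ P x) ∧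
      u.ev g = BiMon.sq (u1.ev g) (u2.ev g) := by
  induction u with
  | one => exact ⟨.one, .one, Emb.none _ (fun x => x.elim0), Emb.none _ (fun x => x.elim0),
      by simp [SPT.ev]⟩
  | var a =>
    by_cases h : P PUnit.unit
    · exact ⟨.var a, .one, Emb.all _ (fun _ => h), Emb.none _ (fun _ h' => h' h), by simp [SPT.ev]⟩
    · exact ⟨.one, .var a, Emb.none _ (fun _ => h), Emb.all _ (fun _ => h), by simp [SPT.ev]⟩
  | seq a b iha ihb =>
    change (a.den.seqL b.den).carrier → Prop at P
    replace hP : ∀ x y : (a.den.seqL b.den).carrier, P x → ¬ P y → x < y := hP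
    obtain ⟨a1, a2, ha1, ha2, hae⟩ := iha (fun x => P (inS a.den b.den x))
      (fun x y hx hy => by simpa [lt_iff_le_not_ge] using hP _ _ hx hy)
    obtain ⟨b1, b2, hb1, hb2, hbe⟩ := ihb (fun x => P (inS' a.den b.den x))
      (fun x y hx hy => by simpa [lt_iff_le_not_ge] using hP _ _ hx hy)
    refine ⟨.seq a1 b1, .seq a2 b2, Emb.seq ha1 hb1,
      Emb.seq (P := fun x => ¬ P x) ha2 hb2, ?_⟩
    have key : a2.ev g = BiMon.e ∨ b1.ev g = BiMon.e := by
      by_cases h : ∃ x, ¬ P (inS a.den b.den x)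
      · right
        obtain ⟨x, hx⟩ := h
        refine hb1.ev_one g (fun y hy => ?_)
        have := (hP _ _ hy hx).le
        simp at this
      · left
        exact ha2.ev_one g (fun y hy => h ⟨y, hy⟩)
    simp only [SPT.ev, hae, hbe]
    rcases key with h | h <;> simp [h, BiMon.sq_assoc]
  | par a b iha ihb =>
    change (a.den.parL b.den).carrier → Prop at P
    replace hP : ∀ x y : (a.den.parL b.den).carrier, P x → ¬ P y → x < y := hP
    obtain ⟨a1, a2, ha1, ha2, hae⟩ := iha (fun x => P (inP a.den b.den x))
      (fun x y hx hy => by simpa [lt_iff_le_not_ge] using hP _ _ hx hy)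
    obtain ⟨b1, b2, hb1, hb2, hbe⟩ := ihb (fun x => P (inP' a.den b.den x))
      (fun x y hx hy => by simpa [lt_iff_le_not_ge] using hP _ _ hx hy)
    refine ⟨.par a1 b1, .par a2 b2, Emb.par ha1 hb1,
      Emb.par (P := fun x => ¬ P x) ha2 hb2, ?_⟩
    have key : a1.ev g = BiMon.e ∨ b2.ev g = BiMon.e := by
      by_cases h : ∃ x, P (inP a.den b.den x)
      · right
        obtain ⟨x, hx⟩ := h
        refine hb2.ev_one g (fun y hy => ?_)
        have := (hP _ _ hx hy).le
        simp at this
      · left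
        exact ha1.ev_one g (fun y hy => h ⟨y, hy⟩)
    have key2 : b1.ev g = BiMon.e ∨ a2.ev g = BiMon.e := by
      by_cases h : ∃ x, P (inP' a.den b.den x)
      · right
        obtain ⟨x, hx⟩ := h
        refine ha2.ev_one g (fun y hy => ?_)
        have := (hP _ _ hx hy).le
        simp at this
      · left
        exact hb1.ev_one g (fun y hy => h ⟨y, hy⟩)
    simp only [SPT.ev, hae, hbe]
    rcases key with h | h <;> rcases key2 with h' | h' <;> simp [h, h']

theorem cut_par (u : SPT A) (P : u.den.carrier → Prop)
    (hP : ∀ x y, P x → ¬ P y → ¬ x ≤ y ∧ ¬ y ≤ x) :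
    ∃ u1 u2 : SPT A, Emb u1.den u.den P ∧ Emb u2.den u.den (fun x => ¬ P x) ∧
      u.ev g = BiMon.pr (u1.ev g) (u2.ev g) := by
  induction u with
  | one => exact ⟨.one, .one, Emb.none _ (fun x => x.elim0), Emb.none _ (fun x => x.elim0),
      by simp [SPT.ev]⟩
  | var a =>
    by_cases h : P PUnit.unit
    · exact ⟨.var a, .one, Emb.all _ (fun _ => h), Emb.none _ (fun _ h' => h' h), by simp [SPT.ev]⟩
    · exact ⟨.one, .var a, Emb.none _ (fun _ => h), Emb.all _ (fun _ => h), by simp [SPT.ev]⟩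
  | seq a b iha ihb =>
    change (a.den.seqL b.den).carrier → Prop at P
    replace hP : ∀ x y : (a.den.seqL b.den).carrier, P x → ¬ P y → ¬ x ≤ y ∧ ¬ y ≤ x := hP
    obtain ⟨a1, a2, ha1, ha2, hae⟩ := iha (fun x => P (inS a.den b.den x))
      (fun x y hx hy => by simpa using hP _ _ hx hy)
    obtain ⟨b1, b2, hb1, hb2, hbe⟩ := ihb (fun x => P (inS' a.den b.den x))
      (fun x y hx hy => by simpa using hP _ _ hx hy)
    refine ⟨.seq a1 b1, .seq a2 b2, Emb.seq ha1 hb1,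
      Emb.seq (P := fun x => ¬ P x) ha2 hb2, ?_⟩
    have key : a1.ev g = BiMon.e ∨ b2.ev g = BiMon.e := by
      by_cases h : ∃ x, P (inS a.den b.den x)
      · right
        obtain ⟨x, hx⟩ := h
        refine hb2.ev_one g (fun y hy => ?_)
        have := (hP _ _ hx hy).1
        simp at this
      · left
        exact ha1.ev_one g (fun y hy => h ⟨y, hy⟩)
    have key2 : b1.ev g = BiMon.e ∨ a2.ev g = BiMon.e := by
      by_cases h : ∃ x, P (inS' a.den b.den x)
      · right
        obtain ⟨x, hx⟩ := h
        refine ha2.ev_one g (fun y hy => ?_)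
        have := (hP _ _ hx hy).2
        simp at this
      · left
        exact hb1.ev_one g (fun y hy => h ⟨y, hy⟩)
    simp only [SPT.ev, hae, hbe]
    rcases key with h | h <;> rcases key2 with h' | h' <;> simp [h, h']
  | par a b iha ihb =>
    change (a.den.parL b.den).carrier → Prop at P
    replace hP : ∀ x y : (a.den.parL b.den).carrier, P x → ¬ P y → ¬ x ≤ y ∧ ¬ y ≤ x := hP
    obtain ⟨a1, a2, ha1, ha2, hae⟩ := iha (fun x => P (inP a.den b.den x))
      (fun x y hx hy => by simpa using hP _ _ hx hy)
    obtain ⟨b1, b2, hb1, hb2, hbe⟩ := ihb (fun x => P (inP' a.den b.den x))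
      (fun x y hx hy => by simpa using hP _ _ hx hy)
    refine ⟨.par a1 b1, .par a2 b2, Emb.par ha1 hb1,
      Emb.par (P := fun x => ¬ P x) ha2 hb2, ?_⟩
    simp only [SPT.ev, hae, hbe]
    rw [BiMon.pr_assoc, BiMon.pr_assoc, ← BiMon.pr_assoc (a2.ev g), BiMon.pr_comm (a2.ev g),
      BiMon.pr_assoc]

theorem ev_iso (v : SPT A) : ∀ u : SPT A, u.den.Iso v.den → u.ev g = v.ev g := by
  induction v with
  | one =>
    rintro u ⟨f, -⟩
    exact ev_of_isEmpty g u ⟨fun x => (f x).elim0⟩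
  | var a =>
    rintro u ⟨f, hf⟩
    have hs : ∀ u : SPT A, Subsingleton u.den.carrier → ∀ x : u.den.carrier,
        u.ev g = g (u.den.lab x) := by
      intro u
      induction u with
      | one => intro _ x; exact x.elim0
      | var a => intro _ x; rfl
      | seq a b iha ihb =>
        intro hs x
        change Subsingleton (a.den.seqL b.den).carrier at hs
        change (a.den.seqL b.den).carrier at x
        rcases seqL_cases x with ⟨x, rfl⟩ | ⟨x, rfl⟩
        · have h1 := iha ⟨fun y z => by
            have := hs.elim (inS a.den b.den y) (inS a.den b.den z); simpa using this⟩ x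
          have h2 := ev_of_isEmpty g b ⟨fun y => by
            have := hs.elim (inS a.den b.den x) (inS' a.den b.den y); simp at this⟩
          show BiMon.sq (a.ev g) (b.ev g) = g (a.den.lab x)
          simp [h1, h2]
        · have h1 := ihb ⟨fun y z => by
            have := hs.elim (inS' a.den b.den y) (inS' a.den b.den z); simpa using this⟩ x
          have h2 := ev_of_isEmpty g a ⟨fun y => by
            have := hs.elim (inS' a.den b.den x) (inS a.den b.den y); simp at this⟩
          show BiMon.sq (a.ev g) (b.ev g) = g (b.den.lab x)
          simp [h1, h2]
      | par a b iha ihb =>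
        intro hs x
        change Subsingleton (a.den.parL b.den).carrier at hs
        change (a.den.parL b.den).carrier at x
        rcases parL_cases x with ⟨x, rfl⟩ | ⟨x, rfl⟩
        · have h1 := iha ⟨fun y z => by
            have := hs.elim (inP a.den b.den y) (inP a.den b.den z); simpa using this⟩ x
          have h2 := ev_of_isEmpty g b ⟨fun y => by
            have := hs.elim (inP a.den b.den x) (inP' a.den b.den y); simp at this⟩
          show BiMon.pr (a.ev g) (b.ev g) = g (a.den.lab x)
          simp [h1, h2]
        · have h1 := ihb ⟨fun y z => by
            have := hs.elim (inP' a.den b.den y) (inP' a.den b.den z); simpa using this⟩ x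
          have h2 := ev_of_isEmpty g a ⟨fun y => by
            have := hs.elim (inP' a.den b.den x) (inP a.den b.den y); simp at this⟩
          show BiMon.pr (a.ev g) (b.ev g) = g (b.den.lab x)
          simp [h1, h2]
    rw [hs u ⟨fun x y => f.injective (Subsingleton.elim (α := PUnit) _ _)⟩
      (f.symm (PUnit.unit : PUnit)), ← hf]
    rfl
  | seq v1 v2 ih1 ih2 =>
    rintro u ⟨f, hf⟩
    change u.den.carrier ≃o (v1.den.seqL v2.den).carrier at f
    change ∀ x, (v1.den.seqL v2.den).lab (f x) = u.den.lab x at hf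
    have E1 : ∀ x, u.den.lab (f.symm x) = (v1.den.seqL v2.den).lab x := fun x => by
      rw [← hf, f.apply_symm_apply]
    obtain ⟨u1, u2, h1, h2, he⟩ := cut_seq g u (fun x => ∃ y, f x = inS v1.den v2.den y) (by
      rintro x y ⟨x', hx⟩ hy
      rcases seqL_cases (f y) with ⟨y', hy'⟩ | ⟨y', hy'⟩
      · exact (hy ⟨y', hy'⟩).elim
      · rw [← f.lt_iff_lt, lt_iff_le_not_ge, hx, hy']; constructor <;> simp)
    have e1 : Emb v1.den u.den (fun x => ∃ y, f x = inS v1.den v2.den y) := by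
      refine ⟨fun x => f.symm (inS v1.den v2.den x), ?_, ?_, ?_⟩
      · intro x y; exact f.symm.le_iff_le.trans (by simp)
      · intro x; exact (E1 _).trans rfl
      · intro y
        constructor
        · rintro ⟨x, hx⟩; exact ⟨x, (congrArg f.symm hx.symm).trans (f.symm_apply_apply y)⟩
        · rintro ⟨x, rfl⟩; exact ⟨x, by simp⟩
    have e2 : Emb v2.den u.den (fun x => ¬ ∃ y, f x = inS v1.den v2.den y) := by
      refine ⟨fun x => f.symm (inS' v1.den v2.den x), ?_, ?_, ?_⟩
      · intro x y; exact f.symm.le_iff_le.trans (by simp)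
      · intro x; exact (E1 _).trans rfl
      · intro y
        constructor
        · intro hy
          rcases seqL_cases (f y) with ⟨x, hx⟩ | ⟨x, hx⟩
          · exact (hy ⟨x, hx⟩).elim
          · exact ⟨x, (congrArg f.symm hx.symm).trans (f.symm_apply_apply y)⟩
        · rintro ⟨x, rfl⟩ ⟨z, hz⟩; have hz := (f.apply_symm_apply _).symm.trans hz; simp at hz
    rw [he, ih1 u1 (h1.iso e1), ih2 u2 (h2.iso e2)]; rfl
  | par v1 v2 ih1 ih2 =>
    rintro u ⟨f, hf⟩
    change u.den.carrier ≃o (v1.den.parL v2.den).carrier at f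
    change ∀ x, (v1.den.parL v2.den).lab (f x) = u.den.lab x at hf
    have E1 : ∀ x, u.den.lab (f.symm x) = (v1.den.parL v2.den).lab x := fun x => by
      rw [← hf, f.apply_symm_apply]
    obtain ⟨u1, u2, h1, h2, he⟩ := cut_par g u (fun x => ∃ y, f x = inP v1.den v2.den y) (by
      rintro x y ⟨x', hx⟩ hy
      rcases parL_cases (f y) with ⟨y', hy'⟩ | ⟨y', hy'⟩
      · exact (hy ⟨y', hy'⟩).elim
      · rw [← f.le_iff_le, ← f.le_iff_le (x := y), hx, hy']; constructor <;> simp)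
    have e1 : Emb v1.den u.den (fun x => ∃ y, f x = inP v1.den v2.den y) := by
      refine ⟨fun x => f.symm (inP v1.den v2.den x), ?_, ?_, ?_⟩
      · intro x y; exact f.symm.le_iff_le.trans (by simp)
      · intro x; exact (E1 _).trans rfl
      · intro y
        constructor
        · rintro ⟨x, hx⟩; exact ⟨x, (congrArg f.symm hx.symm).trans (f.symm_apply_apply y)⟩
        · rintro ⟨x, rfl⟩; exact ⟨x, by simp⟩
    have e2 : Emb v2.den u.den (fun x => ¬ ∃ y, f x = inP v1.den v2.den y) := by
      refine ⟨fun x => f.symm (inP' v1.den v2.den x), ?_, ?_, ?_⟩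
      · intro x y; exact f.symm.le_iff_le.trans (by simp)
      · intro x; exact (E1 _).trans rfl
      · intro y
        constructor
        · intro hy
          rcases parL_cases (f y) with ⟨x, hx⟩ | ⟨x, hx⟩
          · exact (hy ⟨x, hx⟩).elim
          · exact ⟨x, (congrArg f.symm hx.symm).trans (f.symm_apply_apply y)⟩
        · rintro ⟨x, rfl⟩ ⟨z, hz⟩; have hz := (f.apply_symm_apply _).symm.trans hz; simp at hz
    rw [he, ih1 u1 (h1.iso e1), ih2 u2 (h2.iso e2)]; rfl

/-- Freeness of series-parallel pomsets. -/
theorem ev_eq_of_pom_eq {u v : SPT A} (h : u.pom = v.pom) : u.ev g = v.ev g :=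
  ev_iso g v u (Quotient.exact h)

/-! syntactic contexts -/

inductive SCtx (A : Type) : Type
  | hole : SCtx A
  | seqL : SPT A → SCtx A → SCtx A
  | seqR : SCtx A → SPT A → SCtx A
  | par : SPT A → SCtx A → SCtx A

def SCtx.pom : SCtx A → Pomset (Option A)
  | .hole => Pomset.single none
  | .seqL u c => (u.pom.map some).seq c.pom
  | .seqR c u => c.pom.seq (u.pom.map some)
  | .par u c => (u.pom.map some).par c.pom

def SCtx.app : SCtx A → Pomset A → Pomset A
  | .hole, V => V
  | .seqL u c, V => u.pom.seq (c.app V)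
  | .seqR c u, V => (c.app V).seq u.pom
  | .par u c, V => u.pom.par (c.app V)

def SCtx.appT : SCtx A → SPT A → SPT A
  | .hole, v => v
  | .seqL u c, v => .seq u (c.appT v)
  | .seqR c u, v => .seq (c.appT v) u
  | .par u c, v => .par u (c.appT v)

def SCtx.act : SCtx A → M → M
  | .hole, m => m
  | .seqL u c, m => BiMon.sq (u.ev g) (c.act m)
  | .seqR c u, m => BiMon.sq (c.act m) (u.ev g)
  | .par u c, m => BiMon.pr (u.ev g) (c.act m)

theorem SCtx.ev_appT (c : SCtx A) (v : SPT A) : (c.appT v).ev g = c.act g (v.ev g) := by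
  induction c with
  | hole => rfl
  | seqL u c ih => simp [SCtx.appT, SCtx.act, SPT.ev, ih]
  | seqR c u ih => simp [SCtx.appT, SCtx.act, SPT.ev, ih]
  | par u c ih => simp [SCtx.appT, SCtx.act, SPT.ev, ih]

theorem SCtx.pom_appT (c : SCtx A) (v : SPT A) : (c.appT v).pom = c.app v.pom := by
  induction c with
  | hole => rfl
  | seqL u c ih => simp [SCtx.appT, SCtx.app, ih]
  | seqR c u ih => simp [SCtx.appT, SCtx.app, ih]
  | par u c ih => simp [SCtx.appT, SCtx.app, ih]

theorem map_seq {B : Type} (f : A → B) (U V : Pomset A) :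
    (U.seq V).map f = (U.map f).seq (V.map f) := by
  induction U using Quotient.ind with | _ u
  induction V using Quotient.ind with | _ v
  refine Quotient.sound ⟨OrderIso.refl _, fun x => ?_⟩
  rcases seqL_cases x with ⟨x, rfl⟩ | ⟨x, rfl⟩ <;> rfl

theorem map_par {B : Type} (f : A → B) (U V : Pomset A) :
    (U.par V).map f = (U.map f).par (V.map f) := by
  induction U using Quotient.ind with | _ u
  induction V using Quotient.ind with | _ v
  refine Quotient.sound ⟨OrderIso.refl _, fun x => ?_⟩
  rcases parL_cases x with ⟨x, rfl⟩ | ⟨x, rfl⟩ <;> rfl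

theorem SPT.pom_map {B : Type} (f : A → B) (u : SPT A) : (u.map f).pom = u.pom.map f := by
  induction u with
  | one => exact Quotient.sound ⟨OrderIso.refl _, fun x => x.elim0⟩
  | var a => rfl
  | seq u v hu hv => simp [SPT.map, hu, hv, map_seq]
  | par u v hu hv => simp [SPT.map, hu, hv, map_par]

theorem isCtx_mk {c : LPoset (Option A)} : Pomset.IsCtx (Quotient.mk _ c) ↔ c.uniqueStarL := Iff.rfl

theorem isCtx_seq_left {C : Pomset (Option A)} (V : Pomset A) (hC : C.IsCtx) :
    ((V.map some).seq C).IsCtx := by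
  induction C using Quotient.ind with | _ c
  induction V using Quotient.ind with | _ v
  exact uniqueStar_seqL.2 (Or.inr ⟨noStar_map v, hC⟩)

theorem isCtx_seq_right {C : Pomset (Option A)} (V : Pomset A) (hC : C.IsCtx) :
    (C.seq (V.map some)).IsCtx := by
  induction C using Quotient.ind with | _ c
  induction V using Quotient.ind with | _ v
  exact uniqueStar_seqL.2 (Or.inl ⟨hC, noStar_map v⟩)

theorem isCtx_par_left {C : Pomset (Option A)} (V : Pomset A) (hC : C.IsCtx) :
    ((V.map some).par C).IsCtx := by
  induction C using Quotient.ind with | _ c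
  induction V using Quotient.ind with | _ v
  exact uniqueStar_parL.2 (Or.inr ⟨noStar_map v, hC⟩)

theorem isSP_map {V : Pomset A} (h : V.IsSP) : (V.map (some : A → Option A)).IsSP := by
  obtain ⟨u, rfl⟩ := isSP_iff.1 h
  rw [← SPT.pom_map]; exact SPT.isSP _

theorem isSPCtx_star : (Pomset.single (none : Option A)).IsSPCtx :=
  ⟨⟨PUnit.unit, rfl, fun _ _ => rfl⟩, .single _⟩

theorem isSPCtx_seq_left {C : Pomset (Option A)} {V : Pomset A} (hV : V.IsSP) (hC : C.IsSPCtx) :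
    ((V.map some).seq C).IsSPCtx := ⟨isCtx_seq_left V hC.1, .seq (isSP_map hV) hC.2⟩

theorem isSPCtx_seq_right {C : Pomset (Option A)} {V : Pomset A} (hV : V.IsSP) (hC : C.IsSPCtx) :
    (C.seq (V.map some)).IsSPCtx := ⟨isCtx_seq_right V hC.1, .seq hC.2 (isSP_map hV)⟩

theorem isSPCtx_par_left {C : Pomset (Option A)} {V : Pomset A} (hV : V.IsSP) (hC : C.IsSPCtx) :
    ((V.map some).par C).IsSPCtx := ⟨isCtx_par_left V hC.1, .par (isSP_map hV) hC.2⟩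

theorem SCtx.isSPCtx (c : SCtx A) : c.pom.IsSPCtx := by
  induction c with
  | hole => exact isSPCtx_star
  | seqL u c ih => exact isSPCtx_seq_left u.isSP ih
  | seqR c u ih => exact isSPCtx_seq_right u.isSP ih
  | par u c ih => exact isSPCtx_par_left u.isSP ih

theorem SCtx.ins_pom (c : SCtx A) (V : Pomset A) : c.pom.ins V = c.app V := by
  induction c with
  | hole => exact Pomset.ins_star V
  | seqL u c ih => simp only [SCtx.pom, SCtx.app, ins_seq_left c.isSPCtx.1, ih]
  | seqR c u ih => simp only [SCtx.pom, SCtx.app, ins_seq_right c.isSPCtx.1, ih]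
  | par u c ih => simp only [SCtx.pom, SCtx.app, ins_par_left c.isSPCtx.1, ih]

theorem noStar_decomp (c : SPT (Option A)) (h : c.den.noStarL) :
    ∃ u : SPT A, u.pom.map some = c.pom := by
  induction c with
  | one => exact ⟨.one, by rw [← SPT.pom_map]; rfl⟩
  | var a =>
    cases a with
    | none => exact (h PUnit.unit rfl).elim
    | some a => exact ⟨.var a, rfl⟩
  | seq a b iha ihb =>
    obtain ⟨u, hu⟩ := iha (fun x => h (inS a.den b.den x))
    obtain ⟨v, hv⟩ := ihb (fun x => h (inS' a.den b.den x))
    exact ⟨.seq u v, by rw [SPT.pom_seq, SPT.pom_seq, map_seq, hu, hv]⟩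
  | par a b iha ihb =>
    obtain ⟨u, hu⟩ := iha (fun x => h (inP a.den b.den x))
    obtain ⟨v, hv⟩ := ihb (fun x => h (inP' a.den b.den x))
    exact ⟨.par u v, by rw [SPT.pom_par, SPT.pom_par, map_par, hu, hv]⟩

theorem ctx_decomp (c : SPT (Option A)) (h : c.den.uniqueStarL) :
    ∃ s : SCtx A, s.pom = c.pom := by
  induction c with
  | one => obtain ⟨x, -⟩ := h; exact x.elim0
  | var a =>
    obtain ⟨x, hx, -⟩ := h
    have : a = none := hx
    subst this
    exact ⟨.hole, rfl⟩
  | seq a b iha ihb =>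
    rcases uniqueStar_seqL.1 h with ⟨h1, h2⟩ | ⟨h1, h2⟩
    · obtain ⟨s, hs⟩ := iha h1
      obtain ⟨v, hv⟩ := noStar_decomp b h2
      exact ⟨.seqR s v, by rw [SCtx.pom, hs, hv]; rfl⟩
    · obtain ⟨s, hs⟩ := ihb h2
      obtain ⟨v, hv⟩ := noStar_decomp a h1
      exact ⟨.seqL v s, by rw [SCtx.pom, hs, hv]; rfl⟩
  | par a b iha ihb =>
    rcases uniqueStar_parL.1 h with ⟨h1, h2⟩ | ⟨h1, h2⟩
    · obtain ⟨s, hs⟩ := iha h1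
      obtain ⟨v, hv⟩ := noStar_decomp b h2
      exact ⟨.par v s, by rw [SCtx.pom, hs, hv, Pomset.par_comm]; rfl⟩
    · obtain ⟨s, hs⟩ := ihb h2
      obtain ⟨v, hv⟩ := noStar_decomp a h1
      exact ⟨.par v s, by rw [SCtx.pom, hs, hv]; rfl⟩

theorem isSPCtx_decomp {C : Pomset (Option A)} (h : C.IsSPCtx) :
    ∃ s : SCtx A, ∀ V, C.ins V = s.app V := by
  obtain ⟨c, rfl⟩ := isSP_iff.1 h.2
  obtain ⟨s, hs⟩ := ctx_decomp c h.1
  exact ⟨s, fun V => by rw [← hs, SCtx.ins_pom]⟩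

/-! syntactic languages -/

def slpow (L : Set (SPT A)) : ℕ → Set (SPT A)
  | 0 => {SPT.one}
  | n + 1 => {w | ∃ u ∈ slpow L n, ∃ v ∈ L, w = .seq u v}

def Term.sl : Term A → Set (SPT A)
  | .zero => ∅
  | .one => {.one}
  | .var a => {.var a}
  | .add e f => e.sl ∪ f.sl
  | .seq e f => {w | ∃ u ∈ e.sl, ∃ v ∈ f.sl, w = .seq u v}
  | .par e f => {w | ∃ u ∈ e.sl, ∃ v ∈ f.sl, w = .par u v}
  | .star e => {w | ∃ n, w ∈ slpow e.sl n}

theorem mem_lang_iff (e : Term A) : ∀ W : Pomset A, W ∈ e.lang ↔ ∃ u ∈ e.sl, u.pom = W := by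
  induction e with
  | zero => intro W; simp [Term.lang, Term.sl]
  | one => intro W; simp [Term.lang, Term.sl, eq_comm]
  | var a => intro W; simp [Term.lang, Term.sl, eq_comm]
  | add e f he hf =>
    intro W
    simp only [Term.lang, Term.sl, Set.mem_union, he, hf, or_and_right, exists_or]
  | seq e f he hf =>
    intro W
    constructor
    · rintro ⟨U, hU, V, hV, rfl⟩
      obtain ⟨u, hu, rfl⟩ := (he U).1 hU
      obtain ⟨v, hv, rfl⟩ := (hf V).1 hV
      exact ⟨.seq u v, ⟨u, hu, v, hv, rfl⟩, rfl⟩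
    · rintro ⟨w, ⟨u, hu, v, hv, rfl⟩, rfl⟩
      exact ⟨u.pom, (he _).2 ⟨u, hu, rfl⟩, v.pom, (hf _).2 ⟨v, hv, rfl⟩, rfl⟩
  | par e f he hf =>
    intro W
    constructor
    · rintro ⟨U, hU, V, hV, rfl⟩
      obtain ⟨u, hu, rfl⟩ := (he U).1 hU
      obtain ⟨v, hv, rfl⟩ := (hf V).1 hV
      exact ⟨.par u v, ⟨u, hu, v, hv, rfl⟩, rfl⟩
    · rintro ⟨w, ⟨u, hu, v, hv, rfl⟩, rfl⟩
      exact ⟨u.pom, (he _).2 ⟨u, hu, rfl⟩, v.pom, (hf _).2 ⟨v, hv, rfl⟩, rfl⟩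
  | star e he =>
    have key : ∀ n W, W ∈ e.lang.pow n ↔ ∃ u ∈ slpow e.sl n, u.pom = W := by
      intro n
      induction n with
      | zero => intro W; simp [Lang.pow, slpow, eq_comm]
      | succ n ih =>
        intro W
        constructor
        · rintro ⟨U, hU, V, hV, rfl⟩
          obtain ⟨u, hu, rfl⟩ := (ih U).1 hU
          obtain ⟨v, hv, rfl⟩ := (he V).1 hV
          exact ⟨.seq u v, ⟨u, hu, v, hv, rfl⟩, rfl⟩
        · rintro ⟨w, ⟨u, hu, v, hv, rfl⟩, rfl⟩
          exact ⟨u.pom, (ih _).2 ⟨u, hu, rfl⟩, v.pom, (he _).2 ⟨v, hv, rfl⟩, rfl⟩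
    intro W
    simp only [Term.lang, Lang.star, Set.mem_iUnion, key, Term.sl, Set.mem_ofPred_eq]
    constructor
    · rintro ⟨n, u, h1, h2⟩; exact ⟨u, ⟨n, h1⟩, h2⟩
    · rintro ⟨u, ⟨n, h1⟩, h2⟩; exact ⟨n, u, h1, h2⟩

theorem lang_isSP (e : Term A) {W : Pomset A} (h : W ∈ e.lang) : W.IsSP := by
  obtain ⟨u, -, rfl⟩ := (mem_lang_iff e W).1 h; exact u.isSP

end PartB

end CKAH


namespace CKAH

open Classical

section PartC

variable {A : Type} {H : HypSet A}

theorem cl_trans {L K : Lang A} (h : L ⊆ cl H K) {U : Pomset A} (hU : U ∈ cl H L) : U ∈ cl H K := by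
  change closure H L U at hU
  induction hU with
  | base hU => exact h hU
  | step hef hC _ hU ih => exact closure.step hef hC ih hU

theorem subset_cl (L : Lang A) : L ⊆ cl H L := fun _ h => closure.base h

theorem cl_mono {L K : Lang A} (h : L ⊆ K) : cl H L ⊆ cl H K :=
  fun _ hU => cl_trans (h.trans (subset_cl K)) hU

theorem cl_eq_iff {L K : Lang A} : cl H L = cl H K ↔ L ⊆ cl H K ∧ K ⊆ cl H L := by
  constructor
  · intro h; exact ⟨h ▸ subset_cl L, h ▸ subset_cl K⟩
  · rintro ⟨h1, h2⟩
    exact Set.Subset.antisymm (fun _ => cl_trans h1) (fun _ => cl_trans h2)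

def SPL (L : Lang A) : Prop := ∀ U ∈ L, U.IsSP

theorem SCtx.app_isSP (s : SCtx A) {V : Pomset A} (h : V.IsSP) : (s.app V).IsSP := by
  obtain ⟨v, rfl⟩ := isSP_iff.1 h
  rw [← SCtx.pom_appT]; exact SPT.isSP _

theorem cl_isSP {L : Lang A} (hL : SPL L) : SPL (cl H L) := by
  intro U hU
  change closure H L U at hU
  induction hU with
  | base hU => exact hL _ hU
  | @step e f hef C hC _ U hU ih =>
    obtain ⟨s, hs⟩ := isSPCtx_decomp hC
    rw [hs]; exact s.app_isSP (lang_isSP e hU)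

theorem cl_seq_right {L K : Lang A} {V : Pomset A} (hV : V.IsSP)
    (h : ∀ U ∈ L, U.seq V ∈ cl H K) {U : Pomset A} (hU : U ∈ cl H L) : U.seq V ∈ cl H K := by
  change closure H L U at hU
  induction hU with
  | base hU => exact h _ hU
  | step hef hC _ hU ih =>
    rw [← ins_seq_right hC.1]
    exact closure.step hef (isSPCtx_seq_right hV hC)
      (fun V' hV' => by rw [ins_seq_right hC.1]; exact ih V' hV') hU

theorem cl_seq_left {L K : Lang A} {V : Pomset A} (hV : V.IsSP)
    (h : ∀ U ∈ L, V.seq U ∈ cl H K) {U : Pomset A} (hU : U ∈ cl H L) : V.seq U ∈ cl H K := by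
  change closure H L U at hU
  induction hU with
  | base hU => exact h _ hU
  | step hef hC _ hU ih =>
    rw [← ins_seq_left hC.1]
    exact closure.step hef (isSPCtx_seq_left hV hC)
      (fun V' hV' => by rw [ins_seq_left hC.1]; exact ih V' hV') hU

theorem cl_par_left {L K : Lang A} {V : Pomset A} (hV : V.IsSP)
    (h : ∀ U ∈ L, V.par U ∈ cl H K) {U : Pomset A} (hU : U ∈ cl H L) : V.par U ∈ cl H K := by
  change closure H L U at hU
  induction hU with
  | base hU => exact h _ hU
  | step hef hC _ hU ih =>
    rw [← ins_par_left hC.1]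
    exact closure.step hef (isSPCtx_par_left hV hC)
      (fun V' hV' => by rw [ins_par_left hC.1]; exact ih V' hV') hU

theorem cl_seq {L K : Lang A} (hL : SPL L) (hK : SPL K) {U V : Pomset A}
    (hU : U ∈ cl H L) (hV : V ∈ cl H K) : U.seq V ∈ cl H (L.seq K) :=
  cl_seq_right (cl_isSP hK V hV) (fun U' hU' => cl_seq_left (hL _ hU')
    (fun V' hV' => subset_cl (Lang.seq L K) ⟨U', hU', V', hV', rfl⟩) hV) hU

theorem cl_par {L K : Lang A} (hL : SPL L) (hK : SPL K) {U V : Pomset A}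
    (hU : U ∈ cl H L) (hV : V ∈ cl H K) : U.par V ∈ cl H (L.par K) := by
  rw [Pomset.par_comm]
  exact cl_par_left (cl_isSP hK V hV) (fun U' hU' => by
    rw [Pomset.par_comm]
    exact cl_par_left (hL _ hU') (fun V' hV' => subset_cl (Lang.par L K) ⟨U', hU', V', hV', rfl⟩) hV) hU

theorem spl_lang (e : Term A) : SPL e.lang := fun _ h => lang_isSP e h

theorem Lang.seq_assoc (L K J : Lang A) : (L.seq K).seq J = L.seq (K.seq J) := by
  ext W
  constructor
  · rintro ⟨_, ⟨U, hU, V, hV, rfl⟩, X, hX, rfl⟩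
    exact ⟨U, hU, _, ⟨V, hV, X, hX, rfl⟩, Pomset.seq_assoc _ _ _⟩
  · rintro ⟨U, hU, _, ⟨V, hV, X, hX, rfl⟩, rfl⟩
    exact ⟨_, ⟨U, hU, V, hV, rfl⟩, X, hX, (Pomset.seq_assoc _ _ _).symm⟩

theorem Lang.one_seq (L : Lang A) : Lang.seq {Pomset.empty A} L = L := by
  ext W
  constructor
  · rintro ⟨_, rfl, V, hV, rfl⟩; rwa [Pomset.one_seq]
  · intro h; exact ⟨_, rfl, W, h, (Pomset.one_seq W).symm⟩

theorem Lang.seq_one (L : Lang A) : Lang.seq L {Pomset.empty A} = L := by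
  ext W
  constructor
  · rintro ⟨V, hV, _, rfl, rfl⟩; rwa [Pomset.seq_one]
  · intro h; exact ⟨W, h, _, rfl, (Pomset.seq_one W).symm⟩

theorem Lang.pow_comm (L : Lang A) (n : ℕ) : L.seq (L.pow n) = L.pow (n + 1) := by
  induction n with
  | zero => simp only [Lang.pow]; rw [Lang.seq_one, Lang.one_seq]
  | succ n ih =>
    show L.seq ((L.pow n).seq L) = (L.pow (n+1)).seq L
    rw [← Lang.seq_assoc, ih]

theorem spl_pow {L : Lang A} (h : SPL L) (n : ℕ) : SPL (L.pow n) := by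
  induction n with
  | zero => rintro U rfl; exact .empty
  | succ n ih => rintro _ ⟨U, hU, V, hV, rfl⟩; exact .seq (ih _ hU) (h _ hV)

theorem pow_le {L K : Lang A} (hK : SPL K) (h : L ⊆ cl H K) (n : ℕ) :
    L.pow n ⊆ cl H (K.pow n) := by
  induction n with
  | zero => exact subset_cl _
  | succ n ih =>
    rintro _ ⟨U, hU, V, hV, rfl⟩
    exact cl_seq (spl_pow hK n) hK (ih hU) (h hV)

theorem star_le {L K : Lang A} (hK : SPL K) (h : L ⊆ cl H K) :
    L.star ⊆ cl H K.star := by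
  intro U hU
  obtain ⟨n, hn⟩ := Set.mem_iUnion.1 hU
  exact cl_mono (Set.subset_iUnion _ n) (pow_le hK h n hn)

theorem starL_eq (L : Lang A) : {Pomset.empty A} ∪ L.seq L.star = L.star := by
  ext W
  constructor
  · rintro (h | ⟨U, hU, V, hV, rfl⟩)
    · exact Set.mem_iUnion.2 ⟨0, h⟩
    · obtain ⟨n, hn⟩ := Set.mem_iUnion.1 hV
      refine Set.mem_iUnion.2 ⟨n + 1, ?_⟩
      rw [← Lang.pow_comm]; exact ⟨U, hU, V, hn, rfl⟩
  · intro h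
    obtain ⟨n, hn⟩ := Set.mem_iUnion.1 h
    cases n with
    | zero => exact Or.inl hn
    | succ n =>
      rw [← Lang.pow_comm] at hn
      obtain ⟨U, hU, V, hV, rfl⟩ := hn
      exact Or.inr ⟨U, hU, V, Set.mem_iUnion.2 ⟨n, hV⟩, rfl⟩

theorem starR_eq (L : Lang A) : {Pomset.empty A} ∪ Lang.seq L.star L = L.star := by
  ext W
  constructor
  · rintro (h | ⟨U, hU, V, hV, rfl⟩)
    · exact Set.mem_iUnion.2 ⟨0, h⟩
    · obtain ⟨n, hn⟩ := Set.mem_iUnion.1 hU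
      exact Set.mem_iUnion.2 ⟨n + 1, ⟨U, hn, V, hV, rfl⟩⟩
  · intro h
    obtain ⟨n, hn⟩ := Set.mem_iUnion.1 h
    cases n with
    | zero => exact Or.inl hn
    | succ n =>
      obtain ⟨U, hU, V, hV, rfl⟩ := hn
      exact Or.inr ⟨U, Set.mem_iUnion.2 ⟨n, hU⟩, V, hV, rfl⟩

theorem soundness {e f : Term A} (h : CongH H e f) : cl H e.lang = cl H f.lang := by
  have ceq : ∀ {L K : Lang A}, L = K → cl H L = cl H K := fun h => by rw [h]
  induction h with
  | refl e => rfl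
  | symm _ ih => exact ih.symm
  | trans _ _ ih1 ih2 => exact ih1.trans ih2
  | @addCong e e' f f' _ _ ih1 ih2 =>
    rw [cl_eq_iff] at *
    constructor
    · rintro U (hU | hU)
      · exact cl_mono Set.subset_union_left (ih1.1 hU)
      · exact cl_mono Set.subset_union_right (ih2.1 hU)
    · rintro U (hU | hU)
      · exact cl_mono Set.subset_union_left (ih1.2 hU)
      · exact cl_mono Set.subset_union_right (ih2.2 hU)
  | seqCong _ _ ih1 ih2 =>
    rw [cl_eq_iff] at *
    constructor
    · rintro _ ⟨U, hU, V, hV, rfl⟩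
      exact cl_seq (spl_lang _) (spl_lang _) (ih1.1 hU) (ih2.1 hV)
    · rintro _ ⟨U, hU, V, hV, rfl⟩
      exact cl_seq (spl_lang _) (spl_lang _) (ih1.2 hU) (ih2.2 hV)
  | parCong _ _ ih1 ih2 =>
    rw [cl_eq_iff] at *
    constructor
    · rintro _ ⟨U, hU, V, hV, rfl⟩
      exact cl_par (spl_lang _) (spl_lang _) (ih1.1 hU) (ih2.1 hV)
    · rintro _ ⟨U, hU, V, hV, rfl⟩
      exact cl_par (spl_lang _) (spl_lang _) (ih1.2 hU) (ih2.2 hV)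
  | starCong _ ih =>
    rw [cl_eq_iff] at *
    exact ⟨star_le (spl_lang _) ih.1, star_le (spl_lang _) ih.2⟩
  | addZero e => exact ceq (Set.union_empty _)
  | addIdem e => exact ceq (Set.union_self _)
  | addComm e f => exact ceq (Set.union_comm _ _)
  | addAssoc e f g => exact ceq (Set.union_assoc _ _ _).symm
  | seqAssoc e f g => exact ceq (Lang.seq_assoc _ _ _).symm
  | seqDistL e f g =>
    refine ceq (Set.ext fun W => ⟨?_, ?_⟩)
    · rintro ⟨U, hU, V, hV | hV, rfl⟩
      · exact Or.inl ⟨U, hU, V, hV, rfl⟩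
      · exact Or.inr ⟨U, hU, V, hV, rfl⟩
    · rintro (⟨U, hU, V, hV, rfl⟩ | ⟨U, hU, V, hV, rfl⟩)
      · exact ⟨U, hU, V, Or.inl hV, rfl⟩
      · exact ⟨U, hU, V, Or.inr hV, rfl⟩
  | seqDistR e f g =>
    refine ceq (Set.ext fun W => ⟨?_, ?_⟩)
    · rintro ⟨U, hU | hU, V, hV, rfl⟩
      · exact Or.inl ⟨U, hU, V, hV, rfl⟩
      · exact Or.inr ⟨U, hU, V, hV, rfl⟩
    · rintro (⟨U, hU, V, hV, rfl⟩ | ⟨U, hU, V, hV, rfl⟩)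
      · exact ⟨U, Or.inl hU, V, hV, rfl⟩
      · exact ⟨U, Or.inr hU, V, hV, rfl⟩
  | seqOneR e => exact ceq (Lang.seq_one _)
  | seqOneL e => exact ceq (Lang.one_seq _)
  | seqZeroR e =>
    refine ceq (Set.ext fun W => ⟨?_, ?_⟩)
    · rintro ⟨U, hU, V, hV, rfl⟩; exact hV.elim
    · intro h; exact h.elim
  | seqZeroL e =>
    refine ceq (Set.ext fun W => ⟨?_, ?_⟩)
    · rintro ⟨U, hU, V, hV, rfl⟩; exact hU.elim
    · intro h; exact h.elim
  | parComm e f =>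
    refine ceq (Set.ext fun W => ⟨?_, ?_⟩)
    · rintro ⟨U, hU, V, hV, rfl⟩; exact ⟨V, hV, U, hU, Pomset.par_comm _ _⟩
    · rintro ⟨U, hU, V, hV, rfl⟩; exact ⟨V, hV, U, hU, Pomset.par_comm _ _⟩
  | parOne e =>
    refine ceq (Set.ext fun W => ⟨?_, ?_⟩)
    · rintro ⟨U, hU, _, rfl, rfl⟩; rwa [Pomset.par_one]
    · intro h; exact ⟨W, h, _, rfl, (Pomset.par_one W).symm⟩
  | parZero e =>
    refine ceq (Set.ext fun W => ⟨?_, ?_⟩)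
    · rintro ⟨U, hU, V, hV, rfl⟩; exact hV.elim
    · intro h; exact h.elim
  | parAssoc e f g =>
    refine ceq (Set.ext fun W => ⟨?_, ?_⟩)
    · rintro ⟨U, hU, _, ⟨V, hV, X, hX, rfl⟩, rfl⟩
      exact ⟨_, ⟨U, hU, V, hV, rfl⟩, X, hX, (Pomset.par_assoc _ _ _).symm⟩
    · rintro ⟨_, ⟨U, hU, V, hV, rfl⟩, X, hX, rfl⟩
      exact ⟨U, hU, _, ⟨V, hV, X, hX, rfl⟩, Pomset.par_assoc _ _ _⟩
  | parDist e f g =>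
    refine ceq (Set.ext fun W => ⟨?_, ?_⟩)
    · rintro ⟨U, hU, V, hV | hV, rfl⟩
      · exact Or.inl ⟨U, hU, V, hV, rfl⟩
      · exact Or.inr ⟨U, hU, V, hV, rfl⟩
    · rintro (⟨U, hU, V, hV, rfl⟩ | ⟨U, hU, V, hV, rfl⟩)
      · exact ⟨U, hU, V, Or.inl hV, rfl⟩
      · exact ⟨U, hU, V, Or.inr hV, rfl⟩
  | starUnfoldL e => exact ceq (starL_eq _)
  | starUnfoldR e => exact ceq (starR_eq _)
  | @lfpL e f g _ ih =>
    rw [cl_eq_iff] at *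
    refine ⟨?_, fun U hU => subset_cl _ (Or.inr hU)⟩
    have key : ∀ n, ∀ U ∈ f.lang.pow n, ∀ V ∈ cl H g.lang, U.seq V ∈ cl H g.lang := by
      intro n
      induction n with
      | zero => rintro _ rfl V hV; rwa [Pomset.one_seq]
      | succ n ihn =>
        rintro _ ⟨U, hU, X, hX, rfl⟩ V hV
        rw [Pomset.seq_assoc]
        refine ihn U hU _ ?_
        exact cl_trans (fun W hW => ih.1 (Or.inl (Or.inr hW)))
          (cl_seq (spl_lang f) (spl_lang g) (subset_cl _ hX) hV)
    rintro W (⟨U, hU, V, hV, rfl⟩ | hW)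
    · obtain ⟨n, hn⟩ := Set.mem_iUnion.1 hU
      exact key n U hn V (ih.1 (Or.inl (Or.inl hV)))
    · exact subset_cl _ hW
  | @lfpR e f g _ ih =>
    rw [cl_eq_iff] at *
    refine ⟨?_, fun U hU => subset_cl _ (Or.inr hU)⟩
    have key : ∀ n, ∀ V ∈ g.lang.pow n, ∀ U ∈ cl H f.lang, U.seq V ∈ cl H f.lang := by
      intro n
      induction n with
      | zero => rintro _ rfl V hV; rwa [Pomset.seq_one]
      | succ n ihn =>
        rintro _ ⟨V, hV, X, hX, rfl⟩ U hU
        rw [← Pomset.seq_assoc]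
        exact cl_trans (fun W hW => ih.1 (Or.inl (Or.inr hW)))
          (cl_seq (spl_lang f) (spl_lang g) (ihn V hV U hU) (subset_cl _ hX))
    rintro W (⟨U, hU, V, hV, rfl⟩ | hW)
    · obtain ⟨n, hn⟩ := Set.mem_iUnion.1 hV
      exact key n V hn U (ih.1 (Or.inl (Or.inl hU)))
    · exact subset_cl _ hW
  | @hyp e f hef =>
    rw [cl_eq_iff]
    refine ⟨?_, fun U hU => subset_cl _ (Or.inr hU)⟩
    rintro U (hU | hU)
    · have := closure.step (L := f.lang) hef isSPCtx_star
        (fun V hV => by rw [Pomset.ins_star]; exact closure.base hV) hU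
      rw [Pomset.ins_star] at this; exact this
    · exact subset_cl _ hU

end PartC

end CKAH

namespace CKAH

open Classical
open Computability

/-- Kleene algebras with a parallel operator satisfying the exchange law. -/
class PKA (K : Type) extends KleeneAlgebra K where
  pp : K → K → K
  pp_assoc : ∀ a b c, pp (pp a b) c = pp a (pp b c)
  pp_comm : ∀ a b, pp a b = pp b a
  pp_one : ∀ a, pp a 1 = a
  pp_zero : ∀ a, pp a 0 = 0
  pp_add : ∀ a b c, pp a (b + c) = pp a b + pp a c
  pp_exch : ∀ a b c d, pp a b * pp c d ≤ pp (a * c) (b * d)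

namespace PKA

variable {K : Type} [PKA K]

theorem one_pp (a : K) : pp 1 a = a := by rw [pp_comm, pp_one]

theorem zero_pp (a : K) : pp 0 a = 0 := by rw [pp_comm, pp_zero]

theorem add_pp (a b c : K) : pp (a + b) c = pp a c + pp b c := by
  rw [pp_comm, pp_add, pp_comm c a, pp_comm c b]

theorem pp_mono {a b c d : K} (h : a ≤ b) (h' : c ≤ d) : pp a c ≤ pp b d := by
  have h1 : a + b = b := add_eq_right_iff_le.2 h
  have h2 : c + d = d := add_eq_right_iff_le.2 h'
  rw [← h1, ← h2, add_pp, pp_add]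
  exact le_trans le_self_add le_self_add

theorem pp_mid (a b c d : K) : pp (pp a b) (pp c d) = pp (pp a c) (pp b d) := by
  rw [pp_assoc, ← pp_assoc b, pp_comm b c, pp_assoc c, ← pp_assoc]

theorem bot_le' (a : K) : 0 ≤ a := zero_le

end PKA

open PKA

section ssum

variable {K : Type} [PKA K] {ι : Type} [Finite ι]

noncomputable def ssum (p : ι → Prop) (f : ι → K) : K :=
  ∑ i ∈ (Set.toFinite {i | p i}).toFinset, f i

theorem ssum_ind {p : ι → Prop} {f : ι → K} (P : K → Prop) (h0 : P 0)
    (ha : ∀ a b, P a → P b → P (a + b)) (hf : ∀ i, p i → P (f i)) : P (ssum p f) := by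
  refine Finset.sum_induction _ P ha h0 ?_
  intro i hi
  exact hf i (by simpa using hi)

theorem ssum_le {p : ι → Prop} {f : ι → K} {z : K} (h : ∀ i, p i → f i ≤ z) : ssum p f ≤ z :=
  ssum_ind (fun x => x ≤ z) (bot_le' z) (fun _ _ h1 h2 => add_le h1 h2) h

theorem le_ssum {p : ι → Prop} (f : ι → K) {i : ι} (h : p i) : f i ≤ ssum p f := by
  unfold ssum
  exact Finset.single_le_sum (f := f) (fun _ _ => bot_le' _) (by simpa using h)

theorem ssum_mul_le {p : ι → Prop} {f : ι → K} {b z : K} (h : ∀ i, p i → f i * b ≤ z) :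
    ssum p f * b ≤ z := by
  refine ssum_ind (fun x => x * b ≤ z) ?_ ?_ h
  · rw [zero_mul]; exact bot_le' z
  · intro x y h1 h2; rw [add_mul]; exact add_le h1 h2

theorem mul_ssum_le {p : ι → Prop} {f : ι → K} {b z : K} (h : ∀ i, p i → b * f i ≤ z) :
    b * ssum p f ≤ z := by
  refine ssum_ind (fun x => b * x ≤ z) ?_ ?_ h
  · rw [mul_zero]; exact bot_le' z
  · intro x y h1 h2; rw [mul_add]; exact add_le h1 h2

end ssum

/-- Evaluation of terms in a PKA. -/
def Term.eval {K G : Type} [PKA K] (k : G → K) : Term G → K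
  | .zero => 0
  | .one => 1
  | .var a => k a
  | .add e f => e.eval k + f.eval k
  | .seq e f => e.eval k * f.eval k
  | .par e f => pp (e.eval k) (f.eval k)
  | .star e => (e.eval k)∗

open BiMon

structure Sys {K G : Type} [PKA K] (k : G → K) (isAt : G → Prop) where
  M : Type
  [finM : Finite M]
  [bi : BiMon M]
  le : M → M → Prop
  le_refl : ∀ a, le a a
  le_trans : ∀ a b c, le a b → le b c → le a c
  sq_mono : ∀ a b c d, le a b → le c d → le (sq a c) (sq b d)
  pr_mono : ∀ a b c d, le a b → le c d → le (pr a c) (pr b d)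
  exch : ∀ a b c d, le (sq (pr a b) (pr c d)) (pr (sq a c) (sq b d))
  h : G → M
  h_at : ∀ a, isAt a → le (h a) (sq (h a) (h a))
  Q : Type
  [finQ : Finite Q]
  X : Q → Q → K
  rho : M → Q → Q → Prop
  X_one : ∀ q, 1 ≤ X q q
  X_mul : ∀ q r s, X q r * X r s ≤ X q s
  rho_anti : ∀ m n q r, le m n → rho n q r → rho m q r
  rho_sq : ∀ m n q s, rho (sq m n) q s → ∃ r, rho m q r ∧ rho n r s
  rho_pr : ∀ m n q q', rho (pr m n) q q' →
    ∃ a b c d, rho m a b ∧ rho n c d ∧ pp (X a b) (X c d) ≤ X q q'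
  rho_e : ∀ q q', rho e q q' → 1 ≤ X q q'
  rho_h : ∀ a q q', rho (h a) q q' → k a ≤ X q q'
  pt : Q
  rho_pt : rho e pt pt
  X_pt : X pt pt ≤ 1

attribute [instance] Sys.finM Sys.bi Sys.finQ

theorem pivot {K ι : Type} [PKA K] (B : ι → ι → K) (s : Finset ι) : ∃ P : ι → ι → K,
    (∀ i j, B i j ≤ P i j) ∧ (∀ k ∈ s, ∀ i j, P i k * P k j ≤ P i j) ∧
    ∀ w : ι → K, (∀ i j, B i j * w j ≤ w i) → ∀ i j, P i j * w j ≤ w i := by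
  induction s using Finset.induction_on with
  | empty => exact ⟨B, fun _ _ => le_rfl, by simp, fun w h => h⟩
  | insert k s hk ih =>
    obtain ⟨P, h1, h2, h3⟩ := ih
    refine ⟨fun i j => P i j + P i k * ((P k k)∗ * P k j), ?_, ?_, ?_⟩
    · intro i j; exact (h1 i j).trans le_self_add
    · intro l hl i j
      simp only [add_mul, mul_add]
      have key : (P k k)∗ * (P k k * (P k k)∗) ≤ (P k k)∗ := by
        calc _ ≤ (P k k)∗ * (P k k)∗ := mul_le_mul' le_rfl mul_kstar_le_kstar
          _ = _ := kstar_mul_kstar _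
      have R : ∀ x, x ≤ P i k * ((P k k)∗ * P k j) →
          x ≤ P i j + P i k * ((P k k)∗ * P k j) := fun x h => h.trans le_add_self
      rcases Finset.mem_insert.1 hl with rfl | hl
      · refine add_le (add_le ?_ ?_) (add_le ?_ ?_) <;> apply R
        · exact mul_le_mul' le_rfl (by simpa using mul_le_mul' (one_le_kstar (a := P l l)) (le_refl (P l j)))
        · simp only [← mul_assoc]
          refine mul_le_mul' ?_ le_rfl
          simp only [mul_assoc]
          refine mul_le_mul' le_rfl ?_
          exact kstar_mul_le_kstar
        · rw [← mul_assoc (P l l)]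
          refine mul_le_mul' le_rfl (mul_le_mul' ?_ le_rfl)
          exact mul_kstar_le_kstar
        · have : P i l * ((P l l)∗ * P l l) * (P l l * ((P l l)∗ * P l j)) =
              P i l * ((P l l)∗ * P l l * (P l l * (P l l)∗) * P l j) := by
            simp only [mul_assoc]
          rw [this]
          refine mul_le_mul' le_rfl (mul_le_mul' ?_ le_rfl)
          calc _ ≤ (P l l)∗ * (P l l)∗ := mul_le_mul' kstar_mul_le_kstar mul_kstar_le_kstar
            _ = _ := kstar_mul_kstar _
      · refine add_le (add_le ?_ ?_) (add_le ?_ ?_)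
        · exact (h2 l hl i j).trans le_self_add
        · apply R
          calc _ = P i k * ((P k k)∗ * (P k l * P l j)) := by simp only [mul_assoc]
            _ ≤ _ := mul_le_mul' le_rfl (mul_le_mul' le_rfl (h2 l hl k j))
        · apply R
          rw [← mul_assoc]
          exact mul_le_mul' (h2 l hl i k) le_rfl
        · apply R
          calc _ = P i k * ((P k k)∗ * (P k l * P l k) * (P k k)∗ * P k j) := by simp only [mul_assoc]
            _ ≤ P i k * ((P k k)∗ * (P k k) * (P k k)∗ * P k j) :=
              mul_le_mul' le_rfl (mul_le_mul' (mul_le_mul' (mul_le_mul' le_rfl (h2 l hl k k)) le_rfl) le_rfl)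
            _ ≤ _ := by
              refine mul_le_mul' le_rfl (mul_le_mul' ?_ le_rfl)
              rw [mul_assoc]; exact key
    · intro w hw i j
      have h := h3 w hw
      rw [add_mul]
      refine add_le (h i j) ?_
      calc _ = P i k * ((P k k)∗ * (P k j * w j)) := by simp only [mul_assoc]
        _ ≤ P i k * ((P k k)∗ * w k) := mul_le_mul' le_rfl (mul_le_mul' le_rfl (h k j))
        _ ≤ P i k * w k := mul_le_mul' le_rfl (kstar_mul_le_self (h k k))
        _ ≤ w i := h i k

theorem pivot_all {K ι : Type} [PKA K] [Finite ι] (B : ι → ι → K) : ∃ P : ι → ι → K,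
    (∀ i j, B i j ≤ P i j) ∧ (∀ i k j, P i k * P k j ≤ P i j) ∧
    ∀ w : ι → K, (∀ i j, B i j * w j ≤ w i) → ∀ i j, P i j * w j ≤ w i := by
  have := Fintype.ofFinite ι
  obtain ⟨P, h1, h2, h3⟩ := pivot B Finset.univ
  exact ⟨P, h1, fun i k j => h2 k (Finset.mem_univ _) i j, h3⟩

section main

variable {K G : Type} [PKA K] {k : G → K} {isAt : G → Prop}

def vals (S : Sys k isAt) (e : Term G) : Set S.M := {m | ∃ u ∈ e.sl, u.ev S.h = m}

def Decomp (S : Sys k isAt) (e : Term G) (t : S.M → K) : Prop :=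
  (∀ z, (∀ m, t m ≤ z) → e.eval k ≤ z) ∧ (∀ m, m ∈ vals S e ∨ t m = 0) ∧
    ∀ m q q', S.rho m q q' → t m ≤ S.X q q'

theorem decomp_bin (S : Sys k isAt) (e1 e2 e0 : Term G) (op : K → K → K) (F : S.M → S.M → S.M)
    (hzr : ∀ a, op a 0 = 0) (hzl : ∀ a, op 0 a = 0)
    (hval : ∀ n ∈ vals S e1, ∀ l ∈ vals S e2, F n l ∈ vals S e0)
    (t1 t2 : S.M → K) (h1 : Decomp S e1 t1) (h2 : Decomp S e2 t2)
    (hev : ∀ z, (∀ n l, op (t1 n) (t2 l) ≤ z) → e0.eval k ≤ z)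
    (hX : ∀ n l q q', S.rho (F n l) q q' → op (t1 n) (t2 l) ≤ S.X q q') :
    ∃ t, Decomp S e0 t := by
  refine ⟨fun m => ssum (fun x : S.M × S.M => F x.1 x.2 = m) (fun x => op (t1 x.1) (t2 x.2)), ?_, ?_, ?_⟩
  · intro z hz
    refine hev z fun n l => le_trans ?_ (hz (F n l))
    exact le_ssum (p := fun x : S.M × S.M => F x.1 x.2 = F n l)
      (fun x : S.M × S.M => op (t1 x.1) (t2 x.2)) (i := (n, l)) rfl
  · intro m
    by_cases hm : m ∈ vals S e0
    · exact Or.inl hm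
    · right
      refine le_antisymm (ssum_le ?_) (bot_le' _)
      rintro ⟨n, l⟩ rfl
      rcases h1.2.1 n with hn | hn
      · rcases h2.2.1 l with hl | hl
        · exact absurd (hval n hn l hl) hm
        · simp only [hl, hzr]; exact le_rfl
      · simp only [hn, hzl]; exact le_rfl
  · intro m q q' hr
    refine ssum_le ?_
    rintro ⟨n, l⟩ rfl
    exact hX n l q q' hr

theorem slpow_ev_mul (S : Sys k isAt) (e : Term G) {m n : S.M} (hm : m ∈ vals S e.star)
    (hn : n ∈ vals S e) : sq m n ∈ vals S e.star := by
  obtain ⟨u, hu, rfl⟩ := hm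
  obtain ⟨v, hv, rfl⟩ := hn
  simp only [Term.sl, Set.mem_iUnion] at hu
  obtain ⟨i, hi⟩ := hu
  refine ⟨.seq u v, ?_, rfl⟩
  simp only [Term.sl, Set.mem_iUnion]
  exact ⟨i + 1, u, hi, v, hv, rfl⟩

theorem decomp_star (S : Sys k isAt) (f : Term G) (t : S.M → K) (ht : Decomp S f t) :
    ∃ t', Decomp S f.star t' := by
  obtain ⟨h1, h2, h3⟩ := ht
  obtain ⟨P, p1, p2, p3⟩ := pivot_all (K := K) (ι := S.M)
    (fun m' m => ssum (fun n : S.M => sq m' n = m) t)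
  have pB : ∀ m n, t n ≤ P m (sq m n) := fun m n =>
    (le_ssum (p := fun n' : S.M => sq m n' = sq m n) t (i := n) rfl).trans (p1 _ _)
  let t' : S.M → K := fun m => if m ∈ vals S f.star then (if m = e then 1 else 0) + P e m else 0
  have ev1 : (e : S.M) ∈ vals S f.star := ⟨.one, by
    simp only [Term.sl, Set.mem_iUnion]; exact ⟨0, by simp [slpow]⟩, rfl⟩
  have bound : ∀ m q q', S.rho m q q' → (if m = e then (1:K) else 0) + P e m ≤ S.X q q' := by
    intro m q q' hr
    refine add_le ?_ ?_
    · split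
      · rename_i hm; subst hm; exact S.rho_e _ _ hr
      · exact bot_le' _
    · let w : S.M → K := fun m' => ssum (fun q'' => S.rho m' q q'') (fun q'' => S.X q'' q')
      have hw : ∀ i j, ssum (fun n : S.M => sq i n = j) t * w j ≤ w i := by
        intro i j
        refine ssum_mul_le ?_
        rintro n rfl
        refine mul_ssum_le ?_
        intro q'' hq
        obtain ⟨r, hr1, hr2⟩ := S.rho_sq _ _ _ _ hq
        calc t n * S.X q'' q' ≤ S.X r q'' * S.X q'' q' := mul_le_mul' (h3 _ _ _ hr2) le_rfl
          _ ≤ S.X r q' := S.X_mul _ _ _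
          _ ≤ _ := le_ssum (p := fun q'' => S.rho i q q'') (fun q'' => S.X q'' q') hr1
      calc P e m = P e m * 1 := (mul_one _).symm
        _ ≤ P e m * w m := mul_le_mul' le_rfl ((S.X_one q').trans
            (le_ssum (p := fun q'' => S.rho m q q'') (fun q'' => S.X q'' q') hr))
        _ ≤ w e := p3 w hw _ _
        _ ≤ _ := by
          refine ssum_le ?_
          intro q'' hq
          calc S.X q'' q' = 1 * S.X q'' q' := (one_mul _).symm
            _ ≤ S.X q q'' * S.X q'' q' := mul_le_mul' (S.rho_e _ _ hq) le_rfl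
            _ ≤ _ := S.X_mul _ _ _
  refine ⟨t', ?_, ?_, ?_⟩
  · intro z hz
    let Y : K := ssum (fun _ : S.M => True) t'
    have hY : ∀ m, t' m ≤ Y := fun m => le_ssum (p := fun _ : S.M => True) t' trivial
    suffices hs : (f.eval k)∗ ≤ Y from hs.trans (ssum_le fun m _ => hz m)
    have one_le : 1 ≤ Y := by
      refine le_trans ?_ (hY e)
      simp only [t', if_pos ev1, if_true]
      exact le_self_add
    have mul_le : Y * f.eval k ≤ Y := by
      let E : K := ssum (fun _ : S.M => True) t
      have hE : f.eval k ≤ E := h1 E fun m => le_ssum (p := fun _ : S.M => True) t trivial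
      refine (mul_le_mul' (le_refl Y) hE).trans ?_
      refine ssum_mul_le fun m _ => mul_ssum_le fun n _ => ?_
      rcases h2 n with hn | hn
      · by_cases hm : m ∈ vals S f.star
        · have hmn := slpow_ev_mul S f hm hn
          refine le_trans ?_ (hY (sq m n))
          simp only [t', if_pos hm, if_pos hmn]
          refine le_trans ?_ le_add_self
          rw [add_mul]
          refine add_le ?_ ?_
          · split
            · rename_i h; subst h; rw [one_mul]; exact pB _ _
            · rw [zero_mul]; exact bot_le' _
          · exact (mul_le_mul' le_rfl (pB m n)).trans (p2 _ _ _)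
        · simp only [t', if_neg hm, zero_mul]; exact bot_le' _
      · simp only [hn, mul_zero]; exact bot_le' _
    calc (f.eval k)∗ = 1 * (f.eval k)∗ := (one_mul _).symm
      _ ≤ Y := mul_kstar_le one_le mul_le
  · intro m
    by_cases hm : m ∈ vals S f.star
    · exact Or.inl hm
    · exact Or.inr (by simp only [t', if_neg hm])
  · intro m q q' hr
    simp only [t']
    split
    · exact bound m q q' hr
    · exact bot_le' _

theorem decomp (S : Sys k isAt) (f : Term G) : ∃ t, Decomp S f t := by
  induction f with
  | zero => exact ⟨fun _ => 0, fun z _ => bot_le' z, fun _ => Or.inr rfl, fun _ _ _ _ => bot_le' _⟩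
  | one =>
    refine ⟨fun m => if m = e then 1 else 0, ?_, ?_, ?_⟩
    · intro z hz; simpa [Term.eval] using hz e
    · intro m
      by_cases hm : m = e
      · subst hm; exact Or.inl ⟨.one, by simp [Term.sl], rfl⟩
      · exact Or.inr (by simp [hm])
    · intro m q q' hr
      by_cases hm : m = e
      · subst hm; simpa using S.rho_e _ _ hr
      · simp only [if_neg hm]; exact bot_le' _
  | var a =>
    refine ⟨fun m => if m = S.h a then k a else 0, ?_, ?_, ?_⟩
    · intro z hz; simpa [Term.eval] using hz (S.h a)
    · intro m
      by_cases hm : m = S.h a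
      · subst hm; exact Or.inl ⟨.var a, by simp [Term.sl], rfl⟩
      · exact Or.inr (by simp [hm])
    · intro m q q' hr
      by_cases hm : m = S.h a
      · subst hm; simpa using S.rho_h _ _ _ hr
      · simp only [if_neg hm]; exact bot_le' _
  | add f g hf hg =>
    obtain ⟨t1, a1, a2, a3⟩ := hf
    obtain ⟨t2, b1, b2, b3⟩ := hg
    refine ⟨fun m => t1 m + t2 m, ?_, ?_, ?_⟩
    · intro z hz
      exact add_le (a1 z fun m => le_self_add.trans (hz m)) (b1 z fun m => le_add_self.trans (hz m))
    · intro m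
      rcases a2 m with ⟨u, hu, h⟩ | h
      · exact Or.inl ⟨u, Or.inl hu, h⟩
      · rcases b2 m with ⟨u, hu, h'⟩ | h'
        · exact Or.inl ⟨u, Or.inr hu, h'⟩
        · exact Or.inr (by simp [h, h'])
    · intro m q q' hr
      exact add_le (a3 _ _ _ hr) (b3 _ _ _ hr)
  | seq f g hf hg =>
    obtain ⟨t1, h1⟩ := hf
    obtain ⟨t2, h2⟩ := hg
    refine decomp_bin S f g (.seq f g) (· * ·) sq mul_zero zero_mul ?_ t1 t2 h1 h2 ?_ ?_
    · rintro n ⟨u, hu, rfl⟩ l ⟨v, hv, rfl⟩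
      exact ⟨.seq u v, ⟨u, hu, v, hv, rfl⟩, rfl⟩
    · intro z hz
      have E1 := h1.1 (ssum (fun _ : S.M => True) t1) fun m => le_ssum (p := fun _ : S.M => True) t1 trivial
      have E2 := h2.1 (ssum (fun _ : S.M => True) t2) fun m => le_ssum (p := fun _ : S.M => True) t2 trivial
      refine (mul_le_mul' E1 E2).trans ?_
      exact ssum_mul_le fun m _ => mul_ssum_le fun n _ => hz m n
    · intro n l q q' hr
      obtain ⟨r, hr1, hr2⟩ := S.rho_sq _ _ _ _ hr
      exact (mul_le_mul' (h1.2.2 _ _ _ hr1) (h2.2.2 _ _ _ hr2)).trans (S.X_mul _ _ _)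
  | par f g hf hg =>
    obtain ⟨t1, h1⟩ := hf
    obtain ⟨t2, h2⟩ := hg
    refine decomp_bin S f g (.par f g) pp pr pp_zero zero_pp ?_ t1 t2 h1 h2 ?_ ?_
    · rintro n ⟨u, hu, rfl⟩ l ⟨v, hv, rfl⟩
      exact ⟨.par u v, ⟨u, hu, v, hv, rfl⟩, rfl⟩
    · intro z hz
      have E1 := h1.1 (ssum (fun _ : S.M => True) t1) fun m => le_ssum (p := fun _ : S.M => True) t1 trivial
      have E2 := h2.1 (ssum (fun _ : S.M => True) t2) fun m => le_ssum (p := fun _ : S.M => True) t2 trivial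
      refine (pp_mono E1 E2).trans ?_
      refine ssum_ind (fun x => pp x (ssum (fun _ : S.M => True) t2) ≤ z) ?_ ?_ fun m _ => ?_
      · simp only [zero_pp]; exact bot_le' _
      · intro a b ha hb; simp only [add_pp]; exact add_le ha hb
      · refine ssum_ind (fun x => pp (t1 m) x ≤ z) ?_ ?_ fun n _ => hz m n
        · simp only [pp_zero]; exact bot_le' _
        · intro a b ha hb; simp only [pp_add]; exact add_le ha hb
    · intro n l q q' hr
      obtain ⟨a, b, c, d, hr1, hr2, hX⟩ := S.rho_pr _ _ _ _ hr
      exact (pp_mono (h1.2.2 _ _ _ hr1) (h2.2.2 _ _ _ hr2)).trans hX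
  | star f hf =>
    obtain ⟨t, h⟩ := hf
    exact decomp_star S f t h

def Accepts (S : Sys k isAt) (I O : Set S.Q) (m : S.M) : Prop := ∃ i ∈ I, ∃ o ∈ O, S.rho m i o

structure Recog (S : Sys k isAt) (I O : Set S.Q) (f : Term G) : Prop where
  bound : ∀ i ∈ I, ∀ o ∈ O, S.X i o ≤ f.eval k
  acc : ∀ u ∈ f.sl, Accepts S I O (u.ev S.h)

theorem Recog.le {S : Sys k isAt} {I O : Set S.Q} {f : Term G} (hS : Recog S I O f) (g : Term G)
    (hg : ∀ u ∈ g.sl, Accepts S I O (u.ev S.h)) : g.eval k ≤ f.eval k := by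
  obtain ⟨t, h1, h2, h3⟩ := decomp S g
  refine h1 _ fun m => ?_
  rcases h2 m with ⟨u, hu, rfl⟩ | h
  · obtain ⟨i, hi, o, ho, hr⟩ := hg u hu
    exact (h3 _ _ _ hr).trans (hS.bound i hi o ho)
  · rw [h]; exact bot_le' _

end main

end CKAH

namespace CKAH

open Classical
open Computability
open PKA BiMon

section base

def B3 : Type := Fin 3

def B3.mul (a b : Fin 3) : Fin 3 := if a = 0 then b else if b = 0 then a else 2

theorem B3.assoc : ∀ a b c : Fin 3, B3.mul (B3.mul a b) c = B3.mul a (B3.mul b c) := by decide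

theorem B3.comm : ∀ a b : Fin 3, B3.mul a b = B3.mul b a := by decide

theorem B3.mul_zero : ∀ a : Fin 3, B3.mul a 0 = a := by decide

instance : Finite B3 := inferInstanceAs (Finite (Fin 3))

instance : BiMon B3 where
  e := (0 : Fin 3)
  sq := B3.mul
  pr := B3.mul
  sq_assoc := B3.assoc
  e_sq a := (B3.comm 0 a).trans (B3.mul_zero a)
  sq_e := B3.mul_zero
  pr_assoc := B3.assoc
  pr_comm := B3.comm
  pr_e := B3.mul_zero

def B3.le (a b : Fin 3) : Prop := a = b ∨ b = 2

theorem B3.trans : ∀ a b c : Fin 3, (a = b ∨ b = 2) → (b = c ∨ c = 2) → (a = c ∨ c = 2) := by decide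

theorem B3.mono : ∀ a b c d : Fin 3, (a = b ∨ b = 2) → (c = d ∨ d = 2) →
    (B3.mul a c = B3.mul b d ∨ B3.mul b d = 2) := by decide

theorem B3.exch : ∀ a b c d : Fin 3,
    B3.mul (B3.mul a b) (B3.mul c d) = B3.mul (B3.mul a c) (B3.mul b d) := by decide

theorem B3.sqr : ∀ a : Fin 3, a ≠ 0 → (a = B3.mul a a ∨ B3.mul a a = 2) := by decide

def B3.rho (a : Fin 3) (p q : Bool) : Prop :=
  (a = 0 ∧ p = q) ∨ (a = 1 ∧ p = false ∧ q = true)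

instance (a : Fin 3) (p q : Bool) : Decidable (B3.rho a p q) := by unfold B3.rho; infer_instance

theorem B3.rho_sq : ∀ (m n : Fin 3) (q s : Bool), B3.rho (B3.mul m n) q s →
    ∃ r, B3.rho m q r ∧ B3.rho n r s := by decide

theorem B3.rho_pr : ∀ (m n : Fin 3) (q s : Bool), B3.rho (B3.mul m n) q s →
    (q = s ∧ m = 0 ∧ n = 0) ∨ (m = 0 ∧ B3.rho n q s) ∨ (n = 0 ∧ B3.rho m q s) := by decide

variable {K G : Type} [PKA K] (k : G → K) (isAt : G → Prop)

noncomputable def baseX (g : Option G) : Bool → Bool → K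
  | false, true => g.elim 0 k
  | true, false => 0
  | _, _ => 1

noncomputable def baseH (g : Option G) (a : G) : Fin 3 := if g = some a then 1 else 2

theorem baseH_ne (g : Option G) (a : G) : baseH g a ≠ 0 := by
  unfold baseH; split <;> decide

theorem baseH_one (g : Option G) (a : G) (h : baseH g a = 1) : g = some a := by
  unfold baseH at h; split at h
  · assumption
  · exact absurd h (by decide)

noncomputable def baseSys (g : Option G) : Sys k isAt where
  M := B3
  le := B3.le
  le_refl a := Or.inl rfl
  le_trans := B3.trans
  sq_mono := B3.mono
  pr_mono := B3.mono
  exch a b c d := Or.inl (B3.exch a b c d)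
  h := baseH g
  h_at a _ := B3.sqr _ (baseH_ne g a)
  Q := Bool
  X := baseX k g
  rho := B3.rho
  X_one := by rintro (_ | _) <;> exact le_rfl
  X_mul := by
    rintro (_ | _) (_ | _) (_ | _) <;> simp [baseX]
  rho_anti := by
    rintro m n q r (h | h) hr
    · subst h; exact hr
    · subst h; exfalso; revert hr; revert q r; decide
  rho_sq := B3.rho_sq
  rho_pr := by
    intro m n q s h
    rcases B3.rho_pr m n q s h with ⟨rfl, rfl, rfl⟩ | ⟨rfl, h'⟩ | ⟨rfl, h'⟩
    · refine ⟨false, false, q, q, Or.inl ⟨rfl, rfl⟩, Or.inl ⟨rfl, rfl⟩, ?_⟩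
      exact (one_pp _).le
    · exact ⟨false, false, q, s, Or.inl ⟨rfl, rfl⟩, h', (one_pp _).le⟩
    · exact ⟨q, s, false, false, h', Or.inl ⟨rfl, rfl⟩, (pp_one _).le⟩
  rho_e := by
    rintro q q' (⟨-, rfl⟩ | ⟨h, -⟩)
    · cases q <;> exact le_rfl
    · exact absurd h (by decide)
  rho_h := by
    intro a q q' h
    rcases h with ⟨h, -⟩ | ⟨h, rfl, rfl⟩
    · exact absurd h (baseH_ne g a)
    · have hg := baseH_one g a h
      subst hg; exact le_rfl
  pt := false
  rho_pt := Or.inl ⟨rfl, rfl⟩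
  X_pt := le_rfl

end base

instance prodBi (M N : Type) [BiMon M] [BiMon N] : BiMon (M × N) where
  e := (e, e)
  sq a b := (sq a.1 b.1, sq a.2 b.2)
  pr a b := (pr a.1 b.1, pr a.2 b.2)
  sq_assoc a b c := by simp [sq_assoc]
  e_sq a := by simp
  sq_e a := by simp
  pr_assoc a b c := by simp [pr_assoc]
  pr_comm a b := by simp [pr_comm a.1, pr_comm a.2]
  pr_e a := by simp

@[simp] theorem prod_sq {M N : Type} [BiMon M] [BiMon N] (a b : M × N) :
    BiMon.sq a b = (BiMon.sq a.1 b.1, BiMon.sq a.2 b.2) := rfl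

@[simp] theorem prod_pr {M N : Type} [BiMon M] [BiMon N] (a b : M × N) :
    pr a b = (pr a.1 b.1, pr a.2 b.2) := rfl

instance setBi (M : Type) [BiMon M] : BiMon (Set M) where
  e := {e}
  sq := Set.image2 sq
  pr := Set.image2 pr
  sq_assoc a b c := Set.image2_assoc sq_assoc
  e_sq a := by simp
  sq_e a := by simp
  pr_assoc a b c := Set.image2_assoc pr_assoc
  pr_comm a b := Set.image2_comm pr_comm
  pr_e a := by simp

section sums

variable {K G : Type} [PKA K] {k : G → K} {isAt : G → Prop}

def sumRel {α β : Type} {T : Type} (z : T) (r : α → α → T) (s : β → β → T) : α ⊕ β → α ⊕ β → T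
  | .inl a, .inl b => r a b
  | .inr a, .inr b => s a b
  | _, _ => z

def sumSys (S T : Sys k isAt) : Sys k isAt where
  M := S.M × T.M
  le a b := S.le a.1 b.1 ∧ T.le a.2 b.2
  le_refl a := ⟨S.le_refl _, T.le_refl _⟩
  le_trans a b c h h' := ⟨S.le_trans _ _ _ h.1 h'.1, T.le_trans _ _ _ h.2 h'.2⟩
  sq_mono a b c d h h' := ⟨S.sq_mono _ _ _ _ h.1 h'.1, T.sq_mono _ _ _ _ h.2 h'.2⟩
  pr_mono a b c d h h' := ⟨S.pr_mono _ _ _ _ h.1 h'.1, T.pr_mono _ _ _ _ h.2 h'.2⟩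
  exch a b c d := ⟨S.exch _ _ _ _, T.exch _ _ _ _⟩
  h a := (S.h a, T.h a)
  h_at a ha := ⟨S.h_at a ha, T.h_at a ha⟩
  Q := S.Q ⊕ T.Q
  X := sumRel 0 S.X T.X
  rho m := sumRel False (S.rho m.1) (T.rho m.2)
  X_one := by rintro (q | q); exacts [S.X_one q, T.X_one q]
  X_mul := by
    rintro (q | q) (r | r) (s | s) <;> simp [sumRel, S.X_mul, T.X_mul]
  rho_anti := by
    rintro m n (q | q) (r | r) h hr
    · exact S.rho_anti _ _ _ _ h.1 hr
    · exact hr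
    · exact hr
    · exact T.rho_anti _ _ _ _ h.2 hr
  rho_sq := by
    rintro m n (q | q) (r | r) hr
    · obtain ⟨s, h⟩ := S.rho_sq _ _ _ _ hr; exact ⟨.inl s, h⟩
    · exact hr.elim
    · exact hr.elim
    · obtain ⟨s, h⟩ := T.rho_sq _ _ _ _ hr; exact ⟨.inr s, h⟩
  rho_pr := by
    rintro m n (q | q) (r | r) hr
    · obtain ⟨a, b, c, d, h⟩ := S.rho_pr _ _ _ _ hr; exact ⟨.inl a, .inl b, .inl c, .inl d, h⟩
    · exact hr.elim
    · exact hr.elim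
    · obtain ⟨a, b, c, d, h⟩ := T.rho_pr _ _ _ _ hr; exact ⟨.inr a, .inr b, .inr c, .inr d, h⟩
  rho_e := by
    rintro (q | q) (r | r) hr
    · exact S.rho_e _ _ hr
    · exact hr.elim
    · exact hr.elim
    · exact T.rho_e _ _ hr
  rho_h := by
    rintro a (q | q) (r | r) hr
    · exact S.rho_h _ _ _ hr
    · exact hr.elim
    · exact hr.elim
    · exact T.rho_h _ _ _ hr
  pt := .inl S.pt
  rho_pt := S.rho_pt
  X_pt := S.X_pt

theorem sumSys_ev (S T : Sys k isAt) (u : SPT G) :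
    u.ev (sumSys S T).h = (u.ev S.h, u.ev T.h) := by
  induction u with
  | one => rfl
  | var a => rfl
  | seq u v hu hv => simp only [SPT.ev, hu, hv]; rfl
  | par u v hu hv => simp only [SPT.ev, hu, hv]; rfl

def parSys (hk : ∀ a, isAt a → k a ≤ k a * k a) (S T : Sys k isAt) : Sys k isAt where
  M := Set (S.M × T.M)
  le A B := ∀ b ∈ B, ∃ a ∈ A, S.le a.1 b.1 ∧ T.le a.2 b.2
  le_refl A := fun b hb => ⟨b, hb, S.le_refl _, T.le_refl _⟩
  le_trans A B C h h' := fun c hc => by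
    obtain ⟨b, hb, h1, h2⟩ := h' c hc
    obtain ⟨a, ha, h3, h4⟩ := h b hb
    exact ⟨a, ha, S.le_trans _ _ _ h3 h1, T.le_trans _ _ _ h4 h2⟩
  sq_mono A B C D h h' := by
    rintro _ ⟨b, hb, d, hd, rfl⟩
    obtain ⟨a, ha, h1, h2⟩ := h b hb
    obtain ⟨c, hc, h3, h4⟩ := h' d hd
    exact ⟨_, ⟨a, ha, c, hc, rfl⟩, S.sq_mono _ _ _ _ h1 h3, T.sq_mono _ _ _ _ h2 h4⟩
  pr_mono A B C D h h' := by
    rintro _ ⟨b, hb, d, hd, rfl⟩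
    obtain ⟨a, ha, h1, h2⟩ := h b hb
    obtain ⟨c, hc, h3, h4⟩ := h' d hd
    exact ⟨_, ⟨a, ha, c, hc, rfl⟩, S.pr_mono _ _ _ _ h1 h3, T.pr_mono _ _ _ _ h2 h4⟩
  exch A B C D := by
    rintro _ ⟨_, ⟨a, ha, c, hc, rfl⟩, _, ⟨b, hb, d, hd, rfl⟩, rfl⟩
    exact ⟨_, ⟨_, ⟨a, ha, b, hb, rfl⟩, _, ⟨c, hc, d, hd, rfl⟩, rfl⟩, S.exch _ _ _ _, T.exch _ _ _ _⟩
  h a := {x | x = (S.h a, e) ∨ x = (e, T.h a) ∨ (isAt a ∧ x = (S.h a, T.h a))}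
  h_at a ha := by
    have s1 := S.h_at a ha
    have t1 := T.h_at a ha
    have sr := S.le_refl
    have tr := T.le_refl
    rintro _ ⟨x, hx, y, hy, rfl⟩
    rcases hx with rfl | rfl | ⟨-, rfl⟩ <;> rcases hy with rfl | rfl | ⟨-, rfl⟩
    · exact ⟨_, Or.inl rfl, s1, by simpa using tr _⟩
    · exact ⟨_, Or.inr (Or.inr ⟨ha, rfl⟩), by simpa using sr _, by simpa using tr _⟩
    · exact ⟨_, Or.inr (Or.inr ⟨ha, rfl⟩), s1, by simpa using tr _⟩
    · exact ⟨_, Or.inr (Or.inr ⟨ha, rfl⟩), by simpa using sr _, by simpa using tr _⟩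
    · exact ⟨_, Or.inr (Or.inl rfl), by simpa using sr _, t1⟩
    · exact ⟨_, Or.inr (Or.inr ⟨ha, rfl⟩), by simpa using sr _, t1⟩
    · exact ⟨_, Or.inr (Or.inr ⟨ha, rfl⟩), s1, by simpa using tr _⟩
    · exact ⟨_, Or.inr (Or.inr ⟨ha, rfl⟩), by simpa using sr _, t1⟩
    · exact ⟨_, Or.inr (Or.inr ⟨ha, rfl⟩), s1, t1⟩
  Q := S.Q × T.Q
  X q r := pp (S.X q.1 r.1) (T.X q.2 r.2)
  rho A q r := ∃ a ∈ A, S.rho a.1 q.1 r.1 ∧ T.rho a.2 q.2 r.2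
  X_one q := by
    rw [← pp_one (1 : K)]; exact pp_mono (S.X_one _) (T.X_one _)
  X_mul q r s := (pp_exch _ _ _ _).trans (pp_mono (S.X_mul _ _ _) (T.X_mul _ _ _))
  rho_anti := by
    rintro A B q r h ⟨b, hb, h1, h2⟩
    obtain ⟨a, ha, h3, h4⟩ := h b hb
    exact ⟨a, ha, S.rho_anti _ _ _ _ h3 h1, T.rho_anti _ _ _ _ h4 h2⟩
  rho_sq := by
    rintro A B q r ⟨_, ⟨a, ha, b, hb, rfl⟩, h1, h2⟩
    obtain ⟨s, s1, s2⟩ := S.rho_sq _ _ _ _ h1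
    obtain ⟨t, t1, t2⟩ := T.rho_sq _ _ _ _ h2
    exact ⟨(s, t), ⟨a, ha, s1, t1⟩, ⟨b, hb, s2, t2⟩⟩
  rho_pr := by
    rintro A B q r ⟨_, ⟨a, ha, b, hb, rfl⟩, h1, h2⟩
    obtain ⟨a1, b1, c1, d1, s1, s2, s3⟩ := S.rho_pr _ _ _ _ h1
    obtain ⟨a2, b2, c2, d2, t1, t2, t3⟩ := T.rho_pr _ _ _ _ h2
    refine ⟨(a1, a2), (b1, b2), (c1, c2), (d1, d2), ⟨a, ha, s1, t1⟩, ⟨b, hb, s2, t2⟩, ?_⟩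
    simp only
    rw [pp_mid]
    exact pp_mono s3 t3
  rho_e := by
    rintro q r ⟨_, rfl, h1, h2⟩
    rw [← pp_one (1 : K)]; exact pp_mono (S.rho_e _ _ h1) (T.rho_e _ _ h2)
  rho_h := by
    rintro a q r ⟨_, rfl | rfl | ⟨ha, rfl⟩, h1, h2⟩
    · rw [← pp_one (k a)]; exact pp_mono (S.rho_h _ _ _ h1) (T.rho_e _ _ h2)
    · rw [← one_pp (k a)]; exact pp_mono (S.rho_e _ _ h1) (T.rho_h _ _ _ h2)
    · refine le_trans ?_ (pp_mono (S.rho_h _ _ _ h1) (T.rho_h _ _ _ h2))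
      calc k a ≤ k a * k a := hk a ha
        _ = pp (k a) 1 * pp 1 (k a) := by rw [pp_one, one_pp]
        _ ≤ pp (k a * 1) (1 * k a) := pp_exch _ _ _ _
        _ = _ := by rw [mul_one, one_mul]
  pt := (S.pt, T.pt)
  rho_pt := ⟨_, rfl, S.rho_pt, T.rho_pt⟩
  X_pt := by
    rw [← pp_one (1 : K)]; exact pp_mono S.X_pt T.X_pt

theorem parSys_evL (hk : ∀ a, isAt a → k a ≤ k a * k a) (S T : Sys k isAt) (u : SPT G) :
    (u.ev S.h, e) ∈ (u.ev (parSys hk S T).h : Set (S.M × T.M)) := by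
  induction u with
  | one => exact rfl
  | var a => exact Or.inl rfl
  | seq u v hu hv => exact ⟨_, hu, _, hv, by simp [SPT.ev]⟩
  | par u v hu hv => exact ⟨_, hu, _, hv, by simp [SPT.ev]⟩

theorem parSys_evR (hk : ∀ a, isAt a → k a ≤ k a * k a) (S T : Sys k isAt) (u : SPT G) :
    (e, u.ev T.h) ∈ (u.ev (parSys hk S T).h : Set (S.M × T.M)) := by
  induction u with
  | one => exact rfl
  | var a => exact Or.inr (Or.inl rfl)
  | seq u v hu hv => exact ⟨_, hu, _, hv, by simp [SPT.ev]⟩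
  | par u v hu hv => exact ⟨_, hu, _, hv, by simp [SPT.ev]⟩

end sums

section recog

variable {K G : Type} [PKA K] {k : G → K} {isAt : G → Prop}

def HasRecog (k : G → K) (isAt : G → Prop) (f : Term G) : Prop :=
  ∃ (S : Sys k isAt) (I O : Set S.Q), Recog S I O f

theorem hasRecog_zero : HasRecog k isAt .zero :=
  ⟨baseSys k isAt none, ∅, ∅, by simp, by simp [Term.sl]⟩

theorem hasRecog_one : HasRecog k isAt .one := by
  refine ⟨baseSys k isAt none, {(false : Bool)}, {(false : Bool)}, ?_, ?_⟩
  · rintro _ rfl _ rfl; exact le_rfl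
  · rintro _ rfl; exact ⟨_, rfl, _, rfl, Or.inl ⟨rfl, rfl⟩⟩

theorem hasRecog_var (a : G) : HasRecog k isAt (.var a) := by
  refine ⟨baseSys k isAt (some a), {(false : Bool)}, {(true : Bool)}, ?_, ?_⟩
  · rintro _ rfl _ rfl; exact le_rfl
  · rintro _ rfl
    refine ⟨_, rfl, _, rfl, Or.inr ⟨?_, rfl, rfl⟩⟩
    simp [SPT.ev, baseSys, baseH]

theorem hasRecog_add {f g : Term G} (hf : HasRecog k isAt f) (hg : HasRecog k isAt g) :
    HasRecog k isAt (.add f g) := by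
  obtain ⟨S, I, O, hS⟩ := hf
  obtain ⟨T, I', O', hT⟩ := hg
  refine ⟨sumSys S T, Sum.inl '' I ∪ Sum.inr '' I', Sum.inl '' O ∪ Sum.inr '' O', ?_, ?_⟩
  · rintro _ (⟨i, hi, rfl⟩ | ⟨i, hi, rfl⟩) _ (⟨o, ho, rfl⟩ | ⟨o, ho, rfl⟩)
    · exact (hS.bound i hi o ho).trans le_self_add
    · exact bot_le' _
    · exact bot_le' _
    · exact (hT.bound i hi o ho).trans le_add_self
  · rintro u (hu | hu)
    · obtain ⟨i, hi, o, ho, h⟩ := hS.acc u hu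
      refine ⟨_, Or.inl ⟨i, hi, rfl⟩, _, Or.inl ⟨o, ho, rfl⟩, ?_⟩
      rw [sumSys_ev]; exact h
    · obtain ⟨i, hi, o, ho, h⟩ := hT.acc u hu
      refine ⟨_, Or.inr ⟨i, hi, rfl⟩, _, Or.inr ⟨o, ho, rfl⟩, ?_⟩
      rw [sumSys_ev]; exact h

theorem hasRecog_par (hk : ∀ a, isAt a → k a ≤ k a * k a) {f g : Term G}
    (hf : HasRecog k isAt f) (hg : HasRecog k isAt g) :
    HasRecog k isAt (.par f g) := by
  obtain ⟨S, I, O, hS⟩ := hf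
  obtain ⟨T, I', O', hT⟩ := hg
  refine ⟨parSys hk S T, I ×ˢ I', O ×ˢ O', ?_, ?_⟩
  · rintro ⟨i, i'⟩ ⟨hi, hi'⟩ ⟨o, o'⟩ ⟨ho, ho'⟩
    exact pp_mono (hS.bound i hi o ho) (hT.bound i' hi' o' ho')
  · rintro _ ⟨u, hu, v, hv, rfl⟩
    obtain ⟨i, hi, o, ho, h⟩ := hS.acc u hu
    obtain ⟨i', hi', o', ho', h'⟩ := hT.acc v hv
    refine ⟨(i, i'), ⟨hi, hi'⟩, (o, o'), ⟨ho, ho'⟩, (u.ev S.h, v.ev T.h), ?_, h, h'⟩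
    exact ⟨_, parSys_evL hk S T u, _, parSys_evR hk S T v, by simp⟩

end recog

end CKAH

namespace CKAH

open Classical
open Computability
open PKA BiMon

section ext

variable {K G : Type} [PKA K] {k : G → K} {isAt : G → Prop} (S : Sys k isAt) (O I : Set S.Q)

def Eh : S.Q → S.Q → Prop :=
  Relation.ReflTransGen (fun a b => (a ∈ O ∧ b ∈ I) ∨ S.rho e a b)

variable {S O I}

theorem Eh.rfl' (a : S.Q) : Eh S O I a a := Relation.ReflTransGen.refl

theorem Eh.tr {a b c : S.Q} (h : Eh S O I a b) (h' : Eh S O I b c) : Eh S O I a c := by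
  exact Relation.ReflTransGen.trans h h'

theorem Eh.rho {a b : S.Q} (h : S.rho e a b) : Eh S O I a b := by
  exact Relation.ReflTransGen.single (Or.inr h)

theorem Eh.edge {a b : S.Q} (h : a ∈ O) (h' : b ∈ I) : Eh S O I a b := by
  exact Relation.ReflTransGen.single (Or.inl ⟨h, h'⟩)

variable (S O I)

def sw (R : S.Q → S.Q → Prop) (a d : S.Q) : Prop := ∃ b c, Eh S O I a b ∧ R b c ∧ Eh S O I c d

def Clo (R : S.Q → S.Q → Prop) : Prop :=
  ∀ a b c d, Eh S O I a b → R b c → Eh S O I c d → R a d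

variable {S O I}

theorem le_sw {R : S.Q → S.Q → Prop} {a b : S.Q} (h : R a b) : sw S O I R a b :=
  ⟨a, b, Eh.rfl' a, h, Eh.rfl' b⟩

theorem clo_sw (R : S.Q → S.Q → Prop) : Clo S O I (sw S O I R) := by
  rintro a b c d h1 ⟨x, y, h2, h3, h4⟩ h5
  exact ⟨x, y, h1.tr h2, h3, h4.tr h5⟩

theorem sw_le {R T : S.Q → S.Q → Prop} (hT : Clo S O I T) (h : ∀ a b, R a b → T a b) {a b : S.Q}
    (h' : sw S O I R a b) : T a b := by
  obtain ⟨x, y, h1, h2, h3⟩ := h'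
  exact hT _ _ _ _ h1 (h _ _ h2) h3

theorem clo_Eh : Clo S O I (Eh S O I) := fun _ _ _ _ h1 h2 h3 => (h1.tr h2).tr h3

theorem Eh_comp {R : S.Q → S.Q → Prop} (h : Clo S O I R) : Relation.Comp (Eh S O I) R = R := by
  funext a b
  refine propext ⟨?_, ?_⟩
  · rintro ⟨c, h1, h2⟩; exact h _ _ _ _ h1 h2 (Eh.rfl' _)
  · intro h'; exact ⟨a, Eh.rfl' a, h'⟩

theorem comp_Eh {R : S.Q → S.Q → Prop} (h : Clo S O I R) : Relation.Comp R (Eh S O I) = R := by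
  funext a b
  refine propext ⟨?_, ?_⟩
  · rintro ⟨c, h1, h2⟩; exact h _ _ _ _ (Eh.rfl' _) h1 h2
  · intro h'; exact ⟨b, h', Eh.rfl' b⟩

theorem clo_comp {R T : S.Q → S.Q → Prop} (h : Clo S O I R) (h' : Clo S O I T) :
    Clo S O I (Relation.Comp R T) := by
  rintro a b c d h1 ⟨x, h2, h3⟩ h4
  exact ⟨x, h _ _ _ _ h1 h2 (Eh.rfl' _), h' _ _ _ _ (Eh.rfl' _) h3 h4⟩

variable (S O I)

def EN : Type := {x : S.M × (S.Q → S.Q → Prop) // (∀ a b, S.rho x.1 a b → x.2 a b) ∧ Clo S O I x.2}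

instance : Finite (EN S O I) := by unfold EN; infer_instance

variable {S O I}

def EN.sq (x y : EN S O I) : EN S O I :=
  ⟨(BiMon.sq x.1.1 y.1.1, Relation.Comp x.1.2 y.1.2), by
    refine ⟨?_, clo_comp x.2.2 y.2.2⟩
    intro a b h
    obtain ⟨r, h1, h2⟩ := S.rho_sq _ _ _ _ h
    exact ⟨r, x.2.1 _ _ h1, y.2.1 _ _ h2⟩⟩

def EN.pr (x y : EN S O I) : EN S O I :=
  ⟨(BiMon.pr x.1.1 y.1.1, sw S O I (S.rho (BiMon.pr x.1.1 y.1.1))),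
    fun _ _ h => le_sw h, clo_sw _⟩

instance : BiMon (Option (EN S O I)) where
  e := none
  sq x y := match x, y with
    | none, y => y
    | some x, none => some x
    | some x, some y => some (x.sq y)
  pr x y := match x, y with
    | none, y => y
    | some x, none => some x
    | some x, some y => some (x.pr y)
  sq_assoc := by
    rintro (_ | x) (_ | y) (_ | z) <;> try rfl
    simp only [EN.sq, BiMon.sq_assoc, Relation.comp_assoc]
  e_sq := by rintro (_ | x) <;> rfl
  sq_e := by rintro (_ | x) <;> rfl
  pr_assoc := by
    rintro (_ | x) (_ | y) (_ | z) <;> try rfl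
    simp only [EN.pr, BiMon.pr_assoc]
  pr_comm := by
    rintro (_ | x) (_ | y) <;> try rfl
    simp only [EN.pr, BiMon.pr_comm x.1.1]
  pr_e := by rintro (_ | x) <;> rfl

def EN.pi : Option (EN S O I) → S.M
  | none => e
  | some x => x.1.1

def EN.rel : Option (EN S O I) → S.Q → S.Q → Prop
  | none => Eh S O I
  | some x => x.1.2

theorem EN.clo_rel (x : Option (EN S O I)) : Clo S O I (EN.rel x) := by
  rcases x with _ | x
  · exact clo_Eh
  · exact x.2.2

theorem EN.rho_rel (x : Option (EN S O I)) {a b : S.Q} (h : S.rho (EN.pi x) a b) : EN.rel x a b := by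
  rcases x with _ | x
  · exact Eh.rho h
  · exact x.2.1 _ _ h

theorem EN.pi_sq (x y : Option (EN S O I)) : EN.pi (BiMon.sq x y) = BiMon.sq (EN.pi x) (EN.pi y) := by
  rcases x with _ | x <;> rcases y with _ | y <;> simp [EN.pi, BiMon.sq, EN.sq]
  all_goals first | exact (BiMon.e_sq _).symm | exact (BiMon.sq_e _).symm

theorem EN.pi_pr (x y : Option (EN S O I)) : EN.pi (BiMon.pr x y) = BiMon.pr (EN.pi x) (EN.pi y) := by
  rcases x with _ | x <;> rcases y with _ | y <;> simp [EN.pi, BiMon.pr, EN.pr]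
  all_goals first | exact (BiMon.e_pr _).symm | exact (BiMon.pr_e _).symm

theorem EN.rel_sq (x y : Option (EN S O I)) :
    EN.rel (BiMon.sq x y) = Relation.Comp (EN.rel x) (EN.rel y) := by
  rcases x with _ | x
  · exact (Eh_comp (EN.clo_rel y)).symm
  · rcases y with _ | y
    · exact (comp_Eh x.2.2).symm
    · rfl

theorem EN.rel_pr (x y : EN S O I) : EN.rel (BiMon.pr (some x) (some y)) =
    sw S O I (S.rho (EN.pi (BiMon.pr (some x) (some y)))) := rfl

def EN.le (x y : Option (EN S O I)) : Prop :=
  (x = none ↔ y = none) ∧ S.le (EN.pi x) (EN.pi y) ∧ ∀ a b, EN.rel y a b → EN.rel x a b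

theorem EN.le_refl (x : Option (EN S O I)) : EN.le x x := ⟨Iff.rfl, S.le_refl _, fun _ _ h => h⟩

theorem EN.sq_none (x y : Option (EN S O I)) : BiMon.sq x y = none ↔ x = none ∧ y = none := by
  rcases x with _ | x <;> rcases y with _ | y <;> simp [BiMon.sq]

theorem EN.pr_none (x y : Option (EN S O I)) : BiMon.pr x y = none ↔ x = none ∧ y = none := by
  rcases x with _ | x <;> rcases y with _ | y <;> simp [BiMon.pr]

theorem EN.le_pr {x : Option (EN S O I)} {y z : Option (EN S O I)} (hx : x ≠ none)
    (hy : y ≠ none) (hz : z ≠ none) (h : S.le (EN.pi x) (EN.pi (BiMon.pr y z))) :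
    EN.le x (BiMon.pr y z) := by
  obtain ⟨y, rfl⟩ := Option.ne_none_iff_exists'.1 hy
  obtain ⟨z, rfl⟩ := Option.ne_none_iff_exists'.1 hz
  refine ⟨⟨fun h => absurd h hx, fun h => absurd ((EN.pr_none _ _).1 h).1 hy⟩, h, ?_⟩
  intro a b hab
  rw [EN.rel_pr] at hab
  refine sw_le (EN.clo_rel x) ?_ hab
  intro a b hr
  exact EN.rho_rel x (S.rho_anti _ _ _ _ h hr)

theorem EN.none_pr (x : Option (EN S O I)) : BiMon.pr none x = x := BiMon.e_pr x
theorem EN.pr_none' (x : Option (EN S O I)) : BiMon.pr x none = x := BiMon.pr_e x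
theorem EN.none_sq (x : Option (EN S O I)) : BiMon.sq none x = x := BiMon.e_sq x
theorem EN.sq_none' (x : Option (EN S O I)) : BiMon.sq x none = x := BiMon.sq_e x

theorem EN.pr_mono (a b c d : Option (EN S O I)) (h : EN.le a b) (h' : EN.le c d) :
    EN.le (BiMon.pr a c) (BiMon.pr b d) := by
  by_cases hb : b = none
  · have ha := h.1.2 hb
    subst ha; subst hb; rw [EN.none_pr, EN.none_pr]; exact h'
  · by_cases hd : d = none
    · have hc := h'.1.2 hd
      subst hc; subst hd; rw [EN.pr_none', EN.pr_none']; exact h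
    · refine EN.le_pr ?_ hb hd ?_
      · intro h2; exact hb (h.1.1 ((EN.pr_none _ _).1 h2).1)
      · rw [EN.pi_pr, EN.pi_pr]; exact S.pr_mono _ _ _ _ h.2.1 h'.2.1

theorem EN.sq_mono (a b c d : Option (EN S O I)) (h : EN.le a b) (h' : EN.le c d) :
    EN.le (BiMon.sq a c) (BiMon.sq b d) := by
  refine ⟨?_, ?_, ?_⟩
  · rw [EN.sq_none, EN.sq_none, h.1, h'.1]
  · rw [EN.pi_sq, EN.pi_sq]; exact S.sq_mono _ _ _ _ h.2.1 h'.2.1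
  · intro x y
    rw [EN.rel_sq, EN.rel_sq]
    rintro ⟨r, h1, h2⟩
    exact ⟨r, h.2.2 _ _ h1, h'.2.2 _ _ h2⟩

theorem EN.exch (a b c d : Option (EN S O I)) :
    EN.le (BiMon.sq (BiMon.pr a b) (BiMon.pr c d)) (BiMon.pr (BiMon.sq a c) (BiMon.sq b d)) := by
  by_cases h1 : BiMon.sq a c = none
  · obtain ⟨rfl, rfl⟩ := (EN.sq_none _ _).1 h1
    simp only [EN.none_pr, EN.none_sq]; exact EN.le_refl _
  · by_cases h2 : BiMon.sq b d = none
    · obtain ⟨rfl, rfl⟩ := (EN.sq_none _ _).1 h2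
      simp only [EN.pr_none', EN.none_sq]; exact EN.le_refl _
    · refine EN.le_pr ?_ h1 h2 ?_
      · rw [Ne, EN.sq_none, EN.pr_none, EN.pr_none]
        rintro ⟨⟨rfl, rfl⟩, rfl, rfl⟩
        exact h1 rfl
      · simp only [EN.pi_pr, EN.pi_sq]; exact S.exch _ _ _ _

variable (S O I)

theorem clo_trans (a : G) : Clo S O I (Relation.TransGen (sw S O I (S.rho (S.h a)))) := by
  intro p q r s h1 h2 h3
  have key : ∀ {q r}, Relation.TransGen (sw S O I (S.rho (S.h a))) q r →
      ∀ s, Eh S O I r s → Relation.TransGen (sw S O I (S.rho (S.h a))) q s := by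
    intro q r h s h3
    cases h with
    | single h => exact Relation.TransGen.single (clo_sw _ _ _ _ _ (Eh.rfl' _) h h3)
    | tail h h' => exact Relation.TransGen.tail h (clo_sw _ _ _ _ _ (Eh.rfl' _) h' h3)
  have h4 := key h2 s h3
  clear h2 h3
  rcases Relation.TransGen.head'_iff.1 h4 with ⟨x, hx, hx'⟩
  exact Relation.TransGen.head' (clo_sw _ _ _ _ _ h1 hx (Eh.rfl' _)) hx'

def hrel (a : G) (q r : S.Q) : Prop :=
  (¬ isAt a ∧ sw S O I (S.rho (S.h a)) q r) ∨
    (isAt a ∧ Relation.TransGen (sw S O I (S.rho (S.h a))) q r)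

theorem hrel_pos {a : G} (ha : isAt a) :
    hrel S O I a = Relation.TransGen (sw S O I (S.rho (S.h a))) := by
  funext q r; simp [hrel, ha]

theorem hrel_neg {a : G} (ha : ¬ isAt a) : hrel S O I a = sw S O I (S.rho (S.h a)) := by
  funext q r; simp [hrel, ha]

def EN.h (a : G) : EN S O I :=
  ⟨(S.h a, hrel S O I a), by
    by_cases ha : isAt a
    · simp only [hrel_pos S O I ha]
      exact ⟨fun _ _ h => Relation.TransGen.single (le_sw h), clo_trans S O I a⟩
    · simp only [hrel_neg S O I ha]
      exact ⟨fun _ _ h => le_sw h, clo_sw _⟩⟩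

theorem EN.h_fst (a : G) : (EN.h S O I a).1.1 = S.h a := rfl

theorem EN.h_snd (a : G) {q r : S.Q} (h : (EN.h S O I a).1.2 q r) :
    sw S O I (S.rho (S.h a)) q r ∨
      (isAt a ∧ Relation.TransGen (sw S O I (S.rho (S.h a))) q r) :=
  h.imp And.right id

theorem EN.h_at (a : G) (ha : isAt a) :
    EN.le (some (EN.h S O I a)) (BiMon.sq (some (EN.h S O I a)) (some (EN.h S O I a))) := by
  refine ⟨?_, ?_, ?_⟩
  · rw [EN.sq_none]; simp
  · rw [EN.pi_sq]; simp only [EN.pi, EN.h_fst]; exact S.h_at a ha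
  · intro x y
    rw [EN.rel_sq]
    rintro ⟨r, h1, h2⟩
    change hrel S O I a _ _ at h1
    change hrel S O I a _ _ at h2
    change hrel S O I a _ _
    rw [hrel_pos S O I ha] at h1 h2 ⊢
    exact h1.trans h2

noncomputable def extX (c : K) (q r : S.Q) : K :=
  S.X q r + ssum (fun o => o ∈ O) (fun o => S.X q o) * (c * ssum (fun i => i ∈ I) (fun i => S.X i r))

variable {S O I} {c : K}

theorem extX_le {q r : S.Q} {z : K} (h1 : S.X q r ≤ z)
    (h2 : ∀ o ∈ O, ∀ i ∈ I, S.X q o * (c * S.X i r) ≤ z) : extX S O I c q r ≤ z := by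
  refine add_le h1 (ssum_mul_le fun o ho => ?_)
  rw [← mul_assoc]
  refine mul_ssum_le fun i hi => ?_
  rw [mul_assoc]; exact h2 o ho i hi

theorem le_extX (q r : S.Q) : S.X q r ≤ extX S O I c q r := le_self_add

theorem le_extX' (q r : S.Q) {o i : S.Q} (ho : o ∈ O) (hi : i ∈ I) :
    S.X q o * (c * S.X i r) ≤ extX S O I c q r := by
  refine le_trans ?_ le_add_self
  exact mul_le_mul' (le_ssum (p := fun o => o ∈ O) (fun o => S.X q o) ho)
    (mul_le_mul' le_rfl (le_ssum (p := fun i => i ∈ I) (fun i => S.X i r) hi))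

theorem extX_mul (hc : ∀ i ∈ I, ∀ o ∈ O, c * S.X i o * c ≤ c) (q r s : S.Q) :
    extX S O I c q r * extX S O I c r s ≤ extX S O I c q s := by
  have A : ∀ z, (S.X q r * extX S O I c r s ≤ z) →
      (∀ o ∈ O, ∀ i ∈ I, S.X q o * (c * S.X i r) * extX S O I c r s ≤ z) →
      extX S O I c q r * extX S O I c r s ≤ z := by
    intro z h1 h2
    conv_lhs => rw [extX, add_mul]
    refine add_le h1 ?_
    rw [mul_assoc]
    refine ssum_mul_le fun o ho => ?_
    rw [← mul_assoc, ← mul_assoc, mul_assoc]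
    rw [mul_assoc]
    have : ∀ w, (∀ i ∈ I, S.X q o * (c * S.X i r) * w ≤ z) →
        S.X q o * (c * (ssum (fun i => i ∈ I) (fun i => S.X i r) * w)) ≤ z := by
      intro w hw
      have e1 : S.X q o * (c * (ssum (fun i => i ∈ I) (fun i => S.X i r) * w)) =
        (S.X q o * c) * ssum (fun i => i ∈ I) (fun i => S.X i r) * w := by simp only [mul_assoc]
      rw [e1]
      refine ssum_ind (fun x => S.X q o * c * x * w ≤ z) ?_ ?_ ?_
      · simp only [mul_zero, zero_mul]; exact bot_le' _
      · intro a b ha hb; simp only [mul_add, add_mul]; exact add_le ha hb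
      · intro i hi
        have := hw i hi
        simpa only [mul_assoc] using this
    simpa only [mul_assoc] using this _ (h2 o ho)
  have B : ∀ x z, (x * S.X r s ≤ z) →
      (∀ o ∈ O, ∀ i ∈ I, x * (S.X r o * (c * S.X i s)) ≤ z) → x * extX S O I c r s ≤ z := by
    intro x z h1 h2
    rw [extX, mul_add]
    refine add_le h1 ?_
    refine ssum_ind (fun y => x * (y * (c * ssum (fun i => i ∈ I) (fun i => S.X i s))) ≤ z) ?_ ?_ ?_
    · simp only [mul_zero, zero_mul]; exact bot_le' _
    · intro a b ha hb; simp only [mul_add, add_mul]; exact add_le ha hb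
    · intro o ho
      refine ssum_ind (fun y => x * (S.X r o * (c * y)) ≤ z) ?_ ?_ fun i hi => h2 o ho i hi
      · simp only [mul_zero]; exact bot_le' _
      · intro a b ha hb; simp only [mul_add]; exact add_le ha hb
  refine A _ (B _ _ ?_ ?_) fun o ho i hi => B _ _ ?_ ?_
  · exact (S.X_mul _ _ _).trans (le_extX _ _)
  · intro o ho i hi
    rw [← mul_assoc]
    exact (mul_le_mul' (S.X_mul _ _ _) le_rfl).trans (le_extX' q s ho hi)
  · refine le_trans ?_ (le_extX' q s ho hi)
    rw [mul_assoc, mul_assoc]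
    exact mul_le_mul' le_rfl (mul_le_mul' le_rfl (S.X_mul _ _ _))
  · intro o' ho' i' hi'
    refine le_trans ?_ (le_extX' q s ho hi')
    calc _ = S.X q o * (c * (S.X i r * S.X r o') * c * S.X i' s) := by simp only [mul_assoc]
      _ ≤ S.X q o * (c * S.X i o' * c * S.X i' s) :=
        mul_le_mul' le_rfl (mul_le_mul' (mul_le_mul' (mul_le_mul' le_rfl (S.X_mul _ _ _)) le_rfl) le_rfl)
      _ ≤ _ := mul_le_mul' le_rfl (mul_le_mul' (hc i hi o' ho') le_rfl)

theorem Eh_le (h1 : 1 ≤ c) (hc : ∀ i ∈ I, ∀ o ∈ O, c * S.X i o * c ≤ c) {q r : S.Q}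
    (h : Eh S O I q r) : 1 ≤ extX S O I c q r := by
  induction h with
  | refl => exact (S.X_one _).trans (le_extX _ _)
  | @tail b d _ h ih =>
    have : 1 ≤ extX S O I c b d := by
      rcases h with ⟨ho, hi⟩ | h
      · refine le_trans ?_ (le_extX' b d ho hi)
        calc (1 : K) = 1 * (1 * 1) := by simp
          _ ≤ _ := mul_le_mul' (S.X_one _) (mul_le_mul' h1 (S.X_one _))
      · exact (S.rho_e _ _ h).trans (le_extX _ _)
    calc (1 : K) = 1 * 1 := by simp
      _ ≤ _ := mul_le_mul' ih this
      _ ≤ _ := extX_mul hc _ _ _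

theorem sw_bound (h1 : 1 ≤ c) (hc : ∀ i ∈ I, ∀ o ∈ O, c * S.X i o * c ≤ c)
    {R : S.Q → S.Q → Prop} {z : K} {q r : S.Q} (h : sw S O I R q r)
    (hR : ∀ a b, R a b → z ≤ S.X a b ∨ z ≤ extX S O I c a b) : z ≤ extX S O I c q r := by
  obtain ⟨a, b, ha, hab, hb⟩ := h
  have h' : z ≤ extX S O I c a b := by
    rcases hR a b hab with h | h
    · exact h.trans (le_extX _ _)
    · exact h
  calc z = 1 * z * 1 := by simp
    _ ≤ extX S O I c q a * extX S O I c a b * extX S O I c b r :=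
      mul_le_mul' (mul_le_mul' (Eh_le h1 hc ha) h') (Eh_le h1 hc hb)
    _ ≤ extX S O I c q b * extX S O I c b r := mul_le_mul' (extX_mul hc _ _ _) le_rfl
    _ ≤ _ := extX_mul hc _ _ _

variable (S O I c)

noncomputable def extSys (hk : ∀ a, isAt a → k a ≤ k a * k a) (h1 : 1 ≤ c)
    (hc : ∀ i ∈ I, ∀ o ∈ O, c * S.X i o * c ≤ c) : Sys k isAt where
  M := Option (EN S O I)
  le := EN.le
  le_refl := EN.le_refl
  le_trans x y z h h' := ⟨h.1.trans h'.1, S.le_trans _ _ _ h.2.1 h'.2.1,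
    fun a b hab => h.2.2 _ _ (h'.2.2 _ _ hab)⟩
  sq_mono := EN.sq_mono
  pr_mono := EN.pr_mono
  exch := EN.exch
  h a := some (EN.h S O I a)
  h_at := EN.h_at S O I
  Q := S.Q ⊕ S.Q
  X := sumRel 0 S.X (extX S O I c)
  rho x := sumRel False (S.rho (EN.pi x)) (EN.rel x)
  X_one := by rintro (q | q); exacts [S.X_one q, (S.X_one q).trans (le_extX _ _)]
  X_mul := by
    rintro (q | q) (r | r) (s | s) <;> simp [sumRel, S.X_mul, extX_mul hc]
  rho_anti := by
    rintro m n (q | q) (r | r) h hr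
    · exact S.rho_anti _ _ _ _ h.2.1 hr
    · exact hr
    · exact hr
    · exact h.2.2 _ _ hr
  rho_sq := by
    rintro m n (q | q) (r | r) hr
    · change S.rho (EN.pi (BiMon.sq m n)) q r at hr
      rw [EN.pi_sq] at hr
      obtain ⟨s, h⟩ := S.rho_sq _ _ _ _ hr; exact ⟨.inl s, h⟩
    · exact hr.elim
    · exact hr.elim
    · change EN.rel (BiMon.sq m n) q r at hr
      rw [EN.rel_sq] at hr
      obtain ⟨s, h⟩ := hr; exact ⟨.inr s, h⟩
  rho_pr := by
    rintro m n (q | q) (r | r) hr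
    · change S.rho (EN.pi (BiMon.pr m n)) q r at hr
      rw [EN.pi_pr] at hr
      obtain ⟨a, b, c, d, h⟩ := S.rho_pr _ _ _ _ hr; exact ⟨.inl a, .inl b, .inl c, .inl d, h⟩
    · exact hr.elim
    · exact hr.elim
    · rcases m with _ | m
      · refine ⟨.inl S.pt, .inl S.pt, .inr q, .inr r, S.rho_pt, hr, ?_⟩
        refine (pp_mono S.X_pt le_rfl).trans ?_
        rw [one_pp]
      · rcases n with _ | n
        · refine ⟨.inr q, .inr r, .inl S.pt, .inl S.pt, hr, S.rho_pt, ?_⟩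
          refine (pp_mono le_rfl S.X_pt).trans ?_
          rw [pp_one]
        · change EN.rel (BiMon.pr (some m) (some n)) q r at hr
          rw [EN.rel_pr] at hr
          obtain ⟨x, y, hx, hxy, hy⟩ := hr
          have hxy' := hxy
          rw [EN.pi_pr] at hxy'
          obtain ⟨a, b, d, f, g1, g2, g3⟩ := S.rho_pr _ _ _ _ hxy'
          refine ⟨.inl a, .inl b, .inl d, .inl f, g1, g2, ?_⟩
          refine sw_bound (R := fun p q => p = x ∧ q = y) h1 hc ⟨x, y, hx, ⟨rfl, rfl⟩, hy⟩ ?_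
          rintro _ _ ⟨rfl, rfl⟩
          exact Or.inl g3
  rho_e := by
    rintro (q | q) (r | r) hr
    · exact S.rho_e _ _ hr
    · exact hr.elim
    · exact hr.elim
    · exact Eh_le h1 hc hr
  rho_h := by
    rintro a (q | q) (r | r) hr
    · refine S.rho_h a _ _ ?_
      rw [← EN.h_fst S O I a]; exact hr
    · exact hr.elim
    · exact hr.elim
    · have st : ∀ q r, sw S O I (S.rho (S.h a)) q r → k a ≤ extX S O I c q r := fun q r h =>
        sw_bound h1 hc h fun x y h => Or.inl (S.rho_h _ _ _ h)
      rcases EN.h_snd S O I a hr with h | ⟨ha, h⟩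
      · exact st _ _ h
      · change k a ≤ extX S O I c q r
        clear hr
        induction h with
        | single h => exact st _ _ h
        | tail _ h ih =>
          refine (hk a ha).trans ((mul_le_mul' ih (st _ _ h)).trans (extX_mul hc _ _ _))
  pt := .inl S.pt
  rho_pt := S.rho_pt
  X_pt := S.X_pt

end ext

end CKAH

namespace CKAH

open Classical
open Computability
open PKA BiMon

section recog2

variable {K G : Type} [PKA K] {k : G → K} {isAt : G → Prop}

theorem ext_pi (S : Sys k isAt) (O I : Set S.Q) (c : K) (hk h1 hc) (u : SPT G) :
    EN.pi (u.ev (extSys S O I c hk h1 hc).h : Option (EN S O I)) = u.ev S.h := by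
  induction u with
  | one => rfl
  | var a => rfl
  | seq u v hu hv => 
    simp only [SPT.ev]
    rw [← hu, ← hv]
    exact EN.pi_sq _ _
  | par u v hu hv => 
    simp only [SPT.ev]
    rw [← hu, ← hv]
    exact EN.pi_pr _ _

theorem ext_lift (S : Sys k isAt) (O I : Set S.Q) (c : K) (hk h1 hc) (u : SPT G) {q r : S.Q}
    (h : S.rho (u.ev S.h) q r) :
    (extSys S O I c hk h1 hc).rho (u.ev (extSys S O I c hk h1 hc).h) (.inr q) (.inr r) := by
  refine EN.rho_rel (u.ev (extSys S O I c hk h1 hc).h : Option (EN S O I)) ?_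
  have h2 := ext_pi S O I c hk h1 hc u
  rw [← h2] at h
  exact h

theorem ext_seq (S : Sys k isAt) (O I : Set S.Q) (c : K) (hk h1 hc) (u v : SPT G) {q o i r : S.Q}
    (h : (extSys S O I c hk h1 hc).rho (u.ev (extSys S O I c hk h1 hc).h) (.inr q) (.inr o))
    (ho : o ∈ O) (hi : i ∈ I)
    (h' : (extSys S O I c hk h1 hc).rho (v.ev (extSys S O I c hk h1 hc).h) (.inr i) (.inr r)) :
    (extSys S O I c hk h1 hc).rho ((SPT.seq u v).ev (extSys S O I c hk h1 hc).h) (.inr q) (.inr r) := by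
  change EN.rel (BiMon.sq (u.ev (extSys S O I c hk h1 hc).h : Option (EN S O I))
    (v.ev (extSys S O I c hk h1 hc).h : Option (EN S O I))) q r
  rw [EN.rel_sq]
  exact ⟨i, EN.clo_rel _ _ _ _ _ (Eh.rfl' _) h (Eh.edge ho hi), h'⟩

theorem hasRecog_seq (hk : ∀ a, isAt a → k a ≤ k a * k a) {f g : Term G}
    (hf : HasRecog k isAt f) (hg : HasRecog k isAt g) :
    HasRecog k isAt (.seq f g) := by
  obtain ⟨S, I, O, hS⟩ := hf
  obtain ⟨T, I', O', hT⟩ := hg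
  have hc : ∀ i ∈ (Sum.inr '' I' : Set (sumSys S T).Q), ∀ o ∈ (Sum.inl '' O : Set (sumSys S T).Q),
      (1 : K) * (sumSys S T).X i o * 1 ≤ 1 := by
    rintro _ ⟨i, hi, rfl⟩ _ ⟨o, ho, rfl⟩
    rw [one_mul, mul_one]
    exact bot_le' _
  refine ⟨extSys (sumSys S T) (Sum.inl '' O) (Sum.inr '' I') 1 hk le_rfl hc,
    (fun i => Sum.inr (Sum.inl i)) '' I, (fun i => Sum.inr (Sum.inr i)) '' O', ?_, ?_⟩
  · rintro _ ⟨i, hi, rfl⟩ _ ⟨o, ho, rfl⟩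
    refine extX_le (bot_le' _) ?_
    rintro _ ⟨o', ho', rfl⟩ _ ⟨i', hi', rfl⟩
    rw [one_mul]
    exact mul_le_mul' (hS.bound i hi o' ho') (hT.bound i' hi' o ho)
  · rintro _ ⟨u, hu, v, hv, rfl⟩
    obtain ⟨i, hi, o, ho, h⟩ := hS.acc u hu
    obtain ⟨i', hi', o', ho', h'⟩ := hT.acc v hv
    refine ⟨_, ⟨i, hi, rfl⟩, _, ⟨o', ho', rfl⟩, ?_⟩
    refine ext_seq (sumSys S T) _ _ _ _ _ _ u v (o := .inl o) (i := .inr i') ?_ ⟨o, ho, rfl⟩ ⟨i', hi', rfl⟩ ?_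
    · refine ext_lift _ _ _ _ _ _ _ u ?_
      rw [sumSys_ev]; exact h
    · refine ext_lift _ _ _ _ _ _ _ v ?_
      rw [sumSys_ev]; exact h'

theorem hasRecog_star (hk : ∀ a, isAt a → k a ≤ k a * k a) {f : Term G}
    (hf : HasRecog k isAt f) : HasRecog k isAt (.star f) := by
  obtain ⟨S, I, O, hS⟩ := hf
  have hc : ∀ i ∈ I, ∀ o ∈ O, (f.eval k)∗ * S.X i o * (f.eval k)∗ ≤ (f.eval k)∗ := by
    intro i hi o ho
    calc _ ≤ (f.eval k)∗ * f.eval k * (f.eval k)∗ :=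
          mul_le_mul' (mul_le_mul' le_rfl (hS.bound i hi o ho)) le_rfl
      _ ≤ (f.eval k)∗ * (f.eval k)∗ := mul_le_mul' kstar_mul_le_kstar le_rfl
      _ = _ := kstar_mul_kstar _
  refine ⟨extSys S O I (f.eval k)∗ hk one_le_kstar hc,
    {Sum.inl S.pt} ∪ Sum.inr '' I, {Sum.inl S.pt} ∪ Sum.inr '' O, ?_, ?_⟩
  · rintro _ (rfl | ⟨i, hi, rfl⟩) _ (rfl | ⟨o, ho, rfl⟩)
    · exact S.X_pt.trans one_le_kstar
    · exact bot_le' _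
    · exact bot_le' _
    · change extX S O I (f.eval k)∗ i o ≤ (f.eval k)∗
      refine extX_le ((hS.bound i hi o ho).trans le_kstar) ?_
      intro o' ho' i' hi'
      calc _ ≤ f.eval k * ((f.eval k)∗ * f.eval k) :=
            mul_le_mul' (hS.bound i hi o' ho') (mul_le_mul' le_rfl (hS.bound i' hi' o ho))
        _ ≤ f.eval k * (f.eval k)∗ := mul_le_mul' le_rfl kstar_mul_le_kstar
        _ ≤ _ := mul_kstar_le_kstar
  · intro u hu
    simp only [Term.sl] at hu
    obtain ⟨n, hn⟩ := hu
    have pos : ∀ n, ∀ u ∈ slpow f.sl (n + 1), ∃ i ∈ I, ∃ o ∈ O,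
        (extSys S O I (f.eval k)∗ hk one_le_kstar hc).rho
          (u.ev (extSys S O I (f.eval k)∗ hk one_le_kstar hc).h) (.inr i) (.inr o) := by
      intro n
      induction n with
      | zero =>
        rintro _ ⟨u, rfl, v, hv, rfl⟩
        obtain ⟨i, hi, o, ho, h⟩ := hS.acc v hv
        refine ⟨i, hi, o, ho, ?_⟩
        simp only [SPT.ev, BiMon.e_sq]
        exact ext_lift _ _ _ _ _ _ _ v h
      | succ n ih =>
        rintro _ ⟨u, hu, v, hv, rfl⟩
        obtain ⟨i, hi, o, ho, h⟩ := hS.acc v hv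
        obtain ⟨i', hi', o', ho', h'⟩ := ih u hu
        refine ⟨i', hi', o, ho, ?_⟩
        exact ext_seq _ _ _ _ _ _ _ u v h' ho' hi (ext_lift _ _ _ _ _ _ _ v h)
    cases n with
    | zero =>
      obtain rfl := hn
      exact ⟨_, Or.inl rfl, _, Or.inl rfl, S.rho_pt⟩
    | succ n =>
      obtain ⟨i, hi, o, ho, h⟩ := pos n u hn
      exact ⟨_, Or.inr ⟨i, hi, rfl⟩, _, Or.inr ⟨o, ho, rfl⟩, h⟩

theorem hasRecog (hk : ∀ a, isAt a → k a ≤ k a * k a) (f : Term G) : HasRecog k isAt f := by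
  induction f with
  | zero => exact hasRecog_zero
  | one => exact hasRecog_one
  | var a => exact hasRecog_var a
  | add f g hf hg => exact hasRecog_add hf hg
  | seq f g hf hg => exact hasRecog_seq hk hf hg
  | par f g hf hg => exact hasRecog_par hk hf hg
  | star f hf => exact hasRecog_star hk hf

end recog2

end CKAH

namespace CKAH

open Classical
open Computability
open PKA

/-! ### Boolean part -/

section ba

variable {Ω : Type}

def BATerm.evalB (α : Ω → Bool) : BATerm Ω → Bool
  | .bot => false
  | .top => true
  | .var o => α o
  | .or p q => p.evalB α || q.evalB α
  | .and p q => p.evalB α && q.evalB α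
  | .not p => !(p.evalB α)

theorem BACong.evalB_eq {p q : BATerm Ω} (h : BACong p q) (α : Ω → Bool) :
    p.evalB α = q.evalB α := by
  induction h with
  | refl p => rfl
  | symm _ ih => exact ih.symm
  | trans _ _ ih1 ih2 => exact ih1.trans ih2
  | orCong _ _ ih1 ih2 => simp only [BATerm.evalB, ih1, ih2]
  | andCong _ _ ih1 ih2 => simp only [BATerm.evalB, ih1, ih2]
  | notCong _ ih => simp only [BATerm.evalB, ih]
  | orBot p => simp [BATerm.evalB]
  | orComm p q => simp [BATerm.evalB, Bool.or_comm]
  | orNot p => simp [BATerm.evalB]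
  | orAssoc p q r => simp [BATerm.evalB, Bool.or_assoc]
  | andTop p => simp [BATerm.evalB]
  | andComm p q => simp [BATerm.evalB, Bool.and_comm]
  | andNot p => simp [BATerm.evalB]
  | andAssoc p q r => simp [BATerm.evalB, Bool.and_assoc]
  | orAndDist p q r => simp [BATerm.evalB, Bool.or_and_distrib_left]
  | andOrDist p q r => simp [BATerm.evalB, Bool.and_or_distrib_left]

theorem BACong.of_eq {p q : BATerm Ω} (h : p = q) : BACong p q := h ▸ .refl _

theorem BACong.and_idem (a : BATerm Ω) : BACong (.and a a) a :=
  ((BACong.orBot _).symm.trans ((BACong.orCong (.refl _) (BACong.andNot a).symm))).trans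
    ((BACong.andOrDist a a (.not a)).symm.trans
      ((BACong.andCong (.refl _) (.orNot a)).trans (.andTop a)))

theorem BACong.or_idem (a : BATerm Ω) : BACong (.or a a) a :=
  ((BACong.andTop _).symm.trans ((BACong.andCong (.refl _) (BACong.orNot a).symm))).trans
    ((BACong.orAndDist a a (.not a)).symm.trans
      ((BACong.orCong (.refl _) (.andNot a)).trans (.orBot a)))

theorem BACong.and_bot (a : BATerm Ω) : BACong (.and a .bot) .bot :=
  (BACong.andCong (.refl _) (BACong.andNot a).symm).trans
    ((BACong.andAssoc _ _ _).trans ((BACong.andCong (.and_idem a) (.refl _)).trans (.andNot a)))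

theorem BACong.bot_and (a : BATerm Ω) : BACong (.and .bot a) .bot :=
  (BACong.andComm _ _).trans (.and_bot a)

theorem BACong.bot_or (a : BATerm Ω) : BACong (.or .bot a) a :=
  (BACong.orComm _ _).trans (.orBot a)

/-- The term `a` decides `p` with value `b`. -/
def Dec (a p : BATerm Ω) (b : Bool) : Prop := BACong (.and a p) (if b then a else .bot)

theorem Dec.not {a p : BATerm Ω} {b : Bool} (h : Dec a p b) : Dec a (.not p) (!b) := by
  cases b with
  | false =>
    have h : BACong (.and a p) .bot := h
    change BACong (.and a (.not p)) a
    refine .symm ((BACong.andTop a).symm.trans ?_)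
    refine (BACong.andCong (.refl _) (BACong.orNot p).symm).trans ?_
    refine (BACong.andOrDist _ _ _).trans ?_
    exact (BACong.orCong h (.refl _)).trans (.bot_or _)
  | true =>
    have h : BACong (.and a p) a := h
    change BACong (.and a (.not p)) .bot
    refine (BACong.andCong h.symm (.refl _)).trans ?_
    refine (BACong.andAssoc _ _ _).symm.trans ?_
    exact (BACong.andCong (.refl _) (.andNot p)).trans (.and_bot _)

theorem Dec.and {a p q : BATerm Ω} {b c : Bool} (h : Dec a p b) (h' : Dec a q c) :
    Dec a (.and p q) (b && c) := by
  refine (BACong.andAssoc _ _ _).trans ?_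
  cases b with
  | false =>
    have h : BACong (.and a p) .bot := h
    exact (BACong.andCong h (.refl _)).trans (.bot_and _)
  | true =>
    have h : BACong (.and a p) a := h
    exact (BACong.andCong h (.refl _)).trans h'

theorem Dec.or {a p q : BATerm Ω} {b c : Bool} (h : Dec a p b) (h' : Dec a q c) :
    Dec a (.or p q) (b || c) := by
  refine (BACong.andOrDist _ _ _).trans ?_
  refine (BACong.orCong h h').trans ?_
  cases b <;> cases c
  · exact .or_idem _
  · exact .bot_or _
  · exact .orBot _
  · exact .or_idem _

theorem Dec.evalB {a : BATerm Ω} {α : Ω → Bool} (h : ∀ o, Dec a (.var o) (α o)) (p : BATerm Ω) :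
    Dec a p (p.evalB α) := by
  induction p with
  | bot => exact BACong.and_bot a
  | top => exact BACong.andTop a
  | var o => exact h o
  | or p q hp hq => exact hp.or hq
  | and p q hp hq => exact hp.and hq
  | not p hp => exact hp.not

noncomputable def conj (l : List Ω) (α : Ω → Bool) : BATerm Ω :=
  l.foldr (fun o t => BATerm.and (if α o then BATerm.var o else BATerm.not (BATerm.var o)) t)
    BATerm.top

theorem Dec.mono {a b p : BATerm Ω} {c : Bool} (h : Dec a p c) : Dec (.and b a) p c := by
  refine (BACong.andAssoc _ _ _).symm.trans ?_
  refine (BACong.andCong (.refl _) h).trans ?_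
  cases c
  · exact .and_bot _
  · exact .refl _

theorem Dec.congr {a b p : BATerm Ω} {c : Bool} (h : Dec a p c) (hab : BACong a b) :
    Dec b p c := by
  refine (BACong.andCong hab.symm (.refl _)).trans (BACong.trans h ?_)
  cases c
  · exact .refl _
  · exact hab

theorem dec_conj (l : List Ω) (α : Ω → Bool) (o : Ω) (ho : o ∈ l) :
    Dec (conj l α) (.var o) (α o) := by
  induction l with
  | nil => simp at ho
  | cons o' l ih =>
    by_cases h : o = o'
    · subst h
      have key : Dec (if α o then BATerm.var o else BATerm.not (BATerm.var o)) (.var o) (α o) := by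
        cases α o
        · exact (BACong.andComm _ _).trans (.andNot _)
        · exact .and_idem _
      exact (Dec.mono (b := conj l α) key).congr (.andComm _ _)
    · have : o ∈ l := by simpa [h] using ho
      exact (ih this).mono

theorem dec_atom [Fintype Ω] (α : Ω → Bool) (p : BATerm Ω) :
    Dec (atomTerm α) p (p.evalB α) :=
  Dec.evalB (fun o => dec_conj _ α o (by simp)) p

theorem conj_update (l : List Ω) (α : Ω → Bool) (o : Ω) (b : Bool) (ho : o ∉ l) :
    conj l (Function.update α o b) = conj l α := by
  induction l with
  | nil => rfl
  | cons o' l ih =>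
    simp only [List.mem_cons, not_or] at ho
    have := ih ho.2
    unfold conj at this ⊢
    simp only [List.foldr_cons, this, Function.update_of_ne (Ne.symm ho.1)]

end ba

/-! ### The quotient algebra -/

section quot

variable (S Ω : Type)

instance obsSetoid : Setoid (Term (OLet S Ω)) :=
  ⟨CongH (obsHyp S Ω), ⟨CongH.refl, CongH.symm, CongH.trans⟩⟩

def KQ : Type := Quotient (obsSetoid S Ω)

variable {S Ω}

def kq (t : Term (OLet S Ω)) : KQ S Ω := Quotient.mk _ t

theorem kq_eq {s t : Term (OLet S Ω)} (h : CongH (obsHyp S Ω) s t) : kq s = kq t :=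
  Quotient.sound h

def KQ.add : KQ S Ω → KQ S Ω → KQ S Ω :=
  Quotient.map₂ Term.add (fun _ _ h _ _ h' => CongH.addCong h h')

def KQ.mul : KQ S Ω → KQ S Ω → KQ S Ω :=
  Quotient.map₂ Term.seq (fun _ _ h _ _ h' => CongH.seqCong h h')

def KQ.par : KQ S Ω → KQ S Ω → KQ S Ω :=
  Quotient.map₂ Term.par (fun _ _ h _ _ h' => CongH.parCong h h')

def KQ.star : KQ S Ω → KQ S Ω :=
  Quotient.map Term.star (fun _ _ h => CongH.starCong h)

instance KQ.semiring : Semiring (KQ S Ω) where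
  add := KQ.add
  mul := KQ.mul
  zero := kq .zero
  one := kq .one
  nsmul := @nsmulRec _ ⟨kq .zero⟩ ⟨KQ.add⟩
  add_assoc := by
    rintro ⟨a⟩ ⟨b⟩ ⟨c⟩; exact kq_eq (CongH.addAssoc a b c).symm
  add_comm := by rintro ⟨a⟩ ⟨b⟩; exact kq_eq (.addComm a b)
  add_zero := by rintro ⟨a⟩; exact kq_eq (.addZero a)
  zero_add := by rintro ⟨a⟩; exact kq_eq ((CongH.addComm _ _).trans (.addZero a))
  mul_assoc := by rintro ⟨a⟩ ⟨b⟩ ⟨c⟩; exact kq_eq (CongH.seqAssoc a b c).symm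
  mul_one := by rintro ⟨a⟩; exact kq_eq (.seqOneR a)
  one_mul := by rintro ⟨a⟩; exact kq_eq (.seqOneL a)
  mul_zero := by rintro ⟨a⟩; exact kq_eq (.seqZeroR a)
  zero_mul := by rintro ⟨a⟩; exact kq_eq (.seqZeroL a)
  left_distrib := by rintro ⟨a⟩ ⟨b⟩ ⟨c⟩; exact kq_eq (.seqDistL a b c)
  right_distrib := by rintro ⟨a⟩ ⟨b⟩ ⟨c⟩; exact kq_eq (.seqDistR a b c)

theorem KQ.add_self (a : KQ S Ω) : a + a = a := by
  rcases a with ⟨a⟩; exact kq_eq (.addIdem a)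

instance KQ.idem : IdemSemiring (KQ S Ω) := IdemSemiring.ofSemiring KQ.add_self

theorem kq_le {s t : Term (OLet S Ω)} : kq s ≤ kq t ↔ CongH (obsHyp S Ω) (.add s t) t :=
  ⟨fun h => Quotient.exact h, fun h => Quotient.sound h⟩

theorem kq_add (s t : Term (OLet S Ω)) : kq (.add s t) = kq s + kq t := rfl
theorem kq_mul (s t : Term (OLet S Ω)) : kq (.seq s t) = kq s * kq t := rfl

theorem kq_one : (kq .one : KQ S Ω) = 1 := rfl
theorem kq_zero : (kq .zero : KQ S Ω) = 0 := rfl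

theorem kq_star_unfL (t : Term (OLet S Ω)) : 1 + kq t * kq (.star t) = kq (.star t) :=
  kq_eq (.starUnfoldL t)

theorem kq_star_unfR (t : Term (OLet S Ω)) : 1 + kq (.star t) * kq t = kq (.star t) :=
  kq_eq (.starUnfoldR t)

theorem kq_hyp {s t : Term (OLet S Ω)} (h : (s, t) ∈ obsHyp S Ω) : kq s ≤ kq t :=
  kq_le.2 (.hyp h)

instance KQ.kleene : KleeneAlgebra (KQ S Ω) where
  toIdemSemiring := KQ.idem
  kstar := KQ.star
  one_le_kstar := by
    rintro ⟨a⟩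
    change (1 : KQ S Ω) ≤ kq (.star a)
    rw [← kq_star_unfL]; exact le_self_add
  mul_kstar_le_kstar := by
    rintro ⟨a⟩
    change kq a * kq (.star a) ≤ kq (.star a)
    nth_rewrite 2 [← kq_star_unfL]; exact le_add_self
  kstar_mul_le_kstar := by
    rintro ⟨a⟩
    change kq (.star a) * kq a ≤ kq (.star a)
    nth_rewrite 2 [← kq_star_unfR]; exact le_add_self
  mul_kstar_le_self := by
    rintro ⟨a⟩ ⟨b⟩ h
    change kq (.seq b (.star a)) ≤ kq b
    change kq (.seq b a) ≤ kq b at h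
    refine kq_le.2 (.lfpR (kq_le.1 ?_))
    rw [kq_add]; exact add_le le_rfl h
  kstar_mul_le_self := by
    rintro ⟨a⟩ ⟨b⟩ h
    change kq (.seq (.star a) b) ≤ kq b
    change kq (.seq a b) ≤ kq b at h
    refine kq_le.2 (.lfpL (kq_le.1 ?_))
    rw [kq_add]; exact add_le le_rfl h

instance KQ.pka : PKA (KQ S Ω) where
  pp := KQ.par
  pp_assoc := by rintro ⟨a⟩ ⟨b⟩ ⟨c⟩; exact kq_eq (CongH.parAssoc a b c).symm
  pp_comm := by rintro ⟨a⟩ ⟨b⟩; exact kq_eq (.parComm a b)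
  pp_one := by rintro ⟨a⟩; exact kq_eq (.parOne a)
  pp_zero := by rintro ⟨a⟩; exact kq_eq (.parZero a)
  pp_add := by rintro ⟨a⟩ ⟨b⟩ ⟨c⟩; exact kq_eq (.parDist a b c)
  pp_exch := by
    rintro ⟨a⟩ ⟨b⟩ ⟨c⟩ ⟨d⟩
    exact kq_hyp (s := .seq (.par a b) (.par c d)) (t := .par (.seq a c) (.seq b d))
      (Or.inl (Or.inr ⟨a, b, c, d, rfl⟩))

/-! ### observations in the quotient -/

def kap (p : BATerm Ω) : KQ S Ω := kq (.var (Sum.inr p))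

theorem kap_le {p q : BATerm Ω} (h : BACong p q) : (kap p : KQ S Ω) ≤ kap q :=
  kq_hyp (Or.inl (Or.inl (Or.inl ⟨p, q, h, rfl⟩)))

theorem kap_congr {p q : BATerm Ω} (h : BACong p q) : (kap p : KQ S Ω) = kap q :=
  le_antisymm (kap_le h) (kap_le h.symm)

theorem kap_bot_le (z : KQ S Ω) : (kap .bot : KQ S Ω) ≤ z :=
  (kq_hyp (s := .var (Sum.inr .bot)) (t := .zero)
    (Or.inr (Or.inl (Or.inr rfl)))).trans (bot_le' z)

theorem kap_or (p q : BATerm Ω) : (kap (.or p q) : KQ S Ω) = kap p + kap q :=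
  le_antisymm (kq_hyp (Or.inr (Or.inr ⟨p, q, Or.inr rfl⟩)))
    (kq_hyp (s := .add (.var (Sum.inr p)) (.var (Sum.inr q)))
      (Or.inr (Or.inr ⟨p, q, Or.inl rfl⟩)))

theorem kap_contr (p : BATerm Ω) : (kap p : KQ S Ω) ≤ kap p * kap p :=
  (kap_le (BACong.and_idem p).symm).trans
    (kq_hyp (t := .seq (.var (Sum.inr p)) (.var (Sum.inr p)))
      (Or.inl (Or.inl (Or.inr ⟨p, p, rfl⟩))))

theorem kap_split (l : List Ω) (hl : l.Nodup) (z : KQ S Ω) :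
    ∀ p : BATerm Ω, (∀ α, kap (.and p (conj l α)) ≤ z) → kap p ≤ z := by
  induction l with
  | nil =>
    intro p h
    exact (kap_le (BACong.andTop p).symm).trans (h (fun _ => true))
  | cons o l ih =>
    intro p h
    obtain ⟨ho, hl⟩ := List.nodup_cons.1 hl
    have e : BACong p (.or (.and p (.var o)) (.and p (.not (.var o)))) :=
      (BACong.andTop p).symm.trans
        ((BACong.andCong (.refl _) (BACong.orNot _).symm).trans (.andOrDist _ _ _))
    rw [kap_congr e, kap_or]
    refine add_le (ih hl _ fun α => ?_) (ih hl _ fun α => ?_)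
    · have := h (Function.update α o true)
      refine (kap_le (BACong.andAssoc _ _ _).symm).trans (le_trans (le_of_eq ?_) this)
      change _ = kap (BATerm.and p (BATerm.and _ (conj l _)))
      rw [conj_update _ _ _ _ ho, Function.update_self]; rfl
    · have := h (Function.update α o false)
      refine (kap_le (BACong.andAssoc _ _ _).symm).trans (le_trans (le_of_eq ?_) this)
      change _ = kap (BATerm.and p (BATerm.and _ (conj l _)))
      rw [conj_update _ _ _ _ ho, Function.update_self]; rfl

variable [Fintype Ω]

theorem kap_le_of_atoms (p : BATerm Ω) (z : KQ S Ω)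
    (h : ∀ α, p.evalB α = true → kap (atomTerm α) ≤ z) : kap p ≤ z := by
  refine kap_split (Finset.univ : Finset Ω).toList (Finset.nodup_toList _) z p fun α => ?_
  have hd := dec_atom α p
  unfold Dec at hd
  refine (kap_le ((BACong.andComm _ _).trans hd)).trans ?_
  cases hp : p.evalB α
  · exact kap_bot_le z
  · exact h α hp

theorem atom_le_kap {p : BATerm Ω} {α : Ω → Bool} (h : p.evalB α = true) :
    (kap (atomTerm α) : KQ S Ω) ≤ kap p := by
  have hd := dec_atom α p
  rw [h] at hd
  have hd : BACong (.and (atomTerm α) p) (atomTerm α) := hd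
  -- p ≡ (p ∧ a) ∨ (p ∧ ¬ a)
  have e : BACong p (.or (.and p (atomTerm α)) (.and p (.not (atomTerm α)))) :=
    (BACong.andTop p).symm.trans
      ((BACong.andCong (.refl _) (BACong.orNot _).symm).trans (.andOrDist _ _ _))
  rw [kap_congr e, kap_or]
  exact (kap_le (hd.symm.trans (.andComm _ _))).trans le_self_add

/-! ### the translation to atoms -/

noncomputable def kG : S ⊕ (Ω → Bool) → KQ S Ω
  | .inl s => kq (.var (.inl s))
  | .inr α => kap (atomTerm α)

noncomputable def sumAt (l : List (Ω → Bool)) : Term (S ⊕ (Ω → Bool)) :=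
  l.foldr (fun α t => Term.add (.var (.inr α)) t) .zero

noncomputable def atomsOf (p : BATerm Ω) : List (Ω → Bool) :=
  ((Finset.univ : Finset (Ω → Bool)).filter (fun α => p.evalB α = true)).toList

theorem mem_atomsOf {p : BATerm Ω} {α : Ω → Bool} : α ∈ atomsOf p ↔ p.evalB α = true := by
  simp [atomsOf]

noncomputable def rr : Term (OLet S Ω) → Term (S ⊕ (Ω → Bool))
  | .zero => .zero
  | .one => .one
  | .var (.inl s) => .var (.inl s)
  | .var (.inr p) => sumAt (atomsOf p)
  | .add e f => .add (rr e) (rr f)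
  | .seq e f => .seq (rr e) (rr f)
  | .par e f => .par (rr e) (rr f)
  | .star e => .star (rr e)

theorem sumAt_le (l : List (Ω → Bool)) (z : KQ S Ω) (h : ∀ α ∈ l, kap (atomTerm α) ≤ z) :
    (sumAt l).eval kG ≤ z := by
  induction l with
  | nil => exact bot_le' z
  | cons α l ih =>
    exact add_le (h α (by simp)) (ih fun β hβ => h β (by simp [hβ]))

theorem le_sumAt (l : List (Ω → Bool)) (α : Ω → Bool) (h : α ∈ l) :
    (kap (atomTerm α) : KQ S Ω) ≤ (sumAt l).eval kG := by
  induction l with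
  | nil => simp at h
  | cons β l ih =>
    rcases List.mem_cons.1 h with rfl | h
    · exact le_self_add
    · exact (ih h).trans le_add_self

theorem rr_eval (e : Term (OLet S Ω)) : (rr e).eval kG = kq e := by
  induction e with
  | zero => rfl
  | one => rfl
  | var a =>
    rcases a with s | p
    · rfl
    · refine le_antisymm (sumAt_le _ _ fun α hα => atom_le_kap (mem_atomsOf.1 hα)) ?_
      exact kap_le_of_atoms p _ fun α hα => le_sumAt _ α (mem_atomsOf.2 hα)
  | add e f he hf => simp only [rr, Term.eval, he, hf]; rfl
  | seq e f he hf => simp only [rr, Term.eval, he, hf]; rfl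
  | par e f he hf => simp only [rr, Term.eval, he, hf]; rfl
  | star e he => simp only [rr, Term.eval, he]; rfl

end quot

end CKAH

namespace CKAH

open Classical
open Computability
open PKA BiMon

section comp

variable {S Ω : Type} [Fintype Ω]

def isAtom (S Ω : Type) : S ⊕ (Ω → Bool) → Prop
  | .inl _ => False
  | .inr _ => True

variable (Y : Sys (kG (S := S) (Ω := Ω)) (isAtom S Ω))

def hh : OLet S Ω → Set Y.M
  | .inl s => {Y.h (.inl s)}
  | .inr p => {m | ∃ α, p.evalB α = true ∧ Y.h (.inr α) = m}

theorem sl_sumAt (l : List (Ω → Bool)) (u : SPT (S ⊕ (Ω → Bool))) :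
    u ∈ (sumAt (S := S) l).sl ↔ ∃ α ∈ l, u = .var (.inr α) := by
  induction l with
  | nil => simp [sumAt, Term.sl]
  | cons β l ih =>
    have : u ∈ (sumAt (S := S) (β :: l)).sl ↔ u = .var (.inr β) ∨ u ∈ (sumAt (S := S) l).sl :=
      Iff.rfl
    rw [this, ih]; simp

theorem vals_rr (f : Term (OLet S Ω)) : ∀ m, (∃ u ∈ (rr f).sl, u.ev Y.h = m) ↔
    ∃ w ∈ f.sl, m ∈ w.ev (hh Y) := by
  induction f with
  | zero => intro m; simp [rr, Term.sl]
  | one =>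
    intro m
    simp only [rr, Term.sl, Set.mem_singleton_iff, exists_eq_left, SPT.ev]
    exact eq_comm
  | var a =>
    intro m
    rcases a with s | p
    · simp only [rr, Term.sl, Set.mem_singleton_iff, exists_eq_left, SPT.ev]
      exact eq_comm
    · simp only [rr, Term.sl, Set.mem_singleton_iff, exists_eq_left, sl_sumAt, mem_atomsOf]
      constructor
      · rintro ⟨_, ⟨α, hα, rfl⟩, rfl⟩
        exact ⟨α, hα, rfl⟩
      · rintro ⟨α, hα, rfl⟩
        exact ⟨_, ⟨α, hα, rfl⟩, rfl⟩
  | add e f he hf =>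
    intro m
    have he := he m
    have hf := hf m
    simp only [rr, Term.sl, Set.mem_union, or_and_right, exists_or, he, hf]
  | seq e f he hf =>
    intro m
    constructor
    · rintro ⟨_, ⟨u, hu, v, hv, rfl⟩, rfl⟩
      obtain ⟨w, hw, h1⟩ := (he _).1 ⟨u, hu, rfl⟩
      obtain ⟨x, hx, h2⟩ := (hf _).1 ⟨v, hv, rfl⟩
      exact ⟨_, ⟨w, hw, x, hx, rfl⟩, _, h1, _, h2, rfl⟩
    · rintro ⟨_, ⟨w, hw, x, hx, rfl⟩, a, h1, b, h2, rfl⟩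
      obtain ⟨u, hu, rfl⟩ := (he _).2 ⟨w, hw, h1⟩
      obtain ⟨v, hv, rfl⟩ := (hf _).2 ⟨x, hx, h2⟩
      exact ⟨_, ⟨u, hu, v, hv, rfl⟩, rfl⟩
  | par e f he hf =>
    intro m
    constructor
    · rintro ⟨_, ⟨u, hu, v, hv, rfl⟩, rfl⟩
      obtain ⟨w, hw, h1⟩ := (he _).1 ⟨u, hu, rfl⟩
      obtain ⟨x, hx, h2⟩ := (hf _).1 ⟨v, hv, rfl⟩
      exact ⟨_, ⟨w, hw, x, hx, rfl⟩, _, h1, _, h2, rfl⟩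
    · rintro ⟨_, ⟨w, hw, x, hx, rfl⟩, a, h1, b, h2, rfl⟩
      obtain ⟨u, hu, rfl⟩ := (he _).2 ⟨w, hw, h1⟩
      obtain ⟨v, hv, rfl⟩ := (hf _).2 ⟨x, hx, h2⟩
      exact ⟨_, ⟨u, hu, v, hv, rfl⟩, rfl⟩
  | star e he =>
    have key : ∀ n m, (∃ u ∈ slpow (rr e).sl n, u.ev Y.h = m) ↔
        ∃ w ∈ slpow e.sl n, m ∈ w.ev (hh Y) := by
      intro n
      induction n with
      | zero =>
        intro m
        simp only [slpow, Set.mem_singleton_iff, exists_eq_left, SPT.ev]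
        exact eq_comm
      | succ n ih =>
        intro m
        constructor
        · rintro ⟨_, ⟨u, hu, v, hv, rfl⟩, rfl⟩
          obtain ⟨w, hw, h1⟩ := (ih _).1 ⟨u, hu, rfl⟩
          obtain ⟨x, hx, h2⟩ := (he _).1 ⟨v, hv, rfl⟩
          exact ⟨_, ⟨w, hw, x, hx, rfl⟩, _, h1, _, h2, rfl⟩
        · rintro ⟨_, ⟨w, hw, x, hx, rfl⟩, a, h1, b, h2, rfl⟩
          obtain ⟨u, hu, rfl⟩ := (ih _).2 ⟨w, hw, h1⟩
          obtain ⟨v, hv, rfl⟩ := (he _).2 ⟨x, hx, h2⟩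
          exact ⟨_, ⟨u, hu, v, hv, rfl⟩, rfl⟩
    intro m
    constructor
    · rintro ⟨u, ⟨n, hn⟩, rfl⟩
      obtain ⟨w, hw, h⟩ := (key n _).1 ⟨u, hn, rfl⟩
      exact ⟨w, ⟨n, hw⟩, h⟩
    · rintro ⟨w, ⟨n, hn⟩, h⟩
      obtain ⟨u, hu, h⟩ := (key n _).2 ⟨w, hn, h⟩
      exact ⟨u, ⟨n, hu⟩, h⟩

theorem act_le (s : SCtx (OLet S Ω)) (A : Set Y.M) : ∀ m ∈ s.act (hh Y) A,
    ∃ a ∈ A, ∀ B : Set Y.M, ∀ b ∈ B, Y.le a b → ∃ m' ∈ s.act (hh Y) B, Y.le m m' := by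
  induction s with
  | hole => intro m hm; exact ⟨m, hm, fun B b hb h => ⟨b, hb, h⟩⟩
  | seqL u c ih =>
    rintro _ ⟨x, hx, y, hy, rfl⟩
    obtain ⟨a, ha, h⟩ := ih y hy
    refine ⟨a, ha, fun B b hb hab => ?_⟩
    obtain ⟨m', hm', hle⟩ := h B b hb hab
    exact ⟨_, ⟨x, hx, m', hm', rfl⟩, Y.sq_mono _ _ _ _ (Y.le_refl _) hle⟩
  | seqR c u ih =>
    rintro _ ⟨y, hy, x, hx, rfl⟩
    obtain ⟨a, ha, h⟩ := ih y hy
    refine ⟨a, ha, fun B b hb hab => ?_⟩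
    obtain ⟨m', hm', hle⟩ := h B b hb hab
    exact ⟨_, ⟨m', hm', x, hx, rfl⟩, Y.sq_mono _ _ _ _ hle (Y.le_refl _)⟩
  | par u c ih =>
    rintro _ ⟨x, hx, y, hy, rfl⟩
    obtain ⟨a, ha, h⟩ := ih y hy
    refine ⟨a, ha, fun B b hb hab => ?_⟩
    obtain ⟨m', hm', hle⟩ := h B b hb hab
    exact ⟨_, ⟨x, hx, m', hm', rfl⟩, Y.pr_mono _ _ _ _ (Y.le_refl _) hle⟩

theorem hyp_le {e f : Term (OLet S Ω)} (h : (e, f) ∈ obsHyp S Ω) (u : SPT (OLet S Ω))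
    (hu : u ∈ e.sl) (a : Y.M) (ha : a ∈ u.ev (hh Y)) :
    ∃ v ∈ f.sl, ∃ b ∈ v.ev (hh Y), Y.le a b := by
  rcases h with ((⟨p, q, hpq, h⟩ | ⟨p, q, h⟩) | ⟨e1, e2, e3, e4, h⟩) |
    ((h | h) | ⟨p, q, h | h⟩) <;>
    obtain ⟨rfl, rfl⟩ := Prod.mk.inj h
  · obtain rfl := hu
    obtain ⟨α, hα, rfl⟩ := ha
    exact ⟨_, rfl, _, ⟨α, (hpq.evalB_eq α).symm.trans hα, rfl⟩, Y.le_refl _⟩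
  · obtain rfl := hu
    obtain ⟨α, hα, rfl⟩ := ha
    simp only [BATerm.evalB, Bool.and_eq_true] at hα
    exact ⟨_, ⟨_, rfl, _, rfl, rfl⟩, _, ⟨_, ⟨α, hα.1, rfl⟩, _, ⟨α, hα.2, rfl⟩, rfl⟩,
      Y.h_at _ trivial⟩
  · obtain ⟨_, ⟨u1, h1, u2, h2, rfl⟩, _, ⟨u3, h3, u4, h4, rfl⟩, rfl⟩ := hu
    obtain ⟨_, ⟨a1, g1, a2, g2, rfl⟩, _, ⟨a3, g3, a4, g4, rfl⟩, rfl⟩ := ha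
    exact ⟨_, ⟨_, ⟨_, h1, _, h3, rfl⟩, _, ⟨_, h2, _, h4, rfl⟩, rfl⟩, _,
      ⟨_, ⟨_, g1, _, g3, rfl⟩, _, ⟨_, g2, _, g4, rfl⟩, rfl⟩, Y.exch _ _ _ _⟩
  · exact hu.elim
  · obtain rfl := hu
    obtain ⟨α, hα, rfl⟩ := ha
    simp [BATerm.evalB] at hα
  · rcases hu with hu | hu <;> obtain rfl := hu <;> obtain ⟨α, hα, rfl⟩ := ha
    · exact ⟨_, rfl, _, ⟨α, by simp [BATerm.evalB, hα], rfl⟩, Y.le_refl _⟩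
    · exact ⟨_, rfl, _, ⟨α, by simp [BATerm.evalB, hα], rfl⟩, Y.le_refl _⟩
  · obtain rfl := hu
    obtain ⟨α, hα, rfl⟩ := ha
    simp only [BATerm.evalB, Bool.or_eq_true] at hα
    rcases hα with hα | hα
    · exact ⟨_, Or.inl rfl, _, ⟨α, hα, rfl⟩, Y.le_refl _⟩
    · exact ⟨_, Or.inr rfl, _, ⟨α, hα, rfl⟩, Y.le_refl _⟩

variable {Y}

theorem closure_acc {I O : Set Y.Q} {f : Term (OLet S Ω)} (hR : Recog Y I O (rr f))
    {W : Pomset (OLet S Ω)} (hW : closure (obsHyp S Ω) f.lang W) :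
    ∀ w : SPT (OLet S Ω), w.pom = W → ∀ m ∈ w.ev (hh Y), Accepts Y I O m := by
  induction hW with
  | base hU =>
    intro w hw m hm
    obtain ⟨v, hv, hvw⟩ := (mem_lang_iff f _).1 hU
    rw [ev_eq_of_pom_eq (hh Y) (hw.trans hvw.symm)] at hm
    obtain ⟨u, hu, rfl⟩ := (vals_rr Y f m).2 ⟨v, hv, hm⟩
    exact hR.acc u hu
  | step hef hC hf hU ih =>
    intro w hw m hm
    obtain ⟨s, hs⟩ := isSPCtx_decomp hC
    obtain ⟨u, hu, rfl⟩ := (mem_lang_iff _ _).1 hU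
    have e1 : w.pom = (s.appT u).pom := by rw [hw, hs, SCtx.pom_appT]
    rw [ev_eq_of_pom_eq (hh Y) e1, SCtx.ev_appT] at hm
    obtain ⟨a, ha, h⟩ := act_le Y s _ m hm
    obtain ⟨v, hv, b, hb, hab⟩ := hyp_le Y hef u hu a ha
    obtain ⟨m', hm', hle⟩ := h _ b hb hab
    have := ih v.pom ((mem_lang_iff _ _).2 ⟨v, hv, rfl⟩) (s.appT v)
      (by rw [hs, SCtx.pom_appT]) m' (by rw [SCtx.ev_appT]; exact hm')
    obtain ⟨i, hi, o, ho, hr⟩ := this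
    exact ⟨i, hi, o, ho, Y.rho_anti _ _ _ _ hle hr⟩

theorem compl_le {e f : Term (OLet S Ω)} (h : e.lang ⊆ cl (obsHyp S Ω) f.lang) :
    (kq e : KQ S Ω) ≤ kq f := by
  have hk : ∀ a, isAtom S Ω a → kG a ≤ kG a * kG a := by
    rintro (s | α) ha
    · exact ha.elim
    · exact kap_contr _
  obtain ⟨Y, I, O, hR⟩ := hasRecog (k := kG) (isAt := isAtom S Ω) hk (rr f)
  rw [← rr_eval e, ← rr_eval f]
  refine hR.le (rr e) fun u hu => ?_
  obtain ⟨w, hw, hm⟩ := (vals_rr Y e _).1 ⟨u, hu, rfl⟩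
  exact closure_acc hR (h ((mem_lang_iff e _).2 ⟨w, hw, rfl⟩)) w rfl _ hm

theorem completeness {e f : Term (OLet S Ω)}
    (h : cl (obsHyp S Ω) e.lang = cl (obsHyp S Ω) f.lang) : CongH (obsHyp S Ω) e f := by
  obtain ⟨h1, h2⟩ := cl_eq_iff.1 h
  have : (kq e : KQ S Ω) = kq f := le_antisymm (compl_le h1) (compl_le h2)
  exact Quotient.exact this

end comp

end CKAH

namespace CKAH

/-- **Soundness and completeness of CKAO**: `e ≡^obs f` iff `cl_obs(⟦e⟧) = cl_obs(⟦f⟧)`. -/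
theorem ckao_soundness_and_completeness (S Ω : Type) [Fintype Ω]
    (e f : Term (OLet S Ω)) :
    CongH (obsHyp S Ω) e f ↔ cl (obsHyp S Ω) e.lang = cl (obsHyp S Ω) f.lang := by
  exact ⟨soundness, completeness⟩

end CKAH
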